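/- arXiv:0904.0227 — 8 statements merged into one kernel-verified Lean document; each statement's English description precedes it below -/
import Mathlib

section
/- (Chevalley's affineness theorem) Let f : X → Y be a morphism of schemes that is finite and surjective, with Y quasi-separated. If X is an affine scheme, then Y is an affine scheme. -/
open AlgebraicGeometry

section PartA
open AlgebraicGeometry CategoryTheory TopologicalSpace Opposite
universe u
namespace ChevAff

lemma isAffineOpen_of_basicOpen_le {Y : Scheme.{u}} (s : Γ(Y, ⊤)) (U : Y.Opens) (hU : IsAffineOpen U)
    (h : Y.basicOpen s ≤ U) : IsAffineOpen (Y.basicOpen s) := by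
  have := hU.basicOpen (Y.presheaf.map (homOfLE le_top).op s)
  rw [Scheme.basicOpen_res] at this
  rwa [inf_eq_right.mpr h] at this

lemma crit (Y : Scheme.{u}) 
    (h1 : ∀ y : Y, ∃ s : Γ(Y, ⊤), y ∈ Y.basicOpen s ∧ IsAffineOpen (Y.basicOpen s))
    (h2 : ∀ S : Set Γ(Y, ⊤), (∀ y : Y, ∃ s ∈ S, y ∈ Y.basicOpen s) → Ideal.span S = ⊤) :
    IsAffine Y := by
  refine isAffine_of_isAffineOpen_basicOpen {s | IsAffineOpen (Y.basicOpen s)} (h2 _ ?_) (fun i hi => hi)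
  intro y
  obtain ⟨s, hs, hs'⟩ := h1 y
  exact ⟨s, hs', hs⟩

/-- restriction -/
noncomputable abbrev res {Y : Scheme.{u}} {U V : Y.Opens} (h : V ≤ U) : Γ(Y, U) →+* Γ(Y, V) :=
  (Y.presheaf.map (homOfLE h).op).hom

lemma res_res {Y : Scheme.{u}} {U V W : Y.Opens} (h : V ≤ U) (h' : W ≤ V) (x : Γ(Y, U)) :
    res h' (res h x) = res (h'.trans h) x := by
  simp only [res, ← CommRingCat.comp_apply, ← Functor.map_comp]
  rfl

lemma app_res {X Y : Scheme.{u}} (f : X ⟶ Y) {U V : Y.Opens} (h : V ≤ U) (x : Γ(Y, U)) :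
    f.app V (res h x) = res (f.preimage_mono h) (f.app U x) := by
  have := f.naturality (homOfLE h).op
  exact congr($this x)

lemma sec_ext {Y : Scheme.{u}} {W : Y.Opens} (a b : Γ(Y, W))
    (h : ∀ U : Y.Opens, IsAffineOpen U → ∀ hU : U ≤ W, res hU a = res hU b) : a = b := by
  refine Y.sheaf.eq_of_locally_eq' (fun U : {U : Y.Opens // IsAffineOpen U ∧ U ≤ W} => U.1) W
    (fun i => homOfLE i.2.2) ?_ a b fun i => h i.1 i.2.1 i.2.2
  intro y hy
  obtain ⟨_, ⟨U, hU, rfl⟩, hyU, hUW⟩ := Y.isBasis_affineOpens.exists_subset_of_mem_open hy W.2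
  exact Opens.mem_iSup.mpr ⟨⟨U, hU, hUW⟩, hyU⟩

lemma glue {Y : Scheme.{u}} {ι : Type*} (U : ι → Y.Opens) (hU : ∀ y : Y, ∃ i, y ∈ U i)
    (a : ∀ i, Γ(Y, U i)) (h : ∀ i j, res (inf_le_left : U i ⊓ U j ≤ U i) (a i) = res inf_le_right (a j)) :
    ∃ s : Γ(Y, ⊤), ∀ i, res le_top s = a i := by
  obtain ⟨s, hs, -⟩ := Y.sheaf.existsUnique_gluing' U ⊤ (fun i => homOfLE le_top) 
    (fun y _ => Opens.mem_iSup.mpr (hU y)) a (fun i j => h i j)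
  exact ⟨s, hs⟩
end ChevAff
end PartA

section PartB
open AlgebraicGeometry CategoryTheory TopologicalSpace Opposite
universe u
namespace ChevAff

lemma sq_cover {Z Y : Scheme.{u}} (i : Z ⟶ Y) [IsAffine Z] [IsClosedImmersion i] [Surjective i] (y : Y) :
    ∃ U : Y.Opens, IsAffineOpen U ∧ y ∈ U ∧ ∃ g : Γ(Z, ⊤), i ⁻¹ᵁ U = Z.basicOpen g := by
  obtain ⟨_, ⟨V, hV, rfl⟩, hyV, -⟩ := Y.isBasis_affineOpens.exists_subset_of_mem_open (Set.mem_univ y) isOpen_univ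
  obtain ⟨z, rfl⟩ := i.surjective y
  obtain ⟨_, ⟨_, ⟨g, rfl⟩, rfl⟩, hg, hgV⟩ := (isBasis_basicOpen Z).exists_subset_of_mem_open
    (show z ∈ i ⁻¹ᵁ V from hyV) (i ⁻¹ᵁ V).2
  obtain ⟨g', hg'⟩ := i.app_surjective V hV (res le_top g)
  have h : i ⁻¹ᵁ (Y.basicOpen g') = Z.basicOpen g := by
    rw [Scheme.preimage_basicOpen, hg']
    refine (Z.basicOpen_res _ _).trans ?_
    exact inf_eq_right.mpr hgV
  refine ⟨Y.basicOpen g', hV.basicOpen g', ?_, g, h⟩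
  change z ∈ i ⁻¹ᵁ (Y.basicOpen g')
  rw [h]; exact hg

lemma le_of_preimage_le {Z Y : Scheme.{u}} (i : Z ⟶ Y) [Surjective i] {U V : Y.Opens}
    (h : i ⁻¹ᵁ U ≤ i ⁻¹ᵁ V) : U ≤ V := by
  intro y hy
  obtain ⟨z, rfl⟩ := i.surjective y
  exact h hy

open Filter in
/-- local extension -/
lemma sq_ext {Z Y : Scheme.{u}} (i : Z ⟶ Y) [IsClosedImmersion i] 
    (U : Y.Opens) (hU : IsAffineOpen U) (g : Γ(Y, U)) (W : Y.Opens) (hW : W = Y.basicOpen g) (hWU : W ≤ U)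
    (t : Γ(Y, W)) (ht : i.app W t = 0) :
    ∃ n, ∃ e : Γ(Y, U), i.app U e = 0 ∧ res hWU e = res hWU g ^ n * t := by
  subst hW
  obtain ⟨n, y, hy⟩ := exists_eq_pow_mul_of_isCompact_of_isQuasiSeparated Y U hU.isCompact hU.isQuasiSeparated g t
  change res hWU y = res hWU g ^ n * t at hy
  have hZ : IsAffineOpen (i ⁻¹ᵁ U) := hU.preimage i
  obtain ⟨m, hm⟩ := exists_pow_mul_eq_zero_of_res_basicOpen_eq_zero_of_isCompact Z hZ.isCompact (i.app U y) (i.app U g) (by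
    have h1 : res (i.preimage_mono hWU) (i.app U y) = 0 := by
      rw [← app_res i hWU, hy, map_mul, ht, mul_zero]
    have h2 : Z.basicOpen (i.app U g) ≤ i ⁻¹ᵁ (Y.basicOpen g) := (Scheme.preimage_basicOpen i g).ge
    have h3 := res_res (i.preimage_mono hWU) h2 (i.app U y)
    rw [h1, map_zero] at h3
    exact h3.symm)
  refine ⟨m + n, g ^ m * y, ?_, ?_⟩
  · rw [map_mul, map_pow, hm]
  · rw [map_mul, map_pow, hy]; ring


lemma span_top_of_cover {Z : Scheme.{u}} [IsAffine Z] (S : Set Γ(Z, ⊤))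
    (h : ∀ z : Z, ∃ s ∈ S, z ∈ Z.basicOpen s) : Ideal.span S = ⊤ := by
  rw [← (isAffineOpen_top Z).self_le_iSup_basicOpen_iff]
  intro z _
  obtain ⟨s, hs, hz⟩ := h z
  exact Opens.mem_iSup.mpr ⟨⟨s, hs⟩, hz⟩

lemma sq_lift {Z Y : Scheme.{u}} (i : Z ⟶ Y) [IsAffine Z] [IsClosedImmersion i] [Surjective i]
    [CompactSpace Y] 
    (hN : ∀ (W : Y.Opens) (a b : Γ(Y, W)), i.app W a = 0 → i.app W b = 0 → a * b = 0)
    (sbar : Γ(Z, ⊤)) : ∃ s : Γ(Y, ⊤), i.app ⊤ s = sbar := by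
  classical
  have hN' : ∀ (W : Y.Opens) (a a' b : Γ(Y, W)), i.app W a = i.app W a' → i.app W b = 0 → a * b = a' * b := by
    intro W a a' b h hb
    have := hN W (a - a') b (by rw [map_sub, h, sub_self]) hb
    rwa [sub_mul, sub_eq_zero] at this
  choose U0 hU0 hyU0 g0 hg0 using sq_cover i
  obtain ⟨t, -, ht⟩ := isCompact_univ.elim_nhds_subcover (fun y => (U0 y : Set Y))
    (fun y _ => (U0 y).2.mem_nhds (hyU0 y))
  -- the finite cover
  let U : t → Y.Opens := fun k => U0 k.1
  let g : t → Γ(Z, ⊤) := fun k => g0 k.1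
  have hU : ∀ k, IsAffineOpen (U k) := fun k => hU0 _
  have hg : ∀ k, i ⁻¹ᵁ (U k) = Z.basicOpen (g k) := fun k => hg0 _
  have hcov : ∀ y : Y, ∃ k, y ∈ U k := by
    intro y
    obtain ⟨k, hk, hyk⟩ := Set.mem_iUnion₂.mp (ht (Set.mem_univ y))
    exact ⟨⟨k, hk⟩, hyk⟩
  clear_value U g
  have hlift : ∀ k (r : Γ(Z, ⊤)), ∃ ρ : Γ(Y, U k), i.app (U k) ρ = res le_top r :=
    fun k r => i.app_surjective (U k) (hU k) _
  choose L hL using hlift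
  let s : ∀ k, Γ(Y, U k) := fun k => L k sbar
  have hs : ∀ k, i.app (U k) (s k) = res le_top sbar := fun k => hL k sbar
  clear_value s
  let r1 : ∀ k l, Γ(Y, U k) →+* Γ(Y, U k ⊓ U l) := fun k l => res inf_le_left
  let r2 : ∀ k l, Γ(Y, U l) →+* Γ(Y, U k ⊓ U l) := fun k l => res inf_le_right
  have e1 : ∀ k l r (ρ : Γ(Y, U k)), i.app _ ρ = res le_top r → i.app _ (r1 k l ρ) = res le_top r := by
    intro k l r ρ h
    change i.app _ (res _ _) = _
    rw [app_res i inf_le_left, h, res_res]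
  have e2 : ∀ k l r (ρ : Γ(Y, U l)), i.app _ ρ = res le_top r → i.app _ (r2 k l ρ) = res le_top r := by
    intro k l r ρ h
    change i.app _ (res _ _) = _
    rw [app_res i inf_le_right, h, res_res]
  have z1 : ∀ k l (ρ : Γ(Y, U k)), i.app _ ρ = 0 → i.app _ (r1 k l ρ) = 0 := by
    intro k l ρ h
    change i.app _ (res _ _) = _
    rw [app_res i inf_le_left, h, map_zero]
  have z2 : ∀ k l (ρ : Γ(Y, U l)), i.app _ ρ = 0 → i.app _ (r2 k l ρ) = 0 := by
    intro k l ρ h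
    change i.app _ (res _ _) = _
    rw [app_res i inf_le_right, h, map_zero]
  have hd : ∀ k l, i.app _ (r1 k l (s k) - r2 k l (s l)) = 0 := by
    intro k l
    rw [map_sub, e1 k l _ _ (hs k), e2 k l _ _ (hs l), sub_self]
  let P : Γ(Z, ⊤) → (∀ k, Γ(Y, U k)) → Prop := fun r e => (∀ k, i.app (U k) (e k) = 0) ∧
    ∀ k l (ρ : Γ(Y, U k)), i.app (U k) ρ = res le_top r →
      r1 k l (e k) - r2 k l (e l) = r1 k l ρ * (r1 k l (s k) - r2 k l (s l))
  let D : Ideal Γ(Z, ⊤) :=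
    { carrier := {r | ∃ e, P r e}
      zero_mem' := by
        refine ⟨0, fun k => map_zero _, fun k l ρ hρ => ?_⟩
        rw [hN _ _ _ (z1 k l ρ (by rw [hρ, map_zero])) (hd k l)]
        simp
      add_mem' := by
        rintro r r' ⟨e, he, he'⟩ ⟨f, hf, hf'⟩
        refine ⟨e + f, fun k => by rw [Pi.add_apply, map_add, he, hf, add_zero], fun k l ρ hρ => ?_⟩
        have h1 := he' k l (L k r) (hL k r)
        have h2 := hf' k l (ρ - L k r) (by rw [map_sub, hρ, hL, map_add]; ring)
        rw [map_sub] at h2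
        simp only [Pi.add_apply, map_add]
        linear_combination h1 + h2
      smul_mem' := by
        rintro c r ⟨e, he, he'⟩
        refine ⟨fun k => L k c * e k, fun k => by rw [map_mul, he, mul_zero], fun k l ρ hρ => ?_⟩
        have h1 := he' k l (L k r) (hL k r)
        have h2 := hN' _ (r1 k l (L k c)) (r2 k l (L l c)) (r2 k l (e l))
          (by rw [e1 k l _ _ (hL k c), e2 k l _ _ (hL l c)]) (z2 k l _ (he l))
        have h3 := hN' _ (r1 k l (L k c * L k r)) (r1 k l ρ) _
          ((e1 k l (c * r) _ (by rw [map_mul, hL, hL, map_mul])).trans (e1 k l (c * r) _ hρ).symm) (hd k l)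
        simp only [map_mul] at h3 ⊢
        linear_combination (r1 k l (L k c)) * h1 + h2 + h3 }
  have hD : ∀ k, ∃ n, g k ^ n ∈ D := by
    intro k
    let γ : ∀ m, Γ(Y, U m) := fun m => L m (g k)
    have hγ : ∀ m, U m ⊓ U k = Y.basicOpen (γ m) := by
      intro m
      have : i ⁻¹ᵁ (U m ⊓ U k) = i ⁻¹ᵁ (Y.basicOpen (γ m)) := by
        rw [Scheme.preimage_basicOpen, hL]
        refine Eq.trans ?_ (Z.basicOpen_res _ _).symm
        rw [← hg k]; rfl
      exact le_antisymm (le_of_preimage_le i this.le) (le_of_preimage_le i this.ge)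
    have hext : ∀ m, ∃ n, ∃ e : Γ(Y, U m), i.app (U m) e = 0 ∧
        r1 m k e = r1 m k (γ m) ^ n * (r1 m k (s m) - r2 m k (s k)) := fun m =>
      sq_ext i (U m) (hU m) (γ m) _ (hγ m) inf_le_left _ (hd m k)
    choose n e he he' using hext
    let n' := Finset.univ.sup n
    have hn' : ∀ m, n m ≤ n' := fun m => Finset.le_sup (Finset.mem_univ m)
    let e' : ∀ m, Γ(Y, U m) := fun m => γ m ^ (n' - n m) * e m
    have ez : ∀ m, i.app (U m) (e' m) = 0 := fun m => by rw [map_mul, he, mul_zero]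
    have ee : ∀ m, r1 m k (e' m) = r1 m k (γ m) ^ n' * (r1 m k (s m) - r2 m k (s k)) := by
      intro m
      rw [map_mul, map_pow, he', ← mul_assoc, ← pow_add, Nat.sub_add_cancel (hn' m)]
    clear_value e' n'
    clear he' he hn' e n
    have hkill : ∀ m l, ∃ M, r1 m l (γ m) ^ M * (r1 m l (e' m) - r2 m l (e' l) -
        r1 m l (γ m) ^ n' * (r1 m l (s m) - r2 m l (s l))) = 0 := by
      intro m l
      have hc : IsCompact (U m ⊓ U l).carrier := by
        have : U m ⊓ U l = Y.basicOpen (L m (g l)) := by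
          have : i ⁻¹ᵁ (U m ⊓ U l) = i ⁻¹ᵁ (Y.basicOpen (L m (g l))) := by
            rw [Scheme.preimage_basicOpen, hL]
            refine Eq.trans ?_ (Z.basicOpen_res _ _).symm
            rw [← hg l]; rfl
          exact le_antisymm (le_of_preimage_le i this.le) (le_of_preimage_le i this.ge)
        rw [this]
        exact ((hU m).basicOpen _).isCompact
      refine exists_pow_mul_eq_zero_of_res_basicOpen_eq_zero_of_isCompact Y hc _ _ ?_
      have hb : Y.basicOpen (r1 m l (γ m)) = (U m ⊓ U l) ⊓ (U m ⊓ U k) := by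
        rw [hγ m]; exact Y.basicOpen_res _ _
      have hle : Y.basicOpen (r1 m l (γ m)) ≤ U m ⊓ U l := Y.basicOpen_le _
      have hle1 : Y.basicOpen (r1 m l (γ m)) ≤ U m ⊓ U k := by rw [hb]; exact inf_le_right
      have hle2 : Y.basicOpen (r1 m l (γ m)) ≤ U l ⊓ U k := by
        rw [hb]; exact le_inf (inf_le_left.trans inf_le_right) (inf_le_right.trans inf_le_right)
      change res hle _ = 0
      generalize Y.basicOpen (r1 m l (γ m)) = B at *
      have q1 := congrArg (res hle1) (ee m)
      have q2 := congrArg (res hle2) (ee l)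
      have q3 := hN' B (res (hle1.trans inf_le_left) (γ m)^n') (res (hle2.trans inf_le_left) (γ l)^n')
        (res (hle2.trans inf_le_left) (s l) - res (hle2.trans inf_le_right) (s k))
        (by rw [map_pow, map_pow, app_res, app_res, hL, hL, res_res, res_res])
        (by rw [map_sub, app_res, app_res, hs, hs, res_res, res_res, sub_self])
      simp only [r1, r2, map_sub, map_mul, map_pow, res_res] at q1 q2 q3 ⊢
      linear_combination q1 - q2 + q3
    choose M hM using hkill
    let M' := Finset.univ.sup (fun p : t × t => M p.1 p.2)
    have hM' : ∀ m l, r1 m l (γ m) ^ M' * (r1 m l (e' m) - r2 m l (e' l) -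
        r1 m l (γ m) ^ n' * (r1 m l (s m) - r2 m l (s l))) = 0 := by
      intro m l
      have : M m l ≤ M' := Finset.le_sup (f := fun p : t × t => M p.1 p.2) (Finset.mem_univ (m, l))
      rw [← Nat.sub_add_cancel this, pow_add, mul_assoc, hM, mul_zero]
    clear_value M'
    refine ⟨M' + n', fun m => γ m ^ M' * e' m, fun m => by rw [map_mul, ez, mul_zero], fun m l ρ hρ => ?_⟩
    have h2 := hN' _ (r1 m l (γ m) ^ M') (r2 m l (γ l) ^ M') (r2 m l (e' l))
      (by rw [map_pow, map_pow, e1 m l _ _ (hL m (g k)), e2 m l _ _ (hL l (g k))]) (z2 m l _ (ez l))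
    have h3 := hN' _ (r1 m l (γ m ^ (M' + n'))) (r1 m l ρ) _
      (by rw [e1 m l _ _ hρ, e1 m l (g k ^ (M' + n'))]; rw [map_pow, hL, map_pow]) (hd m l)
    have h4 := hM' m l
    simp only [map_mul, map_pow] at h3 ⊢
    linear_combination h4 + h2 + h3
  have hDtop : D = ⊤ := by
    rw [← Ideal.radical_eq_top, eq_top_iff, ← span_top_of_cover (Set.range g), Ideal.span_le]
    · rintro _ ⟨k, rfl⟩
      exact hD k
    · intro z
      obtain ⟨k, hk⟩ := hcov (i z)
      refine ⟨g k, ⟨k, rfl⟩, ?_⟩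
      rw [← hg k]
      exact hk
  obtain ⟨e, he, he'⟩ := (Ideal.eq_top_iff_one D).mp hDtop
  obtain ⟨S, hS⟩ := glue U hcov (fun k => s k - e k) (fun k l => by
    have := he' k l 1 (by rw [map_one, map_one])
    change r1 k l _ = r2 k l _
    rw [map_one, one_mul] at this
    rw [map_sub, map_sub]
    linear_combination -this)
  refine ⟨S, ?_⟩
  refine Z.sheaf.eq_of_locally_eq' (fun k => i ⁻¹ᵁ U k) _ (fun k => homOfLE le_top) ?_ _ _ fun k => ?_
  · intro z _
    obtain ⟨k, hk⟩ := hcov (i z)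
    exact Opens.mem_iSup.mpr ⟨k, hk⟩
  · change res (i.preimage_mono le_top) _ = res _ _
    rw [← app_res i le_top, hS, map_sub, hs, he, sub_zero]

end ChevAff
end PartB

section PartC
open AlgebraicGeometry CategoryTheory TopologicalSpace Opposite
universe u
namespace ChevAff

/-- pullback of global sections -/
noncomputable abbrev pb {X Y : Scheme.{u}} (f : X ⟶ Y) : Γ(Y, ⊤) →+* Γ(X, ⊤) := f.appTop.hom

lemma pre_basicOpen {X Y : Scheme.{u}} (f : X ⟶ Y) (s : Γ(Y, ⊤)) :
    f ⁻¹ᵁ (Y.basicOpen s) = X.basicOpen (pb f s) := f.preimage_basicOpen s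

lemma affine_of_sq {Z Y : Scheme.{u}} (i : Z ⟶ Y) [IsAffine Z] [IsClosedImmersion i] [Surjective i]
    [CompactSpace Y] 
    (hN : ∀ (W : Y.Opens) (a b : Γ(Y, W)), i.app W a = 0 → i.app W b = 0 → a * b = 0) : IsAffine Y := by
  refine crit Y (fun y => ?_) (fun S hS => ?_)
  · obtain ⟨_, ⟨V, hV, rfl⟩, hyV, -⟩ := Y.isBasis_affineOpens.exists_subset_of_mem_open (Set.mem_univ y) isOpen_univ
    obtain ⟨z, rfl⟩ := i.surjective y
    obtain ⟨_, ⟨_, ⟨g, rfl⟩, rfl⟩, hg, hgV⟩ := (isBasis_basicOpen Z).exists_subset_of_mem_open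
      (show z ∈ i ⁻¹ᵁ V from hyV) (i ⁻¹ᵁ V).2
    obtain ⟨s, hs⟩ := sq_lift i hN g
    change pb i s = g at hs
    rw [← hs, ← pre_basicOpen i s] at hg hgV
    exact ⟨s, hg, isAffineOpen_of_basicOpen_le s V hV (le_of_preimage_le i hgV)⟩
  · have h1 : Ideal.span (pb i '' S) = ⊤ := by
      refine span_top_of_cover (Z := Z) _ fun z => ?_
      obtain ⟨s, hs, hz⟩ := hS (i z)
      refine ⟨_, ⟨s, hs, rfl⟩, ?_⟩
      exact (pre_basicOpen i s).le hz
    rw [← Ideal.map_span, Ideal.eq_top_iff_one,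
      Ideal.mem_map_iff_of_surjective _ (show Function.Surjective (pb i) from sq_lift i hN)] at h1
    obtain ⟨u, hu, hu1⟩ := h1
    rw [Ideal.eq_top_iff_one]
    have := hN ⊤ (u - 1) (u - 1) (by rw [map_sub, map_one]; exact sub_eq_zero.mpr hu1) (by rw [map_sub, map_one]; exact sub_eq_zero.mpr hu1) 
    have e : 1 = (2 - u) * u := by linear_combination this
    rw [e]
    exact Ideal.mul_mem_left _ _ hu

lemma affine_of_mul_self_eq_bot {Y : Scheme.{u}} [CompactSpace Y] (I : Y.IdealSheafData) (hI : I * I = ⊥)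
    [IsAffine I.subscheme] : IsAffine Y := by
  have : Surjective I.subschemeι := by
    constructor
    rw [← Set.range_eq_univ, I.range_subschemeι]
    have := congrArg Scheme.IdealSheafData.support hI
    rw [Scheme.IdealSheafData.support_mul, sup_idem, Scheme.IdealSheafData.support_bot] at this
    rw [this]; rfl
  refine affine_of_sq I.subschemeι fun W a b ha hb => sec_ext _ _ fun U hU hUW => ?_
  have key : ∀ a, I.subschemeι.app W a = 0 → res hUW a ∈ I.ideal ⟨U, hU⟩ := by
    intro a ha
    rw [← I.ker_subschemeι_app]
    change I.subschemeι.app U (res hUW a) = 0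
    rw [app_res, ha, map_zero]
  have := Ideal.mul_mem_mul (key a ha) (key b hb)
  rw [← Pi.mul_apply, ← Scheme.IdealSheafData.ideal_mul, hI] at this
  rw [map_mul, map_zero]
  simpa using this
end ChevAff
end PartC

section PartD
open AlgebraicGeometry CategoryTheory TopologicalSpace Opposite
universe u
namespace ChevAff

lemma exists_pt_of_prime {W : Scheme.{u}} [IsAffine W] (p : Ideal Γ(W, ⊤)) [hp : p.IsPrime] :
    ∃ w : W, ∀ s : Γ(W, ⊤), w ∈ W.basicOpen s ↔ s ∉ p := by
  refine ⟨(isAffineOpen_top W).fromSpec (⟨p, hp⟩ : PrimeSpectrum _), fun s => ?_⟩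
  have := (isAffineOpen_top W).fromSpec_preimage_basicOpen s
  change _ ∈ (isAffineOpen_top W).fromSpec ⁻¹ᵁ W.basicOpen s ↔ _
  rw [this]
  rfl

/-- sections whose nonvanishing locus lies in V -/
noncomputable def offIdeal {Z : Scheme.{u}} (V : Z.Opens) : Ideal Γ(Z, ⊤) where
  carrier := {g | Z.basicOpen g ≤ V}
  zero_mem' := by simp
  add_mem' {a b} ha hb := (Z.basicOpen_add_le a b).trans (sup_le ha hb)
  smul_mem' c x hx := by
    change Z.basicOpen (c * x) ≤ V
    rw [Scheme.basicOpen_mul]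
    exact inf_le_right.trans hx

lemma mem_offIdeal {Z : Scheme.{u}} (V : Z.Opens) (g : Γ(Z, ⊤)) : g ∈ offIdeal V ↔ Z.basicOpen g ≤ V := Iff.rfl

lemma exists_mem_offIdeal {Z : Scheme.{u}} [IsAffine Z] (V : Z.Opens) (z : Z) (hz : z ∈ V) :
    ∃ g ∈ offIdeal V, z ∈ Z.basicOpen g := by
  obtain ⟨_, ⟨_, ⟨g, rfl⟩, rfl⟩, hg, hgV⟩ := (isBasis_basicOpen Z).exists_subset_of_mem_open hz V.2
  exact ⟨g, hgV, hg⟩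

lemma exists_lift_pow {W Z : Scheme.{u}} [IsAffine W] [IsAffine Z] (k : W ⟶ Z) [IsClosedImmersion k]
    (V : Z.Opens) (t : Γ(W, ⊤)) (ht : W.basicOpen t ≤ k ⁻¹ᵁ V) :
    ∃ N, ∃ a ∈ offIdeal V, pb k a = t ^ (N + 1) := by
  have hsurj : Function.Surjective (pb k) := k.app_surjective ⊤ (isAffineOpen_top Z)
  have : t ∈ ((offIdeal V).map (pb k)).radical := by
    rw [Ideal.radical_eq_sInf, Ideal.mem_sInf]
    rintro p ⟨hp, hpp⟩
    obtain ⟨w, hw⟩ := exists_pt_of_prime p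
    by_contra htp
    obtain ⟨g, hg, hg'⟩ := exists_mem_offIdeal V (k w) (ht ((hw t).mpr htp))
    have : w ∈ W.basicOpen (pb k g) := by rw [← pre_basicOpen]; exact hg'
    exact (hw _).mp this (hp (Ideal.mem_map_of_mem _ hg))
  obtain ⟨N, hN⟩ := this
  have := Ideal.mul_mem_left _ t hN
  rw [← pow_succ', Ideal.mem_map_iff_of_surjective _ hsurj] at this
  exact ⟨N, this⟩

section union
variable {Y : Scheme.{u}} (I₁ I₂ : Y.IdealSheafData) (h : I₁ ⊓ I₂ = ⊥)

lemma mem_ideal_iff (I : Y.IdealSheafData) (U : Y.affineOpens) (a : Γ(Y, U)) :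
    I.subschemeι.app U a = 0 ↔ a ∈ I.ideal U := by
  rw [← I.ker_subschemeι_app]; rfl

include h in
lemma union_zero (W : Y.Opens) (a : Γ(Y, W)) (h1 : I₁.subschemeι.app W a = 0)
    (h2 : I₂.subschemeι.app W a = 0) : a = 0 := by
  refine sec_ext _ _ fun U hU hUW => ?_
  have k1 : res hUW a ∈ I₁.ideal ⟨U, hU⟩ := by
    exact (mem_ideal_iff I₁ ⟨U, hU⟩ _).mp (by rw [app_res, h1, map_zero])
  have k2 : res hUW a ∈ I₂.ideal ⟨U, hU⟩ := by
    exact (mem_ideal_iff I₂ ⟨U, hU⟩ _).mp (by rw [app_res, h2, map_zero])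
  have : res hUW a ∈ (I₁ ⊓ I₂).ideal ⟨U, hU⟩ := ⟨k1, k2⟩
  rw [h] at this
  rw [map_zero]
  simpa using this

lemma pb_comp {X Y Z : Scheme.{u}} (f : X ⟶ Y) (g : Y ⟶ Z) (s) : pb f (pb g s) = pb (f ≫ g) s := by
  simp only [pb, Scheme.Hom.comp_appTop, CommRingCat.hom_comp, RingHom.comp_apply]

lemma app_comp_eq {W Z Y : Scheme.{u}} (k : W ⟶ Z) (ι : Z ⟶ Y) (ι' : W ⟶ Y) (e : k ≫ ι = ι') (U : Y.Opens)
    (a : Γ(Y, U)) (s : Γ(Z, ⊤)) (h : ι.app U a = res le_top s) : ι'.app U a = res le_top (pb k s) := by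
  subst e
  have h1 : (k ≫ ι).app U a = k.app _ (ι.app U a) := by
    rw [Scheme.Hom.comp_app]; rfl
  rw [h1, h, app_res]; rfl

include h in
lemma union_glue (s1 : Γ(I₁.subscheme, ⊤)) (s2 : Γ(I₂.subscheme, ⊤))
    (h12 : pb (Scheme.IdealSheafData.inclusion (le_sup_left : I₁ ≤ I₁ ⊔ I₂)) s1 =
      pb (Scheme.IdealSheafData.inclusion (le_sup_right : I₂ ≤ I₁ ⊔ I₂)) s2) :
    ∃ s : Γ(Y, ⊤), pb I₁.subschemeι s = s1 ∧ pb I₂.subschemeι s = s2 := by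
  have key : ∀ U : Y.affineOpens, ∃ a : Γ(Y, U), I₁.subschemeι.app U a = res le_top s1 ∧
      I₂.subschemeι.app U a = res le_top s2 := by
    intro U
    obtain ⟨a1, ha1⟩ := I₁.subschemeι_app_surjective U (res le_top s1)
    obtain ⟨a2, ha2⟩ := I₂.subschemeι_app_surjective U (res le_top s2)
    have hd : a2 - a1 ∈ (I₁ ⊔ I₂).ideal U := by
      rw [← mem_ideal_iff, map_sub, sub_eq_zero]
      rw [app_comp_eq _ _ _ (Scheme.IdealSheafData.inclusion_subschemeι (le_sup_left : I₁ ≤ I₁ ⊔ I₂)) U a1 s1 ha1,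
        app_comp_eq _ _ _ (Scheme.IdealSheafData.inclusion_subschemeι (le_sup_right : I₂ ≤ I₁ ⊔ I₂)) U a2 s2 ha2, h12]
    obtain ⟨b1, hb1, b2, hb2, hb⟩ := Submodule.mem_sup.mp hd
    replace hb1 := (mem_ideal_iff I₁ U b1).mpr hb1
    replace hb2 := (mem_ideal_iff I₂ U b2).mpr hb2
    refine ⟨a1 + b1, by rw [map_add, hb1, add_zero]; exact ha1, ?_⟩
    have : a1 + b1 = a2 - b2 := by linear_combination hb
    rw [this, map_sub, hb2, sub_zero]; exact ha2
  choose a ha1 ha2 using key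
  obtain ⟨s, hs⟩ := glue (fun U : Y.affineOpens => U.1) (fun y => by
    obtain ⟨_, ⟨V, hV, rfl⟩, hyV, -⟩ := Y.isBasis_affineOpens.exists_subset_of_mem_open (Set.mem_univ y) isOpen_univ
    exact ⟨⟨V, hV⟩, hyV⟩) a (fun i j => by
    rw [← sub_eq_zero]
    apply union_zero I₁ I₂ h
    · rw [map_sub, app_res, app_res, ha1, ha1, res_res, res_res, sub_self]
    · rw [map_sub, app_res, app_res, ha2, ha2, res_res, res_res, sub_self])
  have fin : ∀ (I : Y.IdealSheafData) (t : Γ(I.subscheme, ⊤)) (ht : ∀ U : Y.affineOpens, I.subschemeι.app U (a U) = res le_top t),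
      pb I.subschemeι s = t := by
    intro I t ht
    refine I.subscheme.sheaf.eq_of_locally_eq' (fun k : Y.affineOpens => I.subschemeι ⁻¹ᵁ k.1) _ (fun k => homOfLE le_top) ?_ _ _ fun k => ?_
    · intro z _
      obtain ⟨_, ⟨V, hV, rfl⟩, hyV, -⟩ := Y.isBasis_affineOpens.exists_subset_of_mem_open (Set.mem_univ (I.subschemeι z)) isOpen_univ
      exact Opens.mem_iSup.mpr ⟨⟨V, hV⟩, hyV⟩
    · change res (I.subschemeι.preimage_mono le_top) (I.subschemeι.app ⊤ s) = res _ _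
      rw [← app_res I.subschemeι le_top, hs, ht]
  exact ⟨s, fin I₁ s1 ha1, fin I₂ s2 ha2⟩

instance {I J : Y.IdealSheafData} (h : I ≤ J) : IsClosedImmersion (Scheme.IdealSheafData.inclusion h) := by
  have : IsClosedImmersion (Scheme.IdealSheafData.inclusion h ≫ I.subschemeι) := by
    rw [Scheme.IdealSheafData.inclusion_subschemeι]; infer_instance
  exact IsClosedImmersion.of_comp _ I.subschemeι

include h in
lemma union_surj [IsAffine I₁.subscheme] [IsAffine I₂.subscheme] : Function.Surjective (pb I₁.subschemeι) := by
  intro s1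
  obtain ⟨s2, hs2⟩ := (Scheme.IdealSheafData.inclusion (le_sup_right : I₂ ≤ I₁ ⊔ I₂)).app_surjective ⊤ (isAffineOpen_top _)
    (pb (Scheme.IdealSheafData.inclusion (le_sup_left : I₁ ≤ I₁ ⊔ I₂)) s1)
  obtain ⟨s, hs, -⟩ := union_glue I₁ I₂ h s1 s2 hs2.symm
  exact ⟨s, hs⟩

include h in
lemma union_cover (y : Y) : (∃ z, I₁.subschemeι z = y) ∨ (∃ z, I₂.subschemeι z = y) := by
  have h' : I₁ * I₂ = ⊥ := by
    rw [eq_bot_iff, ← h]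
    intro U
    exact Ideal.mul_le_inf
  have := congrArg Scheme.IdealSheafData.support h'
  rw [Scheme.IdealSheafData.support_mul, Scheme.IdealSheafData.support_bot] at this
  have hy : y ∈ I₁.support ⊔ I₂.support := by rw [this]; trivial
  change y ∈ Set.range I₁.subschemeι ∨ y ∈ Set.range I₂.subschemeι
  rw [I₁.range_subschemeι, I₂.range_subschemeι]
  exact hy

include h in
lemma union_h1 [IsAffine I₁.subscheme] [IsAffine I₂.subscheme] (z : I₁.subscheme) :
    ∃ s : Γ(Y, ⊤), I₁.subschemeι z ∈ Y.basicOpen s ∧ IsAffineOpen (Y.basicOpen s) := by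
  obtain ⟨_, ⟨U, hU, rfl⟩, hyU, -⟩ := Y.isBasis_affineOpens.exists_subset_of_mem_open
    (Set.mem_univ (I₁.subschemeι z)) isOpen_univ
  obtain ⟨s1, hs1, hz⟩ := exists_mem_offIdeal (I₁.subschemeι ⁻¹ᵁ U) z hyU
  let k1 := Scheme.IdealSheafData.inclusion (le_sup_left : I₁ ≤ I₁ ⊔ I₂)
  let k2 := Scheme.IdealSheafData.inclusion (le_sup_right : I₂ ≤ I₁ ⊔ I₂)
  have e : k1 ≫ I₁.subschemeι = k2 ≫ I₂.subschemeι := by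
    simp only [k1, k2, Scheme.IdealSheafData.inclusion_subschemeι]
  have : IsAffine (I₁ ⊔ I₂).subscheme := isAffine_of_isAffineHom k1
  obtain ⟨N, a, ha, ha'⟩ := exists_lift_pow k2 (I₂.subschemeι ⁻¹ᵁ U) (pb k1 s1) (by
    rw [← pre_basicOpen, ← Scheme.Hom.comp_preimage, ← e, Scheme.Hom.comp_preimage]
    exact k1.preimage_mono hs1)
  obtain ⟨s, h1, h2⟩ := union_glue I₁ I₂ h (s1 ^ (N + 1)) a (by rw [map_pow]; exact ha'.symm)
  refine ⟨s, ?_, isAffineOpen_of_basicOpen_le s U hU ?_⟩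
  · change z ∈ I₁.subschemeι ⁻¹ᵁ (Y.basicOpen s)
    rw [pre_basicOpen, h1, Scheme.basicOpen_pow _ _ (Nat.succ_pos N)]
    exact hz
  · intro y hy
    obtain ⟨w, rfl⟩ | ⟨w, rfl⟩ := union_cover I₁ I₂ h y
    · change w ∈ I₁.subschemeι ⁻¹ᵁ (Y.basicOpen s) at hy
      rw [pre_basicOpen, h1, Scheme.basicOpen_pow _ _ (Nat.succ_pos N)] at hy
      exact hs1 hy
    · change w ∈ I₂.subschemeι ⁻¹ᵁ (Y.basicOpen s) at hy
      rw [pre_basicOpen, h2] at hy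
      exact ha hy

lemma span_lift {Z Y : Scheme.{u}} [IsAffine Z] (i : Z ⟶ Y) (hi : Function.Surjective (pb i))
    (S : Set Γ(Y, ⊤)) (hS : ∀ y : Y, ∃ s ∈ S, y ∈ Y.basicOpen s) : ∃ u ∈ Ideal.span S, pb i u = 1 := by
  have h1 : Ideal.span (pb i '' S) = ⊤ := by
    refine span_top_of_cover (Z := Z) _ fun z => ?_
    obtain ⟨s, hs, hz⟩ := hS (i z)
    refine ⟨_, ⟨s, hs, rfl⟩, ?_⟩
    exact (pre_basicOpen i s).le hz
  rwa [← Ideal.map_span, Ideal.eq_top_iff_one, Ideal.mem_map_iff_of_surjective _ hi] at h1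

include h in
lemma affine_of_union [IsAffine I₁.subscheme] [IsAffine I₂.subscheme] : IsAffine Y := by
  have h' : I₂ ⊓ I₁ = ⊥ := by rw [inf_comm, h]
  refine crit Y (fun y => ?_) (fun S hS => ?_)
  · obtain ⟨w, rfl⟩ | ⟨w, rfl⟩ := union_cover I₁ I₂ h y
    · exact union_h1 I₁ I₂ h w
    · exact union_h1 I₂ I₁ h' w
  · obtain ⟨u, hu, hu1⟩ := span_lift _ (union_surj I₁ I₂ h) S hS
    obtain ⟨v, hv, hv1⟩ := span_lift _ (union_surj I₂ I₁ h') S hS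
    have := union_zero I₁ I₂ h ⊤ ((1 - u) * (1 - v))
      (by change pb _ _ = 0; rw [map_mul, map_sub, hu1]; simp)
      (by change pb _ _ = 0; rw [map_mul, map_sub _ 1 v, hv1]; simp)
    rw [Ideal.eq_top_iff_one]
    have e : 1 = (1 - v) * u + v := by linear_combination this
    rw [e]
    exact add_mem (Ideal.mul_mem_left _ _ hu) hv

end union
end ChevAff
end PartD

section PartE
open AlgebraicGeometry CategoryTheory TopologicalSpace Opposite Limits
universe u
namespace ChevAff

/-- closed subscheme of an affine open -/
noncomputable def quotMap {X : Scheme.{u}} {V : X.Opens} (hV : IsAffineOpen V) (J : Ideal Γ(X, V)) :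
    Spec (.of (Γ(X, V) ⧸ J)) ⟶ X := Spec.map (CommRingCat.ofHom (Ideal.Quotient.mk J)) ≫ hV.fromSpec

lemma quot_aux {X : Scheme.{u}} {V : X.Opens} (hV : IsAffineOpen V) {R : CommRingCat.{u}} (φ : Γ(X, V) ⟶ R)
    (hpre : ⊤ ≤ (Spec.map φ ≫ hV.fromSpec) ⁻¹ᵁ V) : 
    (Spec.map φ ≫ hV.fromSpec).appLE V ⊤ hpre = φ ≫ (Scheme.ΓSpecIso _).inv := by
  rw [Scheme.ΓSpecIso_inv_naturality, ← Scheme.Hom.appLE_comp_appLE _ _ V ⊤ ⊤ hV.fromSpec_preimage_self.ge le_rfl]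
  congr 1
  · rw [Scheme.Hom.appLE, hV.fromSpec_app_self, Category.assoc, ← Functor.map_comp]
    convert Category.comp_id _
    exact CategoryTheory.Functor.map_id _ _

lemma comp_app_apply {X Y Z : Scheme.{u}} (f : X ⟶ Y) (g : Y ⟶ Z) (U : Z.Opens) (a : Γ(Z, U)) :
    (f ≫ g).app U a = f.app _ (g.app U a) := by
  rw [Scheme.Hom.comp_app]; rfl

lemma app_zero_of_comp {X Y Z : Scheme.{u}} (f : X ⟶ Y) (g : Y ⟶ Z) (h : X ⟶ Z) (e : h = f ≫ g) (U : Z.Opens) (a : Γ(Z, U))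
    (ha : g.app U a = 0) : h.app U a = 0 := by
  subst e
  exact (comp_app_apply f g U a).trans ((congrArg _ ha).trans (map_zero _))

lemma quotMap_app_eq_zero {X : Scheme.{u}} {V : X.Opens} (hV : IsAffineOpen V) (J : Ideal Γ(X, V)) (b : Γ(X, V)) :
    (quotMap hV J).app V b = 0 ↔ b ∈ J := by
  rw [← Ideal.Quotient.eq_zero_iff_mem]
  have hpre : (quotMap hV J) ⁻¹ᵁ V = ⊤ := by
    rw [quotMap, Scheme.Hom.comp_preimage, hV.fromSpec_preimage_self]; rfl
  have h1 : (quotMap hV J).app V ≫ (Spec _).presheaf.map (homOfLE hpre.ge).op =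
      CommRingCat.ofHom (Ideal.Quotient.mk J) ≫ (Scheme.ΓSpecIso _).inv :=
    quot_aux hV (CommRingCat.ofHom (Ideal.Quotient.mk J)) hpre.ge
  have h2 := congr($h1 b)
  simp only [CommRingCat.comp_apply] at h2
  constructor
  · intro h
    rw [h, map_zero] at h2
    exact (Scheme.ΓSpecIso (.of (Γ(X, V) ⧸ J))).symm.commRingCatIsoToRingEquiv.map_eq_zero_iff.mp h2.symm
  · intro h
    have h3 : (CommRingCat.ofHom (Ideal.Quotient.mk J)) b = 0 := h
    rw [h3, map_zero] at h2
    exact (((Spec _).presheaf.mapIso (eqToIso hpre.symm).op).commRingCatIsoToRingEquiv).map_eq_zero_iff.mp h2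

lemma mem_map_of_pullback {X Y : Scheme.{u}} (f : X ⟶ Y) (J : Y.IdealSheafData) (V : Y.affineOpens)
    (hB : IsAffineOpen (f ⁻¹ᵁ V)) (b : Γ(X, f ⁻¹ᵁ V))
    (hb : (pullback.fst f J.subschemeι).app (f ⁻¹ᵁ V) b = 0) :
    b ∈ (J.ideal V).map (f.app V).hom := by
  rw [← quotMap_app_eq_zero hB]
  let h2 : Spec (.of (Γ(X, f ⁻¹ᵁ V) ⧸ (J.ideal V).map (f.app V).hom)) ⟶ J.subscheme :=
    Spec.map (CommRingCat.ofHom (Ideal.quotientMap _ (f.app V).hom Ideal.le_comap_map)) ≫ J.subschemeCover.f V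
  have hc : quotMap hB ((J.ideal V).map (f.app V).hom) ≫ f = h2 ≫ J.subschemeι := by
    have hcov : J.subschemeCover.f V ≫ J.subschemeι = Spec.map (CommRingCat.ofHom (Ideal.Quotient.mk (J.ideal V))) ≫ V.2.fromSpec :=
      (J.subschemeCover_map_subschemeι V).trans (J.glueDataObjι_ι V)
    have h3 : CommRingCat.ofHom (Ideal.Quotient.mk (J.ideal V)) ≫
      CommRingCat.ofHom (Ideal.quotientMap _ (f.app V).hom Ideal.le_comap_map) = f.appLE V (f ⁻¹ᵁ V) le_rfl ≫
        CommRingCat.ofHom (Ideal.Quotient.mk ((J.ideal V).map (f.app V).hom)) := by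
      ext x
      simp [← Scheme.Hom.app_eq_appLE]
    calc _ = Spec.map (CommRingCat.ofHom (Ideal.Quotient.mk ((J.ideal V).map (f.app V).hom))) ≫ 
          Spec.map (f.appLE V (f ⁻¹ᵁ V) le_rfl) ≫ V.2.fromSpec := by
            rw [IsAffineOpen.SpecMap_appLE_fromSpec f V.2 hB le_rfl]; rfl
      _ = Spec.map (CommRingCat.ofHom (Ideal.quotientMap _ (f.app V).hom Ideal.le_comap_map)) ≫
          Spec.map (CommRingCat.ofHom (Ideal.Quotient.mk (J.ideal V))) ≫ V.2.fromSpec := by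
            rw [← Spec.map_comp_assoc, ← Spec.map_comp_assoc, h3]
      _ = _ := by rw [← hcov]; rfl
  have e : quotMap hB ((J.ideal V).map (f.app V).hom) = pullback.lift _ h2 hc ≫ pullback.fst f J.subschemeι :=
    (pullback.lift_fst _ h2 hc).symm
  exact app_zero_of_comp _ _ _ e _ _ hb
end ChevAff
end PartE

section PartF
open AlgebraicGeometry CategoryTheory TopologicalSpace Opposite Limits
universe u
namespace ChevAff

lemma alg_denom {K L A B : Type*} [Field K] [Field L] [Algebra K L] [CommRing A] [CommRing B]
    (α : A →+* K) (β : B →+* L) (ψ : A →+* B) (hc : ∀ a, β (ψ a) = algebraMap K L (α a)) (hψ : ψ.Finite)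
    (hfrac : ∀ x : K, ∃ a b, α b ≠ 0 ∧ x * α b = α a) (l : L →ₗ[K] K) :
    ∃ d, α d ≠ 0 ∧ ∀ b, ∃ a, α d * l (β b) = α a := by
  classical
  let _ := ψ.toAlgebra
  obtain ⟨G, hG⟩ := hψ.1
  choose num den hden hnum using hfrac
  refine ⟨∏ g ∈ G, den (l (β g)), ?_, ?_⟩
  · rw [map_prod]; exact Finset.prod_ne_zero_iff.mpr fun g _ => hden _
  · intro b
    have hb : b ∈ Submodule.span A (G : Set B) := by rw [hG]; trivial
    induction hb using Submodule.span_induction with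
    | mem x hx =>
      refine ⟨(∏ g ∈ G.erase x, den (l (β g))) * num (l (β x)), ?_⟩
      rw [← Finset.prod_erase_mul _ _ hx, map_mul, map_mul, ← hnum (l (β x))]
      ring
    | zero => exact ⟨0, by simp⟩
    | add x y _ _ hx hy =>
      obtain ⟨a, ha⟩ := hx
      obtain ⟨a', ha'⟩ := hy
      exact ⟨a + a', by rw [map_add, map_add, map_add, mul_add, ha, ha']⟩
    | smul c x _ hx =>
      obtain ⟨a, ha⟩ := hx
      refine ⟨c * a, ?_⟩
      have : β (c • x) = α c • β x := by
        rw [Algebra.smul_def, map_mul, Algebra.smul_def, ← hc]; rfl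
      rw [this, map_smul, smul_eq_mul, map_mul, ← ha]
      ring

lemma alg_main {ι : Type*} [Finite ι] {K L B₀ : Type*} {A B : ι → Type*} [Field K] [Field L] [Algebra K L]
    [CommRing B₀] [∀ i, CommRing (A i)] [∀ i, CommRing (B i)]
    (α : ∀ i, A i →+* K) (β : ∀ i, B i →+* L) (ψ : ∀ i, A i →+* B i)
    (hc : ∀ i a, β i (ψ i a) = algebraMap K L (α i a)) (hψ : ∀ i, (ψ i).Finite)
    (hfrac : ∀ i, ∀ x : K, ∃ a b, α i b ≠ 0 ∧ x * α i b = α i a) 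
    (γ : B₀ →+* L) (ρ : ∀ i, B₀ →+* B i) (hγ : ∀ i b, β i (ρ i b) = γ b)
    (hfrac₀ : ∀ x : L, ∃ a b, γ b ≠ 0 ∧ x * γ b = γ a) [Algebra.IsAlgebraic K L] :
    ∃ l : L →ₗ[K] K, l 1 ≠ 0 ∧ ∀ i b, ∃ a, l (β i b) = α i a := by
  classical
  have := Fintype.ofFinite ι
  obtain ⟨l, hl⟩ := LinearMap.exists_leftInverse_of_injective (Algebra.linearMap K L)
    (LinearMap.ker_eq_bot.mpr (algebraMap K L).injective)
  have hl1 : l 1 = 1 := by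
    have := congr($hl 1)
    simpa using this
  choose d hd hd' using fun i => alg_denom (α i) (β i) (ψ i) (hc i) (hψ i) (hfrac i) l
  choose p q hq hp using fun i => hfrac₀ (algebraMap K L (α i (d i)))
  have hp0 : ∀ i, γ (p i) ≠ 0 := by
    intro i
    rw [← hp]
    exact mul_ne_zero (by simpa using hd i) (hq i)
  let e := ∏ i, p i
  have he0 : γ e ≠ 0 := by
    rw [map_prod]; exact Finset.prod_ne_zero_iff.mpr fun g _ => hp0 _
  have hex : ∃ k, l (γ e ^ (k + 1)) ≠ 0 := by
    by_contra! hcon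
    have hInt : IsIntegral K (γ e) := (Algebra.IsAlgebraic.isAlgebraic (γ e)).isIntegral
    have h0 := minpoly.coeff_zero_ne_zero hInt he0
    have h1 := minpoly.aeval K (γ e)
    rw [Polynomial.aeval_eq_sum_range, Finset.sum_range_succ'] at h1
    have h2 := congrArg l h1
    rw [map_add, map_sum, map_zero, Finset.sum_eq_zero] at h2
    · simp [hl1] at h2
      exact h0 h2
    · intro k _
      rw [map_smul, hcon, smul_zero]
  obtain ⟨k, hk⟩ := hex
  refine ⟨l.comp (LinearMap.mulLeft K (γ e ^ (k + 1))), by simpa using hk, fun i b => ?_⟩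
  have hmul : γ e ^ (k + 1) * β i b = α i (d i) • β i (ρ i (q i * (∏ m ∈ Finset.univ.erase i, p m) * e ^ k) * b) := by
    have : γ e = γ (p i) * γ (∏ m ∈ Finset.univ.erase i, p m) := by
      rw [← map_mul, Finset.mul_prod_erase _ _ (Finset.mem_univ i)]
    rw [pow_succ', map_mul, hγ, map_mul, map_mul, map_pow, Algebra.smul_def]
    nth_rewrite 1 [this]
    rw [← hp]; ring
  obtain ⟨a, ha⟩ := hd' i (ρ i (q i * (∏ m ∈ Finset.univ.erase i, p m) * e ^ k) * b)
  refine ⟨a, ?_⟩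
  rw [LinearMap.comp_apply, LinearMap.mulLeft_apply, hmul, map_smul, smul_eq_mul, ha]

lemma alg_algebraic {K L A B B₀ : Type*} [Field K] [Field L] [Algebra K L] [CommRing A] [CommRing B] [CommRing B₀]
    (α : A →+* K) (β : B →+* L) (ψ : A →+* B) (hc : ∀ a, β (ψ a) = algebraMap K L (α a)) (hψ : ψ.Finite)
    (γ : B₀ →+* L) (ρ : B₀ →+* B) (hγ : ∀ b, β (ρ b) = γ b)
    (hfrac₀ : ∀ x : L, ∃ a b, γ b ≠ 0 ∧ x * γ b = γ a) : Algebra.IsAlgebraic K L := by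
  have key : ∀ b, IsAlgebraic K (γ b) := by
    intro b
    obtain ⟨p, hp, hp'⟩ := hψ.to_isIntegral (ρ b)
    refine IsIntegral.isAlgebraic ⟨p.map α, hp.map _, ?_⟩
    rw [Polynomial.eval₂_map, ← hγ, ← (RingHom.ext hc : β.comp ψ = (algebraMap K L).comp α), ← Polynomial.hom_eval₂, hp', map_zero]
  refine ⟨fun x => ?_⟩
  obtain ⟨a, b, hb, h⟩ := hfrac₀ x
  rw [eq_div_of_mul_eq hb h, div_eq_mul_inv]
  exact (key a).mul (key b).inv

lemma stalk_frac {Y : Scheme.{u}} [IsIntegral Y] (x : Y) (hx : x = genericPoint Y) (V : Y.Opens) (hV : IsAffineOpen V)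
    (hxV : x ∈ V) (k : Y.presheaf.stalk x) : 
    ∃ a b : Γ(Y, V), Y.presheaf.germ V x hxV b ≠ 0 ∧ k * Y.presheaf.germ V x hxV b = Y.presheaf.germ V x hxV a := by
  subst hx
  have : Nonempty V := ⟨⟨_, hxV⟩⟩
  have := functionField_isFractionRing_of_isAffineOpen Y V hV
  obtain ⟨⟨a, b⟩, h⟩ := IsLocalization.surj (nonZeroDivisors Γ(Y, V)) (S := Y.functionField) k
  refine ⟨a, b, ?_, h⟩
  exact IsFractionRing.to_map_ne_zero_of_mem_nonZeroDivisors (K := Y.functionField) b.2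

lemma map_generic {X Y : Scheme.{u}} [IsIntegral X] [IsIntegral Y] (f : X ⟶ Y) [Surjective f] :
    f (genericPoint X) = genericPoint Y := by
  have := (genericPoint_spec X).image f.continuous
  rw [Set.image_univ, f.surjective.range_eq, closure_univ] at this
  exact this.eq (genericPoint_spec Y)

lemma exists_trace {X Y : Scheme.{u}} (f : X ⟶ Y) [IsFinite f] [IsAffine X] [IsIntegral X] [IsIntegral Y] [Surjective f]
    {ι : Type*} [Finite ι] [Nonempty ι] (V : ι → Y.Opens) (hV : ∀ i, IsAffineOpen (V i))
    (hξ : ∀ i, f (genericPoint X) ∈ V i) :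
    ∃ l : X.presheaf.stalk (genericPoint X) →+ Y.presheaf.stalk (f (genericPoint X)), l 1 ≠ 0 ∧
      (∀ k x, l (f.stalkMap (genericPoint X) k * x) = k * l x) ∧
      ∀ i (b : Γ(X, f ⁻¹ᵁ V i)), ∃ a : Γ(Y, V i), l (X.presheaf.germ _ _ (hξ i) b) = Y.presheaf.germ _ _ (hξ i) a := by
  have hη := map_generic f
  have hK : IsField (Y.presheaf.stalk (f (genericPoint X))) := by
    rw [hη]; exact Field.toIsField Y.functionField
  let _ : Field (Y.presheaf.stalk (f (genericPoint X))) := hK.toField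
  let _ : Field (X.presheaf.stalk (genericPoint X)) := inferInstanceAs (Field X.functionField)
  let _ : Algebra (Y.presheaf.stalk (f (genericPoint X))) (X.presheaf.stalk (genericPoint X)) := (f.stalkMap (genericPoint X)).hom.toAlgebra
  let α : ∀ i, Γ(Y, V i) →+* Y.presheaf.stalk (f (genericPoint X)) := fun i => (Y.presheaf.germ _ _ (hξ i)).hom
  let β : ∀ i, Γ(X, f ⁻¹ᵁ V i) →+* X.presheaf.stalk (genericPoint X) := fun i => (X.presheaf.germ _ _ (hξ i)).hom
  let ψ : ∀ i, Γ(Y, V i) →+* Γ(X, f ⁻¹ᵁ V i) := fun i => (f.app (V i)).hom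
  let γ : Γ(X, ⊤) →+* X.presheaf.stalk (genericPoint X) := (X.presheaf.germ ⊤ _ trivial).hom
  let ρ : ∀ i, Γ(X, ⊤) →+* Γ(X, f ⁻¹ᵁ V i) := fun i => res le_top
  have hc : ∀ i a, β i (ψ i a) = algebraMap _ _ (α i a) := fun i a => 
    (f.germ_stalkMap_apply (V i) (genericPoint X) (hξ i) a).symm
  have hψ : ∀ i, (ψ i).Finite := fun i => IsFinite.finite_app f (V i) (hV i)
  have hγ : ∀ i b, β i (ρ i b) = γ b := fun i b => X.presheaf.germ_res_apply _ _ _ _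
  have hfrac₀ := stalk_frac (genericPoint X) rfl ⊤ (isAffineOpen_top X) trivial
  have : Algebra.IsAlgebraic (Y.presheaf.stalk (f (genericPoint X))) (X.presheaf.stalk (genericPoint X)) := by
    let i : ι := Classical.arbitrary ι
    exact alg_algebraic (α i) (β i) (ψ i) (hc i) (hψ i) γ (ρ i) (hγ i) hfrac₀
  obtain ⟨l, h1, h2⟩ := alg_main α β ψ hc hψ (fun i => stalk_frac _ hη (V i) (hV i) (hξ i)) γ ρ hγ hfrac₀
  refine ⟨l.toAddMonoidHom, h1, fun k x => ?_, h2⟩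
  exact l.map_smul k x
end ChevAff
end PartF

section PartG
open AlgebraicGeometry CategoryTheory TopologicalSpace Opposite Limits
universe u
namespace ChevAff

/-- germ -/
noncomputable abbrev gm {Y : Scheme.{u}} (p : Y) {U : Y.Opens} (h : p ∈ U) : Γ(Y, U) →+* Y.presheaf.stalk p :=
  (Y.presheaf.germ U p h).hom

lemma gm_res {Y : Scheme.{u}} (p : Y) {U V : Y.Opens} (h : p ∈ V) (hle : V ≤ U) (a : Γ(Y, U)) :
    gm p h (res hle a) = gm p (hle h) a := Y.presheaf.germ_res_apply _ _ _ _

lemma gm_inj {Y : Scheme.{u}} [IsIntegral Y] (p : Y) {U : Y.Opens} (h : p ∈ U) : Function.Injective (gm p h) :=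
  germ_injective_of_isIntegral Y p h

lemma glob {Y : Scheme.{u}} [IsIntegral Y] (p : Y) {ι : Type*} (V : ι → Y.Opens) (hV : ∀ y : Y, ∃ i, y ∈ V i)
    (hp : ∀ i, p ∈ V i) (x : Y.presheaf.stalk p) (hx : ∀ i, ∃ a : Γ(Y, V i), gm p (hp i) a = x) :
    ∃ s : Γ(Y, ⊤), gm p (U := ⊤) trivial s = x ∧ ∀ i (a : Γ(Y, V i)), gm p (hp i) a = x → res le_top s = a := by
  choose a ha using hx
  obtain ⟨s, hs⟩ := glue V hV a (fun i j => by
    apply gm_inj p (show p ∈ V i ⊓ V j from ⟨hp i, hp j⟩)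
    rw [gm_res, gm_res, ha, ha])
  obtain ⟨i, -⟩ := hV p
  have : gm p (U := ⊤) trivial s = x := by
    rw [← ha i, ← hs i, gm_res]
  refine ⟨s, this, fun i b hb => ?_⟩
  apply gm_inj p (hp i)
  rw [gm_res, hb]
  exact this

lemma sub_lift {X Y : Scheme.{u}} (f : X ⟶ Y) [IsAffine X] [IsAffineHom f] (J : Y.IdealSheafData) (sbar : Γ(J.subscheme, ⊤)) :
    ∃ σ : Γ(X, ⊤), ∀ (V : Y.affineOpens) (s : Γ(Y, V)), J.subschemeι.app V s = res le_top sbar →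
      f.app V s - res le_top σ ∈ (J.ideal V).map (f.app V).hom := by
  obtain ⟨σ, hσ⟩ := (pullback.fst f J.subschemeι).app_surjective ⊤ (isAffineOpen_top X)
    (pb (pullback.snd f J.subschemeι) sbar)
  refine ⟨σ, fun V s hs => mem_map_of_pullback f J V (V.2.preimage f) _ ?_⟩
  have h1 : (pullback.fst f J.subschemeι ≫ f).app V s = res le_top (pb (pullback.snd f J.subschemeι) sbar) :=
    app_comp_eq (pullback.snd f J.subschemeι) J.subschemeι _ pullback.condition.symm V s sbar hs
  rw [comp_app_apply] at h1
  rw [map_sub, h1, app_res]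
  exact sub_eq_zero.mpr (congrArg _ hσ.symm)

section main
variable {X Y : Scheme.{u}} (f : X ⟶ Y) [IsFinite f] [IsAffine X] [IsIntegral X] [IsIntegral Y] [Surjective f]
    {ι : Type*} (V : ι → Y.Opens) (hV : ∀ i, IsAffineOpen (V i)) (hcov : ∀ y : Y, ∃ i, y ∈ V i)
    (hξ : ∀ i, f (genericPoint X) ∈ V i)
    (l : X.presheaf.stalk (genericPoint X) →+ Y.presheaf.stalk (f (genericPoint X)))
    (hl : ∀ k x, l (f.stalkMap (genericPoint X) k * x) = k * l x)
    (hl' : ∀ i (b : Γ(X, f ⁻¹ᵁ V i)), ∃ a : Γ(Y, V i), l (gm (genericPoint X) (hξ i) b) = gm _ (hξ i) a)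
    (j : Γ(Y, ⊤)) (hj : gm (f (genericPoint X)) (U := ⊤) trivial j = l 1) (hj0 : l 1 ≠ 0)

omit [IsFinite f] [IsAffine X] [IsIntegral Y] [Surjective f] in
include hl in
lemma l_app {U : Y.Opens} (hU : f (genericPoint X) ∈ U) (a : Γ(Y, U)) (x) :
    l (gm (genericPoint X) (U := f ⁻¹ᵁ U) hU (f.app U a) * x) = gm _ hU a * l x := by
  rw [← hl]
  congr 2
  exact (f.germ_stalkMap_apply U (genericPoint X) hU a).symm

lemma pb_eq {Z : Scheme.{u}} (i : Z ⟶ Y) {κ : Type*} (W : κ → Y.Opens) (hW : ∀ y : Y, ∃ i, y ∈ W i)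
    (s : Γ(Y, ⊤)) (t : Γ(Z, ⊤)) (h : ∀ k, i.app (W k) (res le_top s) = res le_top t) : pb i s = t := by
  refine Z.sheaf.eq_of_locally_eq' (fun k => i ⁻¹ᵁ W k) _ (fun k => homOfLE le_top) ?_ _ _ fun k => ?_
  · intro z _
    obtain ⟨k, hk⟩ := hW (i z)
    exact Opens.mem_iSup.mpr ⟨k, hk⟩
  · change res (i.preimage_mono le_top) (i.app ⊤ s) = res _ _
    rw [← app_res i le_top, h]

lemma mem_ofIdealTop (U : Y.affineOpens) (a : Γ(Y, U)) :
    a ∈ (Scheme.IdealSheafData.ofIdealTop (Ideal.span {j})).ideal U ↔ ∃ c, a = res le_top j * c := by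
  rw [Scheme.IdealSheafData.ofIdealTop_ideal, Ideal.map_span, Set.image_singleton, Ideal.mem_span_singleton]
  rfl

include hl hl' hj in
lemma l_map (I : Y.IdealSheafData) (i : ι) (b : Γ(X, f ⁻¹ᵁ V i))
    (hb : b ∈ ((Scheme.IdealSheafData.ofIdealTop (Ideal.span {j}) * I).ideal ⟨V i, hV i⟩).map (f.app (V i)).hom) :
    ∀ c, ∃ r ∈ I.ideal ⟨V i, hV i⟩, l (gm (genericPoint X) (U := f ⁻¹ᵁ V i) (hξ i) (c * b)) = l 1 * gm _ (hξ i) r := by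
  induction hb using Submodule.span_induction with
  | mem x hx =>
    intro c
    obtain ⟨a, ha, rfl⟩ := hx
    have ha : a ∈ (Scheme.IdealSheafData.ofIdealTop (Ideal.span {j})).ideal ⟨V i, hV i⟩ * I.ideal ⟨V i, hV i⟩ := ha
    rw [Scheme.IdealSheafData.ofIdealTop_ideal, Ideal.map_span, Set.image_singleton, Ideal.mem_span_singleton_mul] at ha
    obtain ⟨z, hz, rfl⟩ := ha
    obtain ⟨a, ha⟩ := hl' i c
    refine ⟨z * a, Ideal.mul_mem_right _ _ hz, ?_⟩
    rw [mul_comm, map_mul]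
    refine (l_app f l hl (hξ i) _ _).trans ?_
    rw [ha, map_mul, map_mul, ← mul_assoc, ← hj]
    congr 2
    exact gm_res _ _ _ _
  | zero => intro c; exact ⟨0, zero_mem _, by simp⟩
  | add x y _ _ hx hy =>
    intro c
    obtain ⟨r, hr, hr'⟩ := hx c
    obtain ⟨r', hr2, hr2'⟩ := hy c
    exact ⟨r + r', add_mem hr hr2, by rw [mul_add, map_add, map_add, map_add, hr', hr2', mul_add]⟩
  | smul c x _ hx =>
    intro d
    obtain ⟨r, hr, hr'⟩ := hx (d * c)
    exact ⟨r, hr, by rw [← hr', smul_eq_mul, mul_assoc]⟩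

include hV hcov hl hl' hj hj0 in
lemma lift_main (I : Y.IdealSheafData) 
    (h : Scheme.IdealSheafData.ofIdealTop (Ideal.span {j}) * I ≤ I)
    (sbar : Γ((Scheme.IdealSheafData.ofIdealTop (Ideal.span {j}) * I).subscheme, ⊤)) :
    ∃ s : Γ(Y, ⊤), pb I.subschemeι s = pb (Scheme.IdealSheafData.inclusion h) sbar := by
  obtain ⟨σ, hσ⟩ := sub_lift f _ sbar
  have hlift : ∀ i, ∃ s : Γ(Y, V i), (Scheme.IdealSheafData.ofIdealTop (Ideal.span {j}) * I).subschemeι.app (V i) s = res le_top sbar :=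
    fun i => Scheme.IdealSheafData.subschemeι_app_surjective _ ⟨V i, hV i⟩ _
  choose s hs using hlift
  have key : ∀ i, ∃ r ∈ I.ideal ⟨V i, hV i⟩, l (gm _ (U := ⊤) trivial σ) = l 1 * gm _ (hξ i) (s i - r) := by
    intro i
    obtain ⟨r, hr, h2⟩ := l_map f V hV hξ l hl hl' j hj I i _ (hσ ⟨V i, hV i⟩ (s i) (hs i)) 1
    refine ⟨r, hr, ?_⟩
    have h3 := l_app f l hl (hξ i) (s i) 1
    rw [mul_one] at h3
    have h4 : gm (genericPoint X) (U := f ⁻¹ᵁ V i) (hξ i) (res le_top σ) = gm _ (U := ⊤) trivial σ :=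
      gm_res _ (U := ⊤) (V := f ⁻¹ᵁ V i) (hξ i) le_top σ
    rw [one_mul, map_sub, map_sub, h3] at h2
    replace h2 := (congrArg (fun z => gm _ (hξ i) (s i) * l 1 - l z) h4.symm).trans h2
    dsimp only at h2
    rw [map_sub, mul_sub, ← h2]
    ring
  choose r hr hr' using key
  obtain ⟨i0, -⟩ := hcov (f (genericPoint X))
  obtain ⟨t, -, ht⟩ := glob (f (genericPoint X)) V hcov hξ (gm _ (hξ i0) (s i0 - r i0)) (fun i => ⟨s i - r i, by
    apply mul_left_cancel₀ hj0
    rw [← hr', ← hr']⟩)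
  refine ⟨t, pb_eq _ V hcov _ _ fun i => ?_⟩
  rw [ht i (s i - r i) (by
    apply mul_left_cancel₀ hj0
    rw [← hr', ← hr']), map_sub, (mem_ideal_iff I ⟨V i, hV i⟩ _).mpr (hr i), sub_zero]
  exact app_comp_eq _ _ _ (Scheme.IdealSheafData.inclusion_subschemeι h) (V i) (s i) sbar (hs i)

lemma gen_mem {U : Y.Opens} {y : Y} (h : y ∈ U) : f (genericPoint X) ∈ U := by
  rw [map_generic]
  exact ((genericPoint_spec Y).mem_open_set_iff U.2).mpr ⟨y, trivial, h⟩

include hj hj0 in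
lemma mul_ne_bot (I : Y.IdealSheafData) (hI : I ≠ ⊥) : Scheme.IdealSheafData.ofIdealTop (Ideal.span {j}) * I ≠ ⊥ := by
  intro h
  apply hI
  rw [eq_bot_iff]
  intro U a ha
  rw [Scheme.IdealSheafData.ideal_bot]
  refine TopCat.Presheaf.section_ext Y.sheaf U.1 a 0 fun y hy => ?_
  have hη := gen_mem f hy
  have h1 : res le_top j * a ∈ (Scheme.IdealSheafData.ofIdealTop (Ideal.span {j}) * I).ideal U :=
    Ideal.mul_mem_mul ((mem_ofIdealTop j U _).mpr ⟨1, by simp⟩) ha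
  rw [h] at h1
  have h2 : res le_top j * a = 0 := by simpa using h1
  have h3 := congrArg (gm _ hη) h2
  rw [map_mul, gm_res, map_zero, hj] at h3
  have h4 : a = 0 := gm_inj _ hη (by rw [map_zero]; exact (mul_eq_zero.mp h3).resolve_left hj0)
  exact congrArg _ h4

include hV hcov hl hl' hj hj0 hξ in
lemma pb_surj (H : ∀ J : Y.IdealSheafData, J ≠ ⊥ → IsAffine J.subscheme) (I : Y.IdealSheafData) (hI : I ≠ ⊥) :
    Function.Surjective (pb I.subschemeι) := by
  intro t
  have h : Scheme.IdealSheafData.ofIdealTop (Ideal.span {j}) * I ≤ I := fun U => Ideal.mul_le_right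
  have := H _ (mul_ne_bot f l j hj hj0 I hI)
  obtain ⟨sbar, hs⟩ := (Scheme.IdealSheafData.inclusion h).app_surjective ⊤ (isAffineOpen_top _) t
  obtain ⟨s, hs'⟩ := lift_main f V hV hcov hξ l hl hl' j hj hj0 I h sbar
  exact ⟨s, hs'.trans hs⟩

lemma h1_main (hsurj : ∀ I : Y.IdealSheafData, I ≠ ⊥ → Function.Surjective (pb I.subschemeι)) [CompactSpace Y]
    (H : ∀ J : Y.IdealSheafData, J ≠ ⊥ → IsAffine J.subscheme) (y : Y) :
    ∃ s : Γ(Y, ⊤), y ∈ Y.basicOpen s ∧ IsAffineOpen (Y.basicOpen s) := by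
  obtain ⟨y0, hy0, hcl⟩ := (isClosed_closure (s := {y})).exists_closed_singleton ⟨y, subset_closure rfl⟩
  obtain ⟨_, ⟨U, hU, rfl⟩, hyU, -⟩ := Y.isBasis_affineOpens.exists_subset_of_mem_open
    (Set.mem_univ y0) isOpen_univ
  suffices h : ∃ s : Γ(Y, ⊤), y0 ∈ Y.basicOpen s ∧ Y.basicOpen s ≤ U by
    obtain ⟨s, hs, hs'⟩ := h
    refine ⟨s, ?_, isAffineOpen_of_basicOpen_le s U hU hs'⟩
    exact (specializes_iff_mem_closure.mpr hy0).mem_open (Y.basicOpen s).2 hs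
  by_cases hUt : U = ⊤
  · subst hUt
    exact ⟨1, by simp, le_top⟩
  let C : Closeds Y := ⟨(U : Set Y)ᶜ ∪ {y0}, U.2.isClosed_compl.union hcl⟩
  have hη : genericPoint Y ∉ C := by
    rintro (h | h)
    · exact h (((genericPoint_spec Y).mem_open_set_iff U.2).mpr ⟨y0, trivial, hyU⟩)
    · apply hUt
      rw [eq_top_iff]
      rintro z -
      have h1 : z ∈ closure {genericPoint Y} := by rw [genericPoint_closure]; trivial
      rw [Set.mem_singleton_iff.mp h, hcl.closure_eq] at h1
      rw [Set.mem_singleton_iff.mp h1]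
      exact hyU
  have hsupp : (Scheme.IdealSheafData.vanishingIdeal C).support = C := by
    exact SetLike.coe_injective (Scheme.IdealSheafData.coe_support_vanishingIdeal C)
  have hI : Scheme.IdealSheafData.vanishingIdeal C ≠ ⊥ := by
    intro h
    rw [h, Scheme.IdealSheafData.support_bot] at hsupp
    apply hη
    rw [← hsupp]; trivial
  have := H _ hI
  obtain ⟨z, hz⟩ : y0 ∈ Set.range (Scheme.IdealSheafData.vanishingIdeal C).subschemeι := by
    rw [Scheme.IdealSheafData.range_subschemeι, hsupp]
    exact Or.inr rfl
  obtain ⟨g, hg, hzg⟩ := exists_mem_offIdeal ((Scheme.IdealSheafData.vanishingIdeal C).subschemeι ⁻¹ᵁ U) z (by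
    change _ ∈ U; rw [hz]; exact hyU)
  obtain ⟨s, rfl⟩ := hsurj _ hI g
  rw [mem_offIdeal, ← pre_basicOpen] at hg
  rw [← pre_basicOpen] at hzg
  refine ⟨s, hz ▸ hzg, fun w hw => ?_⟩
  by_contra hwU
  obtain ⟨x, hx⟩ : w ∈ Set.range (Scheme.IdealSheafData.vanishingIdeal C).subschemeι := by
    rw [Scheme.IdealSheafData.range_subschemeι, hsupp]
    exact Or.inl hwU
  apply hwU
  rw [← hx]
  apply hg
  change _ ∈ Y.basicOpen s
  rw [hx]; exact hw

include hcov hl hl' hj in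
lemma j_mem (S : Set Γ(Y, ⊤)) (hS : ∀ y : Y, ∃ s ∈ S, y ∈ Y.basicOpen s) : j ∈ Ideal.span S := by
  have key : ∀ b ∈ (Ideal.span S).map (pb f), ∀ c, ∃ v ∈ Ideal.span S,
      gm (f (genericPoint X)) (U := ⊤) trivial v = l (gm (genericPoint X) (U := ⊤) trivial (c * b)) := by
    intro b hb
    induction hb using Submodule.span_induction with
    | mem x hx =>
      intro c
      obtain ⟨s, hs, rfl⟩ := hx
      obtain ⟨a, ha, -⟩ := glob (f (genericPoint X)) V hcov hξ (l (gm (genericPoint X) (U := ⊤) trivial c)) (fun i => by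
        obtain ⟨a, ha⟩ := hl' i (res le_top c)
        refine ⟨a, ha.symm.trans (congrArg l ?_)⟩
        exact gm_res _ (U := ⊤) (V := f ⁻¹ᵁ V i) (hξ i) le_top c)
      refine ⟨s * a, Ideal.mul_mem_right _ _ hs, ?_⟩
      rw [mul_comm c, map_mul, map_mul, ha]
      exact (l_app f l hl (U := ⊤) trivial s _).symm
    | zero => intro c; exact ⟨0, zero_mem _, by simp⟩
    | add x y _ _ hx hy =>
      intro c
      obtain ⟨r, hr, hr'⟩ := hx c
      obtain ⟨r', hr2, hr2'⟩ := hy c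
      exact ⟨r + r', add_mem hr hr2, by rw [mul_add, map_add, map_add, map_add, hr', hr2']⟩
    | smul c x _ hx =>
      intro d
      obtain ⟨r, hr, hr'⟩ := hx (d * c)
      exact ⟨r, hr, by rw [hr', smul_eq_mul, mul_assoc]⟩
  have h1 : Ideal.span (pb f '' S) = ⊤ := by
    refine span_top_of_cover (Z := X) _ fun z => ?_
    obtain ⟨s, hs, hz⟩ := hS (f z)
    refine ⟨_, ⟨s, hs, rfl⟩, ?_⟩
    exact (pre_basicOpen f s).le hz
  rw [← Ideal.map_span] at h1
  obtain ⟨v, hv, hv'⟩ := key 1 (by rw [h1]; trivial) 1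
  rw [mul_one, map_one, ← hj] at hv'
  rwa [← gm_inj _ (U := ⊤) trivial hv']

include hV hcov hl hl' hj hj0 in
lemma h2_main (hsurj : ∀ I : Y.IdealSheafData, I ≠ ⊥ → Function.Surjective (pb I.subschemeι))
    (H : ∀ J : Y.IdealSheafData, J ≠ ⊥ → IsAffine J.subscheme)
    (S : Set Γ(Y, ⊤)) (hS : ∀ y : Y, ∃ s ∈ S, y ∈ Y.basicOpen s) : Ideal.span S = ⊤ := by
  have hjS := j_mem f V hcov hξ l hl hl' j hj S hS
  have hI : Scheme.IdealSheafData.ofIdealTop (Ideal.span {j}) ≠ ⊥ := by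
    intro h
    obtain ⟨i, -⟩ := hcov (f (genericPoint X))
    have h1 : res le_top j ∈ (Scheme.IdealSheafData.ofIdealTop (Ideal.span {j})).ideal ⟨V i, hV i⟩ :=
      (mem_ofIdealTop j _ _).mpr ⟨1, by simp⟩
    rw [h] at h1
    have h2 : res (le_top : V i ≤ ⊤) j = 0 := by simpa using h1
    have h3 := congrArg (gm _ (hξ i)) h2
    rw [gm_res, map_zero, hj] at h3
    exact hj0 h3
  have := H _ hI
  obtain ⟨u, hu, hu1⟩ := span_lift _ (hsurj _ hI) S hS
  have hc : ∀ i, ∃ c, res le_top (1 - u) = res (le_top : V i ≤ ⊤) j * c := by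
    intro i
    refine (mem_ofIdealTop j ⟨V i, hV i⟩ _).mp ((mem_ideal_iff _ ⟨V i, hV i⟩ _).mp ?_)
    have h0 : pb (Scheme.IdealSheafData.ofIdealTop (Ideal.span {j})).subschemeι (1 - u) = 0 := by
      rw [map_sub, hu1, map_one, sub_self]
    rw [app_res]
    exact (congrArg _ h0).trans (map_zero _)
  choose c hc using hc
  have hc' : ∀ i, gm (f (genericPoint X)) (U := ⊤) trivial (1 - u) = l 1 * gm _ (hξ i) (c i) := by
    intro i
    have := congrArg (gm _ (hξ i)) (hc i)
    rw [map_mul, gm_res, gm_res, hj] at this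
    exact this
  obtain ⟨i0, -⟩ := hcov (f (genericPoint X))
  obtain ⟨t, ht, -⟩ := glob (f (genericPoint X)) V hcov hξ (gm _ (hξ i0) (c i0)) (fun i => ⟨c i, by
    apply mul_left_cancel₀ hj0
    rw [← hc', ← hc']⟩)
  have : 1 - u = j * t := by
    apply gm_inj (f (genericPoint X)) (U := ⊤) trivial
    rw [hc' i0, map_mul, hj, ht]
  rw [Ideal.eq_top_iff_one, show 1 = u + t * j by linear_combination this]
  exact add_mem hu (Ideal.mul_mem_left _ _ hjS)
end main

theorem affine_of_integral {X Y : Scheme.{u}} (f : X ⟶ Y) [IsFinite f] [IsAffine X] [IsIntegral X] [IsIntegral Y] [Surjective f]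
    [CompactSpace Y] (H : ∀ J : Y.IdealSheafData, J ≠ ⊥ → IsAffine J.subscheme) : IsAffine Y := by
  have hloc : ∀ y : Y, ∃ U : Y.Opens, IsAffineOpen U ∧ y ∈ U := by
    intro y
    obtain ⟨_, ⟨U, hU, rfl⟩, hyU, -⟩ := Y.isBasis_affineOpens.exists_subset_of_mem_open (Set.mem_univ y) isOpen_univ
    exact ⟨U, hU, hyU⟩
  choose U hU hyU using hloc
  obtain ⟨T, hT⟩ := isCompact_univ.elim_finite_subcover (fun y => (U y : Set Y)) (fun y => (U y).2)
    (fun y _ => Set.mem_iUnion.mpr ⟨y, hyU y⟩)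
  let V : T → Y.Opens := fun y => U y.1
  have hcov : ∀ y : Y, ∃ i, y ∈ V i := by
    intro y
    obtain ⟨i, hi, h⟩ := Set.mem_iUnion₂.mp (hT (Set.mem_univ y))
    exact ⟨⟨i, hi⟩, h⟩
  have hV : ∀ i, IsAffineOpen (V i) := fun i => hU _
  have hξ : ∀ i, f (genericPoint X) ∈ V i := fun i => gen_mem f (hyU i.1)
  have : Nonempty T := by
    obtain ⟨i, -⟩ := hcov (f (genericPoint X))
    exact ⟨i⟩
  obtain ⟨l, hj0, hl, hl'⟩ := exists_trace f V hV hξ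
  obtain ⟨j, hj, -⟩ := glob (f (genericPoint X)) V hcov hξ (l 1) (fun i => by
    obtain ⟨a, ha⟩ := hl' i 1
    refine ⟨a, ha.symm.trans ?_⟩
    congr 1
    exact map_one (gm (genericPoint X) (U := f ⁻¹ᵁ V i) (hξ i)))
  have hs := pb_surj f V hV hcov hξ l hl hl' j hj hj0 H
  exact crit Y (h1_main hs H) (h2_main f V hV hcov hξ l hl hl' j hj hj0 hs H)
end ChevAff
end PartG

section PartH
open AlgebraicGeometry CategoryTheory TopologicalSpace Opposite Limits
universe u
namespace ChevAff

/-- the diagram of closed subschemes -/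
noncomputable def chainD {Y : Scheme.{u}} (c : Set Y.IdealSheafData) : (c : Type u)ᵒᵖ ⥤ Scheme.{u} where
  obj I := I.unop.1.subscheme
  map {I J} h := Scheme.IdealSheafData.inclusion (I := J.unop.1) (J := I.unop.1) h.unop.le
  map_id I := by
    rw [← cancel_mono (Scheme.IdealSheafData.subschemeι _), Scheme.IdealSheafData.inclusion_subschemeι]; simp
  map_comp f g := by simp

/-- cone -/
noncomputable def chainCone {Y : Scheme.{u}} (c : Set Y.IdealSheafData) : Cone (chainD c) where
  pt := (sSup c).subscheme
  π := { app := fun I => Scheme.IdealSheafData.inclusion (le_sSup I.unop.2)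
         naturality := fun I J h => by
          simp [chainD] }

lemma cone_cond {Y : Scheme.{u}} {c : Set Y.IdealSheafData} (s : Cone (chainD c)) {I J : (c : Type u)ᵒᵖ} (h : I ⟶ J) :
    s.π.app I ≫ I.unop.1.subschemeι = s.π.app J ≫ J.unop.1.subschemeι := by
  refine Eq.trans ?_ (congrArg (· ≫ J.unop.1.subschemeι) (s.w h))
  refine Eq.trans ?_ (Category.assoc (s.π.app I) ((chainD c).map h) J.unop.1.subschemeι).symm
  refine congrArg (s.π.app I ≫ ·) ?_
  exact (Scheme.IdealSheafData.inclusion_subschemeι (I := J.unop.1) (J := I.unop.1) h.unop.le).symm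

lemma lift_fac' {Y : Scheme.{u}} {I J : Y.IdealSheafData} (h : J ≤ I) (A : Scheme.{u}) (g : A ⟶ Y)
    (hk : I.subschemeι.ker ≤ g.ker) (p : A ⟶ J.subscheme) (hp : p ≫ J.subschemeι = g) :
    IsClosedImmersion.lift I.subschemeι g hk ≫ Scheme.IdealSheafData.inclusion h = p := by
  rw [← cancel_mono J.subschemeι, Category.assoc, Scheme.IdealSheafData.inclusion_subschemeι,
    IsClosedImmersion.lift_fac, hp]

lemma lift_uniq' {A Y : Scheme.{u}} {I J : Y.IdealSheafData} (h : J ≤ I) (m : A ⟶ I.subscheme) (p : A ⟶ J.subscheme)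
    (hm : m ≫ Scheme.IdealSheafData.inclusion h = p) (hk : I.subschemeι.ker ≤ (p ≫ J.subschemeι).ker) :
    m = IsClosedImmersion.lift I.subschemeι (p ≫ J.subschemeι) hk := by
  rw [← cancel_mono I.subschemeι, IsClosedImmersion.lift_fac, ← hm, Category.assoc,
    Scheme.IdealSheafData.inclusion_subschemeι]

lemma chainLimit {Y : Scheme.{u}} (c : Set Y.IdealSheafData) (hc : IsChain (· ≤ ·) c) (I0 : Y.IdealSheafData) (h0 : I0 ∈ c) :
    Nonempty (IsLimit (chainCone c)) := by
  have hind : ∀ (s : Cone (chainD c)) (I J : (c : Type u)ᵒᵖ), 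
      s.π.app I ≫ I.unop.1.subschemeι = s.π.app J ≫ J.unop.1.subschemeι := by
    intro s I J
    rcases hc.total I.unop.2 J.unop.2 with h | h
    · exact (cone_cond s (I := J) (J := I) (homOfLE (show I.unop ≤ J.unop from h)).op).symm
    · exact cone_cond s (I := I) (J := J) (homOfLE (show J.unop ≤ I.unop from h)).op
  have hker : ∀ s : Cone (chainD c), (sSup c).subschemeι.ker ≤ (s.π.app (op ⟨I0, h0⟩) ≫ I0.subschemeι).ker := by
    intro s
    rw [Scheme.IdealSheafData.ker_subschemeι]
    refine sSup_le fun J hJ => ?_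
    have := hind s (op ⟨I0, h0⟩) (op ⟨J, hJ⟩)
    refine le_trans ?_ (congrArg Scheme.Hom.ker this).ge
    refine le_trans ?_ (Scheme.Hom.le_ker_comp _ _)
    exact (Scheme.IdealSheafData.ker_subschemeι J).ge
  refine ⟨{ lift := fun s => IsClosedImmersion.lift (X := (sSup c).subscheme) (Y := s.pt) (sSup c).subschemeι _ (hker s), fac := fun s J => ?_, uniq := fun s m hm => ?_ }⟩
  · exact lift_fac' (le_sSup J.unop.2) _ _ (hker s) (s.π.app J) (hind s J (op ⟨I0, h0⟩))
  · exact lift_uniq' (le_sSup h0) m _ (hm (op ⟨I0, h0⟩)) (hker s)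

lemma cpt_sub {Z Y : Scheme.{u}} (i : Z ⟶ Y) [IsClosedImmersion i] [CompactSpace Y] : CompactSpace Z := by
  exact i.isClosedEmbedding.compactSpace

lemma qs_sub {Z Y : Scheme.{u}} (i : Z ⟶ Y) [IsClosedImmersion i] [QuasiSeparatedSpace Y] : QuasiSeparatedSpace Z := 
  quasiSeparatedSpace_of_quasiSeparated i

lemma chain_sup {Y : Scheme.{u}} [CompactSpace Y] [QuasiSeparatedSpace Y] (c : Set Y.IdealSheafData) (hc : IsChain (· ≤ ·) c) (I0 : Y.IdealSheafData) (h0 : I0 ∈ c)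
    (h : IsAffine (sSup c).subscheme) : ∃ I ∈ c, IsAffine I.subscheme := by
  obtain ⟨hl⟩ := chainLimit c hc I0 h0
  have : Nonempty c := ⟨⟨I0, h0⟩⟩
  have : IsDirectedOrder c := directedOn_iff_isDirectedOrder.mp hc.directedOn
  have (i j : (c : Type u)ᵒᵖ) (f : i ⟶ j) : IsAffineHom ((chainD c).map f) := by
    have : IsClosedImmersion ((chainD c).map f) := by dsimp [chainD]; infer_instance
    infer_instance
  have (i : (c : Type u)ᵒᵖ) : CompactSpace ((chainD c).obj i) := cpt_sub (Z := i.unop.1.subscheme) i.unop.1.subschemeι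
  have (i : (c : Type u)ᵒᵖ) : QuasiSeparatedSpace ((chainD c).obj i) := qs_sub (Z := i.unop.1.subscheme) i.unop.1.subschemeι
  have : IsAffine (chainCone c).pt := h
  obtain ⟨I, hI⟩ := Scheme.exists_isAffine_of_isLimit (chainD c) (chainCone c) hl
  exact ⟨I.unop.1, I.unop.2, hI⟩

lemma eq_bot_of_isIso {Y : Scheme.{u}} (I : Y.IdealSheafData) [IsIso I.subschemeι] : I = ⊥ := by
  rw [← I.ker_subschemeι]
  simp

lemma exists_maximal {Y : Scheme.{u}} [CompactSpace Y] [QuasiSeparatedSpace Y] (h : ¬ IsAffine Y) :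
    ∃ I : Y.IdealSheafData, ¬ IsAffine I.subscheme ∧ 
      ∀ J : I.subscheme.IdealSheafData, J ≠ ⊥ → IsAffine J.subscheme := by
  obtain ⟨m, -, hm⟩ := zorn_le_nonempty₀ {I : Y.IdealSheafData | ¬ IsAffine I.subscheme} (fun c hcs hc I0 h0 => by
    refine ⟨sSup c, fun h => ?_, fun z hz => le_sSup hz⟩
    obtain ⟨I, hI, hI'⟩ := chain_sup c hc I0 h0 h
    exact hcs hI hI') ⊥ (fun h' => h (.of_isIso (inv (⊥ : Y.IdealSheafData).subschemeι)))
  refine ⟨m, hm.1, fun J hJ => ?_⟩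
  by_contra hna
  apply hJ
  have hle : m ≤ (J.subschemeι ≫ m.subschemeι).ker := 
    le_trans (m.ker_subschemeι).ge (Scheme.Hom.le_ker_comp _ _)
  have hP : ¬ IsAffine (J.subschemeι ≫ m.subschemeι).ker.subscheme := by
    intro h
    apply hna
    let k := IsClosedImmersion.lift (J.subschemeι ≫ m.subschemeι).ker.subschemeι (J.subschemeι ≫ m.subschemeι)
      (Scheme.IdealSheafData.ker_subschemeι _).le
    have hk : k ≫ (J.subschemeι ≫ m.subschemeι).ker.subschemeι = J.subschemeι ≫ m.subschemeι :=
      IsClosedImmersion.lift_fac _ _ _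
    have h1 : IsClosedImmersion (k ≫ (J.subschemeι ≫ m.subschemeι).ker.subschemeι) := by
      rw [hk]; infer_instance
    have h2 : IsClosedImmersion k := IsClosedImmersion.of_comp _ (J.subschemeι ≫ m.subschemeι).ker.subschemeι
    exact isAffine_of_isAffineHom k
  have hge := hm.2 hP hle
  let k := IsClosedImmersion.lift (J.subschemeι ≫ m.subschemeι) m.subschemeι (hge.trans m.ker_subschemeι.ge)
  have hk : k ≫ J.subschemeι = 𝟙 _ := by
    rw [← cancel_mono m.subschemeι, Category.assoc, Category.id_comp]
    exact IsClosedImmersion.lift_fac _ _ _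
  have hk' : J.subschemeι ≫ k = 𝟙 _ := by
    rw [← cancel_mono J.subschemeι, Category.assoc, hk, Category.id_comp, Category.comp_id]
  have : IsIso J.subschemeι := ⟨k, hk', hk⟩
  exact eq_bot_of_isIso J
end ChevAff
end PartH

section PartI
open AlgebraicGeometry CategoryTheory TopologicalSpace Opposite Limits
universe u
namespace ChevAff

/-- Final reduction: the integral case with arbitrary affine cover. -/
lemma core_integral {X Y : Scheme.{u}} (f : X ⟶ Y) [IsFinite f] [IsAffine X] [Surjective f] [IsIntegral Y] [CompactSpace Y]
    (H : ∀ J : Y.IdealSheafData, J ≠ ⊥ → IsAffine J.subscheme) : IsAffine Y := by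
  obtain ⟨ξ, hξ⟩ := f.surjective (genericPoint Y)
  let p : PrimeSpectrum Γ(X, ⊤) := X.isoSpec.hom ξ
  have hp : p.asIdeal.IsPrime := p.2
  let φ : Γ(X, ⊤) ⟶ CommRingCat.of (Γ(X, ⊤) ⧸ p.asIdeal) := CommRingCat.ofHom (Ideal.Quotient.mk p.asIdeal)
  have hcl : IsClosedImmersion (Spec.map φ) := IsClosedImmersion.spec_of_surjective _ Ideal.Quotient.mk_surjective
  have hInt : IsIntegral (Spec (CommRingCat.of (Γ(X, ⊤) ⧸ p.asIdeal))) := by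
    rw [affine_isIntegral_iff]
    exact Ideal.Quotient.isDomain p.asIdeal
  let g := Spec.map φ ≫ X.isoSpec.inv ≫ f
  have hfin : IsFinite g := by
    have : IsFinite (Spec.map φ) := inferInstance
    infer_instance
  have hs : Surjective g := by
    constructor
    rw [← Set.range_eq_univ, ← g.isClosedMap.isClosed_range.closure_eq, Set.eq_univ_iff_forall]
    intro y
    have h1 : genericPoint Y ∈ Set.range g := by
      have h2 : p ∈ Set.range (Spec.map φ) := by
        have : Set.range (Spec.map φ) = PrimeSpectrum.zeroLocus (RingHom.ker (Ideal.Quotient.mk p.asIdeal)) :=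
          range_comap_of_surjective _ (Ideal.Quotient.mk p.asIdeal) Ideal.Quotient.mk_surjective
        rw [this, Ideal.mk_ker]
        exact le_refl p.asIdeal
      obtain ⟨q, hq⟩ := h2
      refine ⟨q, ?_⟩
      rw [← hξ]
      simp only [g, Scheme.Hom.comp_apply]
      rw [hq]
      have h4 : X.isoSpec.inv (X.isoSpec.hom ξ) = ξ := by
        rw [← Scheme.Hom.comp_apply, Iso.hom_inv_id]; rfl
      exact congrArg f h4
    have h3 : closure {genericPoint Y} ⊆ closure (Set.range g) := closure_mono (Set.singleton_subset_iff.mpr h1)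
    rw [genericPoint_closure] at h3
    exact h3 trivial
  exact affine_of_integral g H

section prime
variable {Y : Scheme.{u}} [CompactSpace Y] [QuasiSeparatedSpace Y] [Nonempty Y]
  (hprime : ∀ I J : Y.IdealSheafData, I * J = ⊥ → I = ⊥ ∨ J = ⊥)

lemma ker_opens_zero (U : Y.Opens) (hU : IsAffineOpen U) (V : Y.affineOpens) (a : Γ(Y, V)) :
    a ∈ U.ι.ker.ideal V ↔ U.ι.app V a = 0 := by
  have : CompactSpace U := isCompact_iff_compactSpace.mp hU.isCompact
  have : QuasiCompact U.ι := quasiCompact_of_compactSpace U.ι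
  rw [Scheme.Hom.ker_apply]
  rfl

lemma top_ne_bot' : (⊤ : Y.IdealSheafData) ≠ ⊥ := by
  intro h
  have := congrArg Scheme.IdealSheafData.support h
  rw [Scheme.IdealSheafData.support_top, Scheme.IdealSheafData.support_bot] at this
  obtain ⟨y⟩ := ‹Nonempty Y›
  have h1 : y ∈ (⊤ : Closeds Y) := trivial
  rw [← this] at h1
  exact h1

lemma opens_app_zero (U W : Y.Opens) (a : Γ(Y, W)) : U.ι.app W a = 0 ↔ res (inf_le_right : U ⊓ W ≤ W) a = 0 := by
  have key : ∀ (V V' : Y.Opens) (e : V = V') (h : V ≤ W) (h' : V' ≤ W), res h a = 0 ↔ res h' a = 0 := by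
    rintro V _ rfl h h'
    rfl
  have e : U.ι ''ᵁ U.ι ⁻¹ᵁ W = U ⊓ W := by
    rw [Scheme.Hom.image_preimage_eq_opensRange_inf, Scheme.Opens.opensRange_ι]
  exact key _ _ e (e.le.trans inf_le_right) inf_le_right

include hprime in
lemma exists_dense : ∃ U : Y.Opens, IsAffineOpen U ∧ ∀ (W : Y.Opens) (a : Γ(Y, W)), res (inf_le_right : U ⊓ W ≤ W) a = 0 → a = 0 := by
  classical
  have hloc : ∀ y : Y, ∃ U : Y.Opens, IsAffineOpen U ∧ y ∈ U := by
    intro y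
    obtain ⟨_, ⟨U, hU, rfl⟩, hyU, -⟩ := Y.isBasis_affineOpens.exists_subset_of_mem_open (Set.mem_univ y) isOpen_univ
    exact ⟨U, hU, hyU⟩
  choose U hU hyU using hloc
  obtain ⟨T, hT⟩ := isCompact_univ.elim_finite_subcover (fun y => (U y : Set Y)) (fun y => (U y).2)
    (fun y _ => Set.mem_iUnion.mpr ⟨y, hyU y⟩)
  have h1 : T.inf (fun y => (U y).ι.ker) = ⊥ := by
    rw [eq_bot_iff]
    intro V a ha
    rw [Scheme.IdealSheafData.ideal_bot]
    refine TopCat.Presheaf.section_ext Y.sheaf V.1 a 0 fun y hy => ?_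
    obtain ⟨i, hi, hyi⟩ := Set.mem_iUnion₂.mp (hT (Set.mem_univ y))
    have h2 : a ∈ (U i).ι.ker.ideal V := (Finset.inf_le hi : T.inf (fun y => (U y).ι.ker) ≤ _) V ha
    have h3 := (opens_app_zero _ _ _).mp ((ker_opens_zero _ (hU i) V a).mp h2)
    have h4 := congrArg (gm y (show y ∈ U i ⊓ V.1 from ⟨hyi, hy⟩)) h3
    rw [gm_res, map_zero] at h4
    exact h4.trans (map_zero (gm y hy)).symm
  have h2 : ∀ T : Finset Y, T.inf (fun y => (U y).ι.ker) = ⊥ → ∃ y ∈ T, (U y).ι.ker = ⊥ := by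
    intro T
    induction T using Finset.induction_on with
    | empty => intro h; exact absurd h top_ne_bot'
    | insert y T hy ih =>
      intro h
      rw [Finset.inf_insert] at h
      rcases hprime (U y).ι.ker (T.inf (fun y => (U y).ι.ker)) (by
        rw [eq_bot_iff, ← h]; intro V; exact Ideal.mul_le_inf) with h | h
      · exact ⟨y, by simp, h⟩
      · obtain ⟨z, hz, h'⟩ := ih h
        exact ⟨z, by simp [hz], h'⟩
  obtain ⟨y, -, hy⟩ := h2 T h1
  refine ⟨U y, hU y, fun W a ha => ?_⟩
  refine sec_ext _ _ fun V hV hVW => ?_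
  have h3 : res hVW a ∈ (U y).ι.ker.ideal ⟨V, hV⟩ := by
    refine (ker_opens_zero _ (hU y) ⟨V, hV⟩ _).mpr ((opens_app_zero _ _ _).mpr ?_)
    have := congrArg (res (inf_le_inf_left (U y) hVW)) ha
    rw [res_res, map_zero] at this
    rw [res_res]
    exact this
  rw [hy] at h3
  rw [map_zero]
  simpa using h3

lemma eq_bot_of_dense (U : Y.Opens) (hU : IsAffineOpen U) (h : ∀ (W : Y.Opens) (a : Γ(Y, W)), res (inf_le_right : U ⊓ W ≤ W) a = 0 → a = 0)
    (I : Y.IdealSheafData) (hI : I.ideal ⟨U, hU⟩ = ⊥) : I = ⊥ := by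
  rw [eq_bot_iff]
  intro V a ha
  rw [Scheme.IdealSheafData.ideal_bot]
  refine h _ _ ?_
  refine sec_ext _ _ fun W hW hWV => ?_
  rw [res_res, map_zero]
  have h1 : W ≤ V.1 := hWV.trans inf_le_right
  have h2 : W ≤ U := hWV.trans inf_le_left
  have h3 : res h1 a ∈ I.ideal ⟨W, hW⟩ := by
    rw [← I.map_ideal (U := ⟨W, hW⟩) (V := V) h1]
    exact Ideal.mem_map_of_mem _ ha
  rw [← I.map_ideal (U := ⟨W, hW⟩) (V := ⟨U, hU⟩) h2, hI, Ideal.map_bot] at h3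
  exact h3

/-- extension of a principal ideal -/
noncomputable abbrev extI (U : Y.Opens) (hU : IsAffineOpen U) (a : Γ(Y, U)) : Y.IdealSheafData :=
  (quotMap hU (Ideal.span {a})).ker

lemma extI_ideal (U : Y.Opens) (hU : IsAffineOpen U) (a : Γ(Y, U)) : 
    (extI U hU a).ideal ⟨U, hU⟩ = Ideal.span {a} := by
  have : QuasiCompact (quotMap hU (Ideal.span {a})) := quasiCompact_of_compactSpace _
  rw [extI, Scheme.Hom.ker_apply]
  ext b
  exact quotMap_app_eq_zero hU _ b

include hprime in
lemma integral_of_prime : IsIntegral Y := by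
  obtain ⟨U, hU, h⟩ := exists_dense hprime
  have hz : ∀ a b : Γ(Y, U), a * b = 0 → a = 0 ∨ b = 0 := by
    intro a b hab
    have h1 : extI U hU a * extI U hU b = ⊥ := by
      apply eq_bot_of_dense U hU h
      change (extI U hU a).ideal ⟨U, hU⟩ * (extI U hU b).ideal ⟨U, hU⟩ = ⊥
      rw [extI_ideal, extI_ideal, Ideal.span_singleton_mul_span_singleton, hab]
      simp
    have h2 : ∀ c, extI U hU c = ⊥ → c = 0 := by
      intro c hc
      have := extI_ideal U hU c
      rw [hc, Scheme.IdealSheafData.ideal_bot] at this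
      exact Ideal.span_singleton_eq_bot.mp this.symm
    exact (hprime _ _ h1).imp (h2 a) (h2 b)
  have hne : ∀ W : Y.Opens, (W : Set Y).Nonempty → ((U ⊓ W : Y.Opens) : Set Y).Nonempty := by
    intro W ⟨y, hy⟩
    by_contra hemp
    rw [Set.not_nonempty_iff_eq_empty] at hemp
    have h1 : (1 : Γ(Y, W)) = 0 := by
      refine h W 1 ?_
      refine TopCat.Presheaf.section_ext Y.sheaf (U ⊓ W) _ _ fun y hy => ?_
      exact absurd (show y ∈ ((U ⊓ W : Y.Opens) : Set Y) from hy) (by rw [hemp]; exact id)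
    have := congrArg (gm y hy) h1
    rw [map_one, map_zero] at this
    exact one_ne_zero this
  obtain ⟨u, hu, -⟩ := hne ⊤ ⟨Classical.arbitrary Y, trivial⟩
  have : Nontrivial Γ(Y, U) := ⟨1, 0, fun h0 => by
    have := congrArg (gm u hu) h0
    rw [map_one, map_zero] at this
    exact one_ne_zero this⟩
  have : NoZeroDivisors Γ(Y, U) := ⟨fun {a b} => hz a b⟩
  have : IsDomain Γ(Y, U) := NoZeroDivisors.to_isDomain _
  have : IsAffine U := hU
  have : IsDomain Γ(U, ⊤) := U.topIso.commRingCatIsoToRingEquiv.toMulEquiv.isDomain _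
  have : Nonempty U := ⟨⟨u, hu⟩⟩
  have hUi : IsIntegral U := isIntegral_of_isAffine_of_isDomain _
  refine ⟨inferInstance, fun W hW => ?_⟩
  obtain ⟨w, hwU, hwW⟩ := hne W ⟨hW.some.1, hW.some.2⟩
  have : Nonempty (U.ι ⁻¹ᵁ W) := ⟨⟨⟨w, hwU⟩, hwW⟩⟩
  have : IsDomain Γ(U, U.ι ⁻¹ᵁ W) := inferInstance
  refine Function.Injective.isDomain (U.ι.app W).hom ?_
  rw [injective_iff_map_eq_zero]
  intro a ha
  exact h W a ((opens_app_zero _ _ _).mp ha)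
end prime

theorem core {X Y : Scheme.{u}} (f : X ⟶ Y) [IsFinite f] [IsAffine X] [Surjective f] [CompactSpace Y] [QuasiSeparatedSpace Y]
    (H : ∀ J : Y.IdealSheafData, J ≠ ⊥ → IsAffine J.subscheme) : IsAffine Y := by
  by_contra hna
  have hne : Nonempty Y := by
    by_contra h
    rw [not_nonempty_iff] at h
    exact hna isAffine_of_isEmpty
  have hsq : ∀ I : Y.IdealSheafData, I * I = ⊥ → I = ⊥ := by
    intro I hI
    by_contra h
    have := H I h
    exact hna (affine_of_mul_self_eq_bot I hI)
  have hprime : ∀ I J : Y.IdealSheafData, I * J = ⊥ → I = ⊥ ∨ J = ⊥ := by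
    intro I J hIJ
    by_contra! h
    have h1 := H I h.1
    have h2 := H J h.2
    refine hna (affine_of_union I J (hsq _ ?_))
    rw [eq_bot_iff, ← hIJ]
    intro V
    exact Ideal.mul_mono inf_le_left inf_le_right
  have := integral_of_prime hprime
  exact hna (core_integral f H)

theorem main {X Y : Scheme.{u}} (f : X ⟶ Y) [IsFinite f] [IsAffine X] [Surjective f] [QuasiSeparatedSpace Y] : IsAffine Y := by
  have : CompactSpace Y := f.surjective.compactSpace f.continuous
  by_contra hna
  obtain ⟨I, hI, H⟩ := exists_maximal hna
  have := cpt_sub I.subschemeι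
  have := qs_sub I.subschemeι
  have : IsAffine (pullback f I.subschemeι) := isAffine_of_isAffineHom (pullback.fst f I.subschemeι)
  exact hI (core (pullback.snd f I.subschemeι) H)

end ChevAff
end PartI

/-- Chevalley's affineness theorem: Let `f : X ⟶ Y` be a finite surjective
morphism of schemes with `Y` quasi-separated.  If `X` is affine then `Y` is affine. -/
theorem isAffine_of_isFinite_surjective
    {X Y : AlgebraicGeometry.Scheme} (f : X ⟶ Y) [IsFinite f]
    (hsurj : Function.Surjective f.base) [QuasiSeparatedSpace Y]
    [IsAffine X] : IsAffine Y := by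
  have : AlgebraicGeometry.Surjective f := ⟨hsurj⟩
  exact ChevAff.main f
end

section
/- Let X be a scheme whose reduction X_red is an affine scheme. Then X is an affine scheme. -/
open AlgebraicGeometry

section Aux

open Polynomial CategoryTheory TopologicalSpace Opposite

lemma aux_one_side {R C : Type*} [CommRing R] [CommRing C] [Algebra R C] (b : R) (b' : C)
    [IsLocalization.Away b C] (d : C) (hd : IsNilpotent d) (h : algebraMap R C b + b' = 1 + d) :
    ∃ M : ℕ, ∀ i, M ≤ i → ∀ (l : ℕ) (q : ℤ[X]),
      ∃ e : R, IsNilpotent e ∧ algebraMap R C e = algebraMap R C b ^ i * b' ^ l * aeval d (X * q) := by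
  classical
  have key : ∀ y : C, IsNilpotent y → ∃ M : ℕ, ∀ i, M ≤ i →
      ∃ e : R, IsNilpotent e ∧ algebraMap R C e = algebraMap R C b ^ i * y := by
    rintro y ⟨k, hk⟩
    obtain ⟨m, x, hx⟩ := IsLocalization.Away.surj b y
    have : algebraMap R C (x ^ k) = algebraMap R C 0 := by
      rw [map_pow, ← hx, mul_pow, hk]; simp
    obtain ⟨n, hn⟩ := IsLocalization.Away.exists_of_eq (S := C) b this
    refine ⟨m + 1, fun i hi => ⟨b ^ (i - m) * x, ⟨k + n + 1, ?_⟩, ?_⟩⟩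
    · obtain ⟨j, hj⟩ : ∃ j, i - m = j + 1 := ⟨i - m - 1, by omega⟩
      rw [hj, mul_zero] at *
      calc (b ^ (j + 1) * x) ^ (k + n + 1)
          = (b ^ n * x ^ k) * (b ^ (j * (k + n + 1) + k + 1) * x ^ (n + 1)) := by ring
        _ = 0 := by rw [hn, zero_mul]
    · rw [map_mul, ← hx, map_pow]
      obtain ⟨j, rfl⟩ : ∃ j, i = m + j := ⟨i - m, by omega⟩
      rw [Nat.add_sub_cancel_left]; ring
  obtain ⟨n, hn⟩ := hd
  have hd : IsNilpotent d := ⟨n, hn⟩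
  choose M hM using fun t : ℕ => key (d ^ (t + 1)) (hd.pow_succ t)
  refine ⟨(Finset.range n).sup M, fun i hi l => ?_⟩
  induction l with
  | zero =>
    intro q
    induction q using Polynomial.induction_on' with
    | add p q hp hq =>
      obtain ⟨e, he, h1⟩ := hp
      obtain ⟨e', he', h1'⟩ := hq
      refine ⟨e + e', (Commute.all e e').isNilpotent_add he he', ?_⟩
      rw [map_add, h1, h1', mul_add, map_add]; ring
    | monomial t a =>
      by_cases ht : t < n
      · obtain ⟨e, he, h1⟩ := hM t i ((Finset.le_sup (Finset.mem_range.2 ht)).trans hi)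
        refine ⟨a * e, (Commute.all _ _).isNilpotent_mul_left he, ?_⟩
        rw [map_mul, h1, map_mul, aeval_monomial, aeval_X]
        simp; ring
      · refine ⟨0, .zero, ?_⟩
        have : d ^ (t + 1) = 0 := pow_eq_zero_of_le (Nat.le_succ_of_le (not_lt.1 ht)) hn
        simp [aeval_monomial, this]
  | succ l ih =>
    intro q
    obtain ⟨e, he, h1⟩ := ih ((1 + X) * q)
    obtain ⟨e', he', h1'⟩ := ih q
    refine ⟨e - b * e', (Commute.all _ _).isNilpotent_sub he
      ((Commute.all _ _).isNilpotent_mul_left he'), ?_⟩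
    have hb : b' = 1 + d - algebraMap R C b := by rw [← h]; ring
    rw [map_sub, map_mul, h1, h1', pow_succ]
    simp only [map_mul, map_add, aeval_X, map_one]
    linear_combination (-(algebraMap R C) b ^ i * b' ^ l * (d * aeval d q)) * hb

lemma aux_split {R S C : Type*} [CommRing R] [CommRing S] [CommRing C] [Algebra R C] [Algebra S C]
    (b : R) (b' : S) [IsLocalization.Away b C] [IsLocalization.Away b' C] (d : C)
    (hd : IsNilpotent d) (h : algebraMap R C b + algebraMap S C b' = 1 + d) :
    ∃ (e : R) (e' : S), IsNilpotent e ∧ IsNilpotent e' ∧ algebraMap R C e + algebraMap S C e' = d := by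
  obtain ⟨M, hM⟩ := aux_one_side b (algebraMap S C b') d hd h
  obtain ⟨M', hM'⟩ := aux_one_side b' (algebraMap R C b) d hd (by rw [← h, add_comm])
  obtain ⟨n, hn⟩ := hd
  set p : ℤ[X] := ∑ i ∈ Finset.range n, (-X) ^ i with hp
  have hpd : aeval d p * (1 + d) = 1 := by
    have := geom_sum_mul (-d) n
    simp only [hp, map_sum, map_pow, map_neg, aeval_X]
    rw [neg_pow d, hn, mul_zero] at this
    linear_combination -this
  have hsum : d = ∑ m ∈ Finset.range (M + M' + 1), algebraMap R C b ^ m *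
      algebraMap S C b' ^ (M + M' - m) * ((M + M').choose m : C) *
        aeval d (X * p ^ (M + M')) := by
    rw [← Finset.sum_mul, ← add_pow, h, map_mul, aeval_X, map_pow]
    calc d = d * (aeval d p * (1 + d)) ^ (M + M') := by rw [hpd]; simp
      _ = _ := by rw [mul_pow]; ring
  have : ∀ s : Finset ℕ, ∃ (e : R) (e' : S), IsNilpotent e ∧ IsNilpotent e' ∧
      algebraMap R C e + algebraMap S C e' = ∑ m ∈ s, algebraMap R C b ^ m *
      algebraMap S C b' ^ (M + M' - m) * ((M + M').choose m : C) *
        aeval d (X * p ^ (M + M')) := by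
    intro s
    induction s using Finset.induction_on with
    | empty => exact ⟨0, 0, .zero, .zero, by simp⟩
    | insert m s hm ih =>
      obtain ⟨e, e', he, he', h1⟩ := ih
      rw [Finset.sum_insert hm, ← h1]
      by_cases hmM : M ≤ m
      · obtain ⟨x, hx, h2⟩ := hM m hmM (M + M' - m) (p ^ (M + M'))
        refine ⟨(M + M').choose m * x + e, e', (Commute.all _ _).isNilpotent_add
          ((Commute.all _ _).isNilpotent_mul_left hx) he, he', ?_⟩
        rw [map_add, map_mul, h2, map_natCast]; ring
      · obtain ⟨x, hx, h2⟩ := hM' (M + M' - m) (by omega) m (p ^ (M + M'))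
        refine ⟨e, (M + M').choose m * x + e', he, (Commute.all _ _).isNilpotent_add
          ((Commute.all _ _).isNilpotent_mul_left hx) he', ?_⟩
        rw [map_add, map_mul, h2, map_natCast]; ring
  obtain ⟨e, e', he, he', h1⟩ := this (Finset.range (M + M' + 1))
  exact ⟨e, e', he, he', h1.trans hsum.symm⟩

universe u

lemma aux_preimage_inj {X Z : Scheme.{u}} (f : Z ⟶ X) (hsurj : Function.Surjective f.base)
    {U V : X.Opens} (h : f ⁻¹ᵁ U = f ⁻¹ᵁ V) : U = V := by
  ext x
  obtain ⟨z, rfl⟩ := hsurj x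
  exact (SetLike.ext_iff.1 h z)

lemma aux_nilp {X Z : Scheme.{u}} (f : Z ⟶ X) (hsurj : Function.Surjective f.base)
    {U : X.Opens} (hU : IsAffineOpen U) (x : Γ(X, U)) (hx : f.app U x = 0) : IsNilpotent x := by
  rw [Scheme.isNilpotent_iff_basicOpen_eq_bot_of_isCompact hU.isCompact]
  apply aux_preimage_inj f hsurj
  rw [Scheme.preimage_basicOpen, hx, Scheme.basicOpen_zero]
  rfl

lemma aux_app_res {X Z : Scheme.{u}} (f : Z ⟶ X) {U V : X.Opens} (i : U ≤ V) (x : Γ(X, V)) :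
    f.app U (X.presheaf.map (homOfLE i).op x) =
      Z.presheaf.map (homOfLE (f.preimage_mono i)).op (f.app V x) :=
  ConcreteCategory.congr_hom (f.naturality (homOfLE i).op) x

lemma aux_res_res {Z : Scheme.{u}} {U V W : Z.Opens} (i : U ≤ V) (j : V ≤ W) (x : Γ(Z, W)) :
    Z.presheaf.map (homOfLE i).op (Z.presheaf.map (homOfLE j).op x) =
      Z.presheaf.map (homOfLE (i.trans j)).op x := by
  rw [← CommRingCat.comp_apply, ← Functor.map_comp]; rfl

lemma aux_two {X Z : Scheme.{u}} (f : Z ⟶ X) [IsClosedImmersion f]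
    [IsReduced Z] (hsurj : Function.Surjective f.base) (W U V : X.Opens)
    (hU : IsAffineOpen U) (hV : IsAffineOpen V)
    (a c : Γ(Z, f ⁻¹ᵁ W)) (hac : a + c = 1)
    (hUc : f ⁻¹ᵁ U = Z.basicOpen c) (hVa : f ⁻¹ᵁ V = Z.basicOpen a) : IsAffineOpen W := by
  have hW : W = U ⊔ V := by
    apply aux_preimage_inj f hsurj
    apply le_antisymm
    · have h1 := Z.basicOpen_add_le c a
      rw [add_comm, hac, Scheme.basicOpen_one, ← hUc, ← hVa] at h1
      exact h1
    · refine sup_le (a := f ⁻¹ᵁ U) (b := f ⁻¹ᵁ V) ?_ ?_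
      · rw [hUc]; exact Z.basicOpen_le c
      · rw [hVa]; exact Z.basicOpen_le a
  subst hW
  obtain ⟨b, hb⟩ := f.app_surjective U hU
    (Z.presheaf.map (homOfLE (f.preimage_mono le_sup_left)).op a)
  obtain ⟨b', hb'⟩ := f.app_surjective V hV
    (Z.presheaf.map (homOfLE (f.preimage_mono le_sup_right)).op c)
  have hbO : U ⊓ V = X.basicOpen b := by
    apply aux_preimage_inj f hsurj
    rw [Scheme.preimage_basicOpen, hb, Scheme.basicOpen_res, ← hVa]; rfl
  have hbO' : U ⊓ V = X.basicOpen b' := by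
    apply aux_preimage_inj f hsurj
    rw [Scheme.preimage_basicOpen, hb', Scheme.basicOpen_res, ← hUc, inf_comm]; rfl
  letI alg1 : Algebra Γ(X, U) Γ(X, U ⊓ V) :=
    (X.presheaf.map (homOfLE (inf_le_left : U ⊓ V ≤ U)).op).hom.toAlgebra
  letI alg2 : Algebra Γ(X, V) Γ(X, U ⊓ V) :=
    (X.presheaf.map (homOfLE (inf_le_right : U ⊓ V ≤ V)).op).hom.toAlgebra
  haveI : IsLocalization.Away b Γ(X, U ⊓ V) :=
    hU.isLocalization_of_eq_basicOpen b (homOfLE inf_le_left) hbO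
  haveI : IsLocalization.Away b' Γ(X, U ⊓ V) :=
    hV.isLocalization_of_eq_basicOpen b' (homOfLE inf_le_right) hbO'
  have hUV : IsAffineOpen (U ⊓ V) := hbO ▸ hU.basicOpen b
  obtain ⟨e, e', he, he', hee⟩ := aux_split b b'
    (algebraMap Γ(X, U) Γ(X, U ⊓ V) b + algebraMap Γ(X, V) Γ(X, U ⊓ V) b' - 1)
    (by
      apply aux_nilp f hsurj hUV
      rw [map_sub, map_add, map_one]
      erw [aux_app_res f inf_le_left b, aux_app_res f inf_le_right b']
      rw [hb, hb', aux_res_res, aux_res_res, ← map_add, hac, map_one, sub_self])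
    (by ring)
  have hglue : X.presheaf.map (homOfLE (inf_le_left : U ⊓ V ≤ U)).op (1 - b + e) =
      X.presheaf.map (homOfLE (inf_le_right : U ⊓ V ≤ V)).op (b' - e') := by
    rw [map_add, map_sub, map_sub, map_one]
    change 1 - algebraMap Γ(X, U) Γ(X, U ⊓ V) b + algebraMap Γ(X, U) Γ(X, U ⊓ V) e =
      algebraMap Γ(X, V) Γ(X, U ⊓ V) b' - algebraMap Γ(X, V) Γ(X, U ⊓ V) e'
    linear_combination hee
  obtain ⟨s, hs1, hs2⟩ : ∃ s : Γ(X, U ⊔ V),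
      X.presheaf.map (homOfLE le_sup_left).op s = 1 - b + e ∧
      X.presheaf.map (homOfLE le_sup_right).op s = b' - e' :=
    ⟨(X.sheaf.objSupIsoProdEqLocus U V).inv ⟨((1 - b + e : Γ(X, U)), (b' - e' : Γ(X, V))), hglue⟩,
      X.sheaf.objSupIsoProdEqLocus_inv_fst U V _, X.sheaf.objSupIsoProdEqLocus_inv_snd U V _⟩
  have hfs : f.app (U ⊔ V) s = c := by
    apply Z.sheaf.eq_of_locally_eq₂ (homOfLE (f.preimage_mono (le_sup_left : U ≤ U ⊔ V)))
      (homOfLE (f.preimage_mono (le_sup_right : V ≤ U ⊔ V))) le_rfl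
    · refine (aux_app_res f le_sup_left s).symm.trans ?_
      rw [hs1, map_add, map_sub, map_one, hb, (he.map (f.app U).hom).eq_zero, add_zero,
        ← map_one (Z.presheaf.map (homOfLE (f.preimage_mono (le_sup_left : U ≤ U ⊔ V))).op).hom]
      erw [← map_sub]
      rw [← hac, add_sub_cancel_left]
      rfl
    · refine (aux_app_res f le_sup_right s).symm.trans ?_
      rw [hs2, map_sub, hb', (he'.map (f.app V).hom).eq_zero, sub_zero]
      rfl
  apply isAffineOpen_of_isAffineOpen_basicOpen (U ⊔ V) {s, 1 - s}
  · rw [Ideal.eq_top_iff_one]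
    have := Ideal.add_mem _ (Ideal.subset_span (s := {s, 1 - s}) (Set.mem_insert _ _))
      (Ideal.subset_span (s := {s, 1 - s}) (Set.mem_insert_of_mem _ rfl))
    simpa using this
  · rintro i (rfl | rfl)
    · convert hU
      apply aux_preimage_inj f hsurj
      rw [Scheme.preimage_basicOpen, hfs, hUc]
    · convert hV
      apply aux_preimage_inj f hsurj
      rw [Scheme.preimage_basicOpen, map_sub, map_one, hfs, hVa, ← hac, add_sub_cancel_right]

lemma aux_mul {X Z : Scheme.{u}} (f : Z ⟶ X) [IsClosedImmersion f]
    (hsurj : Function.Surjective f.base) (W U : X.Opens) (hU : IsAffineOpen U)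
    (g : Γ(Z, ⊤)) (hg : f ⁻¹ᵁ W = f ⁻¹ᵁ U ⊓ Z.basicOpen g) : IsAffineOpen W := by
  obtain ⟨b, hb⟩ := f.app_surjective U hU (Z.presheaf.map (homOfLE le_top).op g)
  convert hU.basicOpen b
  apply aux_preimage_inj f hsurj
  rw [Scheme.preimage_basicOpen, hb, Scheme.basicOpen_res, hg]

end Aux

/-- Let `X` be a scheme whose reduction `X_red` is affine; then `X` is affine.
The reduction `X_red` is characterized as a reduced scheme together with a surjective
(hence bijective) closed immersion into `X`. -/
theorem isAffine_of_reduction_isAffine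
    {X Z : AlgebraicGeometry.Scheme} (f : Z ⟶ X) [IsClosedImmersion f]
    [IsReduced Z] (hsurj : Function.Surjective f.base)
    (hZ : IsAffine Z) : IsAffine X := by
  have hex : ∀ O : Z.Opens, ∃ W : X.Opens, f ⁻¹ᵁ W = O := by
    intro O
    obtain ⟨W, hW, h⟩ := f.isClosedEmbedding.isInducing.isOpen_iff.1 O.2
    exact ⟨⟨W, hW⟩, TopologicalSpace.Opens.ext h⟩
  choose W hW using hex
  let I : Ideal Γ(Z, ⊤) :=
    { carrier := {g | IsAffineOpen (W (Z.basicOpen g))}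
      zero_mem' := by
        have : W (Z.basicOpen (0 : Γ(Z, ⊤))) = ⊥ := by
          apply aux_preimage_inj f hsurj
          rw [hW, Scheme.basicOpen_zero]; rfl
        change IsAffineOpen _
        rw [this]
        exact isAffineOpen_bot X
      smul_mem' := by
        intro a g hg
        refine aux_mul f hsurj _ _ hg a ?_
        · rw [hW, hW, smul_eq_mul, Scheme.basicOpen_mul, inf_comm]
      add_mem' := by
        intro g h hg hh
        have key : ∀ g k : Γ(Z, ⊤), IsAffineOpen (W (Z.basicOpen g)) →
            IsAffineOpen (W (Z.basicOpen g ⊓ Z.basicOpen k)) := by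
          intro g k hg
          refine aux_mul f hsurj _ _ hg k ?_
          · rw [hW, hW]
        have hunit : IsUnit (Z.presheaf.map (CategoryTheory.homOfLE le_top).op (g + h) :
            Γ(Z, f ⁻¹ᵁ W (Z.basicOpen (g + h)))) := by
          have h1 := (Z.toRingedSpace.isUnit_res_basicOpen (g + h)).map
            (Z.presheaf.map (CategoryTheory.homOfLE (hW (Z.basicOpen (g + h))).le).op).hom
          have h2 := aux_res_res (hW (Z.basicOpen (g + h))).le (Z.basicOpen_le (g + h)) (g + h)
          exact h2 ▸ h1
        obtain ⟨r, hr⟩ := hunit.exists_right_inv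
        have hru : IsUnit r := IsUnit.of_mul_eq_one_right _ hr
        refine aux_two f hsurj _ _ _ (key g (g + h) hg) (key h (g + h) hh)
          (Z.presheaf.map (CategoryTheory.homOfLE le_top).op h * r)
          (Z.presheaf.map (CategoryTheory.homOfLE le_top).op g * r) ?_ ?_ ?_
        · rw [← add_mul, ← map_add, add_comm h g, hr]
        · rw [hW, Scheme.basicOpen_mul, Scheme.basicOpen_res, Scheme.basicOpen_of_isUnit _ hru, hW]
          ext; simp; tauto
        · rw [hW, Scheme.basicOpen_mul, Scheme.basicOpen_res, Scheme.basicOpen_of_isUnit _ hru, hW]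
          ext; simp; tauto }
  have hI : I = ⊤ := by
    by_contra hne
    have hsup : (⨆ g : I, Z.basicOpen (g : Γ(Z, ⊤))) = ⊤ := by
      rw [eq_top_iff]
      intro z _
      obtain ⟨U, hU, hzU, -⟩ := exists_isAffineOpen_mem_and_subset (x := f z) (U := ⊤) trivial
      obtain ⟨g, hg, hzg⟩ := (isAffineOpen_top Z).exists_basicOpen_le (V := f ⁻¹ᵁ U) ⟨z, hzU⟩ trivial
      refine TopologicalSpace.Opens.mem_iSup.2 ⟨⟨g, ?_⟩, hzg⟩
      refine aux_mul f hsurj _ _ hU g ?_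
      · rw [hW, inf_eq_right.2 hg]
    have := ((isAffineOpen_top Z).iSup_basicOpen_eq_self_iff (s := (I : Set Γ(Z, ⊤)))).1 hsup
    rw [Ideal.span_eq] at this
    exact hne this
  have h1 : IsAffineOpen (W (Z.basicOpen (1 : Γ(Z, ⊤)))) := (Ideal.eq_top_iff_one I).1 hI
  have h2 : W (Z.basicOpen (1 : Γ(Z, ⊤))) = ⊤ := by
    apply aux_preimage_inj f hsurj
    rw [hW, Scheme.basicOpen_one]; rfl
  rw [h2] at h1
  have : IsAffine (⊤ : X.Opens) := h1
  exact IsAffine.of_isIso X.topIso.inv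
end

section
/- A morphism of schemes that is proper and quasi-finite is finite. -/
open AlgebraicGeometry

/-- A proper quasi-finite morphism of schemes is finite.  Here quasi-finite
means of finite type (which is part of properness) with finite fibers. -/
theorem isFinite_of_isProper_of_quasiFinite
    {X Y : AlgebraicGeometry.Scheme} (f : X ⟶ Y) [IsProper f]
    (hfib : ∀ y : Y, (f.base ⁻¹' {y}).Finite) : IsFinite f := by
  have : LocallyQuasiFinite f := LocallyQuasiFinite.of_finite_preimage_singleton f hfib
  exact IsFinite.of_isProper_of_locallyQuasiFinite f
end

section
/- (Zariski's Main Theorem, factorization form) Let f : X → Y be a quasi-finite and separated morphism of schemes. Then f factors as X → X' → Y where X → X' is an open immersion and X' → Y is an integral morphism. If moreover Y is quasi-compact and quasi-separated, the factorization can be chosen with X' → Y finite. -/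
open AlgebraicGeometry CategoryTheory

namespace ZMTAux
open CategoryTheory.Limits
set_option maxSynthPendingDepth 3
universe u

instance isLocal_lft : IsZariskiLocalAtSource @LocallyOfFiniteType.{u} :=
  HasRingHomProperty.instIsZariskiLocalAtSource (P := @LocallyOfFiniteType)

instance isLocalTarget_finite : IsZariskiLocalAtTarget @IsFinite.{u} :=
  @HasAffineProperty.instIsZariskiLocalAtTarget _ _ IsFinite.instHasAffinePropertyAndIsAffineFiniteCarrierObjOppositeOpensCarrierCarrierCommRingCatPresheafOpOpensTopHomAppTop

instance isLocal_lqf : IsZariskiLocalAtSource @LocallyQuasiFinite.{u} :=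
  HasRingHomProperty.instIsZariskiLocalAtSource (P := @LocallyQuasiFinite)

lemma isPullback_diag {T Y A B P : Scheme.{u}} (t : T ⟶ Y) (a : A ⟶ T) (b : B ⟶ T)
    (p : P ⟶ A) (q : P ⟶ B) (H : IsPullback p q a b)
    (ca : A ⟶ Y) (cb : B ⟶ Y) (l : P ⟶ pullback ca cb)
    (hl1 : l ≫ pullback.fst ca cb = p) (hl2 : l ≫ pullback.snd ca cb = q)
    (m : pullback ca cb ⟶ pullback t t)
    (hm1 : m ≫ pullback.fst t t = pullback.fst ca cb ≫ a)
    (hm2 : m ≫ pullback.snd t t = pullback.snd ca cb ≫ b) :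
    IsPullback (p ≫ a) l (pullback.diagonal t) m := by
  refine ⟨⟨?_⟩, ⟨PullbackCone.IsLimit.mk _ (fun s ↦ H.lift (s.snd ≫ pullback.fst _ _)
    (s.snd ≫ pullback.snd _ _) ?_) ?_ ?_ ?_⟩⟩
  · apply pullback.hom_ext
    · simp only [Category.assoc, hm1, reassoc_of% hl1, pullback.diagonal_fst, Category.comp_id]
    · simp only [Category.assoc, hm2, reassoc_of% hl2, pullback.diagonal_snd, Category.comp_id, H.w]
  · have h := s.condition
    have h1 := congr($h ≫ pullback.fst _ _)
    have h2 := congr($h ≫ pullback.snd _ _)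
    simp only [Category.assoc, pullback.diagonal_fst, pullback.diagonal_snd, hm1, hm2, Category.comp_id] at h1 h2 ⊢
    exact h1.symm.trans h2
  · intro s
    have h := s.condition
    have h1 := congr($h ≫ pullback.fst _ _)
    simp only [Category.assoc, pullback.diagonal_fst, hm1, Category.comp_id] at h1
    simp [h1]
  · intro s
    apply pullback.hom_ext <;> simp [hl1, hl2]
  · intro s m h1 h2
    apply H.hom_ext
    · simp [← h2, hl1]
    · simp [← h2, hl2]

section pushout
variable {P X Z : Scheme.{u}} (a : P ⟶ X) (b : P ⟶ Z) [IsOpenImmersion a] [IsOpenImmersion b]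

instance : IsOpenImmersion (pushout.inl a b) := 
  (Scheme.IsLocallyDirected.openCover (span a b)).map_prop WalkingSpan.left

instance : IsOpenImmersion (pushout.inr a b) := 
  (Scheme.IsLocallyDirected.openCover (span a b)).map_prop WalkingSpan.right

lemma pushout_cases (x : ↑(pushout a b)) :
    (∃ y, pushout.inl a b y = x) ∨ (∃ y, pushout.inr a b y = x) := by
  obtain ⟨i, y, rfl⟩ := Scheme.IsLocallyDirected.ι_jointly_surjective (span a b) x
  obtain (_ | _ | _) := i
  · left
    refine ⟨a y, ?_⟩
    rw [← colimit.w (span a b) WalkingSpan.Hom.fst]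
    rfl
  · exact .inl ⟨y, rfl⟩
  · exact .inr ⟨y, rfl⟩

lemma pushout_inl_eq_inr (x : X) (z : Z) (h : pushout.inl a b x = pushout.inr a b z) :
    ∃ p, a p = x ∧ b p = z := by
  obtain ⟨k, f, g, y, h1, h2⟩ := (Scheme.IsLocallyDirected.ι_eq_ι_iff (span a b)
    (i := WalkingSpan.left) (j := WalkingSpan.right)).mp h
  obtain (_ | _ | _) := k
  · obtain (_ | _) := f
    obtain (_ | _) := g
    exact ⟨y, h1, h2⟩
  · obtain (_ | _) := g
  · obtain (_ | _) := f

lemma isPullback_pushout : IsPullback a b (pushout.inl a b) (pushout.inr a b) := by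
  refine (IsOpenImmersion.isPullback _ _ _ _ pushout.condition.symm ?_)
  ext x
  simp only [TopologicalSpace.Opens.map_coe, Scheme.Hom.coe_opensRange, Set.mem_preimage, Set.mem_range]
  constructor
  · rintro ⟨y, hy⟩
    obtain ⟨p, rfl, rfl⟩ := pushout_inl_eq_inr a b y x hy
    exact ⟨p, rfl⟩
  · rintro ⟨p, rfl⟩
    refine ⟨a p, ?_⟩
    rw [← Scheme.Hom.comp_apply, pushout.condition, Scheme.Hom.comp_apply]

/-- Gluing two schemes along an open subscheme. -/
lemma exists_glue : ∃ (T : Scheme.{u}) (i : X ⟶ T) (j : Z ⟶ T), IsOpenImmersion i ∧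
    IsOpenImmersion j ∧ IsPullback a b i j ∧ IsPushout a b i j ∧
    ∀ x : T, (∃ y, i y = x) ∨ (∃ y, j y = x) :=
  ⟨_, pushout.inl a b, pushout.inr a b, inferInstance, inferInstance, isPullback_pushout a b,
    IsPushout.of_hasPushout a b, pushout_cases a b⟩

end pushout

lemma of_cover_isPullback (P : MorphismProperty Scheme.{u}) [IsZariskiLocalAtTarget P]
    {D E : Scheme.{u}} (δ : D ⟶ E) (𝒱 : E.OpenCover)
    (hyp : ∀ i, ∃ (Q : Scheme.{u}) (v : Q ⟶ D) (l : Q ⟶ 𝒱.X i),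
      IsPullback v l δ (𝒱.f i) ∧ P l) : P δ := by
  refine IsZariskiLocalAtTarget.of_openCover 𝒱 fun i ↦ ?_
  obtain ⟨Q, v, l, H, hl⟩ := hyp i
  exact (P.arrow_mk_iso_iff (Arrow.isoMk H.isoPullback (Iso.refl _)
    (by exact (H.isoPullback_hom_snd).trans (Category.comp_id _).symm))).mp hl

/-- two element cover -/
def twoCover {X Z T : Scheme.{u}} (i : X ⟶ T) (j : Z ⟶ T) [IsOpenImmersion i]
    [IsOpenImmersion j] (hc : ∀ x : T, (∃ y, i y = x) ∨ (∃ y, j y = x)) : T.OpenCover :=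
  .mkOfCovers Bool (fun c ↦ cond c X Z)
      (fun c ↦ match c with | true => i | false => j)
      (fun x ↦ by
        rcases hc x with ⟨y, hy⟩ | ⟨y, hy⟩
        · exact ⟨true, y, hy⟩
        · exact ⟨false, y, hy⟩)
      (fun c ↦ match c with | true => ‹_› | false => ‹_›)

/-- Separatedness can be checked on a two-element cover. -/
lemma isSeparated_of_glue {P X Z T Y : Scheme.{u}} (i : X ⟶ T) (j : Z ⟶ T) [IsOpenImmersion i]
    [IsOpenImmersion j] (hc : ∀ x : T, (∃ y, i y = x) ∨ (∃ y, j y = x))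
    (t : T ⟶ Y) (f : X ⟶ Y) (h : Z ⟶ Y) (hf : i ≫ t = f) (hh : j ≫ t = h)
    [IsSeparated f] [IsSeparated h] (a : P ⟶ X) (b : P ⟶ Z) (H : IsPullback a b i j)
    (l : P ⟶ pullback f h)
    (hl1 : l ≫ pullback.fst f h = a) (hl2 : l ≫ pullback.snd f h = b)
    [IsClosedImmersion l] : IsSeparated t := by
  have hdf : IsClosedImmersion (pullback.diagonal f) := inferInstance
  have hdh : IsClosedImmersion (pullback.diagonal h) := inferInstance
  have hl' : IsClosedImmersion (l ≫ (pullbackSymmetry f h).hom) := inferInstance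
  subst hf hh
  constructor
  let 𝒰 := twoCover i j hc
  refine of_cover_isPullback @IsClosedImmersion _ (Scheme.Pullback.openCoverOfLeftRight 𝒰 𝒰 t t) ?_
  rintro ⟨_ | _, _ | _⟩
  · exact ⟨Z, _, _, isPullback_diag t j j (𝟙 _) (𝟙 _) (IsKernelPair.id_of_mono j) (j ≫ t) (j ≫ t)
      (pullback.diagonal _) (pullback.diagonal_fst _) (pullback.diagonal_snd _) _
      (pullback.lift_fst _ _ _) (pullback.lift_snd _ _ _), hdh⟩
  · refine ⟨P, _, _, isPullback_diag t j i b a H.flip (j ≫ t) (i ≫ t)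
      (l ≫ (pullbackSymmetry _ _).hom) (by simp [hl2]) (by simp [hl1]) _
      (pullback.lift_fst _ _ _) (pullback.lift_snd _ _ _), hl'⟩
  · refine ⟨P, _, _, isPullback_diag t i j a b H (i ≫ t) (j ≫ t)
      l hl1 hl2 _
      (pullback.lift_fst _ _ _) (pullback.lift_snd _ _ _), ‹_›⟩
  · exact ⟨X, _, _, isPullback_diag t i i (𝟙 _) (𝟙 _) (IsKernelPair.id_of_mono i) (i ≫ t) (i ≫ t)
      (pullback.diagonal _) (pullback.diagonal_fst _) (pullback.diagonal_snd _) _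
      (pullback.lift_fst _ _ _) (pullback.lift_snd _ _ _), hdf⟩

/-- Gluing lemma. -/
lemma exists_glue_over {X Y Z : Scheme.{u}} (f : X ⟶ Y) [LocallyOfFiniteType f] [QuasiCompact f]
    [IsSeparated f] [LocallyQuasiFinite f] [CompactSpace Y] [QuasiSeparatedSpace Y]
    (V : Y.Opens) (hV : IsCompact (V : Set Y))
    (g : (f ⁻¹ᵁ V).toScheme ⟶ Z) [IsOpenImmersion g] (h : Z ⟶ V.toScheme) [IsFinite h]
    (w : g ≫ h = f ∣_ V) :
    ∃ (T : Scheme.{u}) (i : X ⟶ T) (j : Z ⟶ T) (t : T ⟶ Y),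
      IsOpenImmersion i ∧ IsOpenImmersion j ∧ i ≫ t = f ∧ 
      (f ⁻¹ᵁ V).ι ≫ i = g ≫ j ∧ (∀ x : T, (∃ y, i y = x) ∨ (∃ y, j y = x)) ∧
      IsPullback h j V.ι t ∧ LocallyOfFiniteType t ∧ QuasiCompact t ∧ IsSeparated t ∧
      LocallyQuasiFinite t := by
  obtain ⟨T, i, j, hi, hj, hpb, hpo, hc⟩ := exists_glue (f ⁻¹ᵁ V).ι g
  have e : (f ⁻¹ᵁ V).ι ≫ f = g ≫ h ≫ V.ι := by
    rw [reassoc_of% w, morphismRestrict_ι]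
  let t : T ⟶ Y := hpo.desc f (h ≫ V.ι) e
  have hit : i ≫ t = f := hpo.inl_desc _ _ _
  have hjt : j ≫ t = h ≫ V.ι := hpo.inr_desc _ _ _
  have hpb' : IsPullback h j V.ι t := by
    refine IsOpenImmersion.isPullback _ _ _ _ hjt ?_
    ext x
    simp only [TopologicalSpace.Opens.map_coe, Scheme.Hom.coe_opensRange, Set.mem_preimage, Set.mem_range, Scheme.Opens.range_ι]
    constructor
    · intro hx
      rcases hc x with ⟨y, rfl⟩ | h'
      · rw [← Scheme.Hom.comp_apply, hit] at hx
        obtain ⟨p, rfl⟩ : ∃ p : (f ⁻¹ᵁ V).toScheme, (f ⁻¹ᵁ V).ι p = y := ⟨⟨y, hx⟩, rfl⟩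
        refine ⟨g p, ?_⟩
        rw [← Scheme.Hom.comp_apply, ← hpo.w, Scheme.Hom.comp_apply]
      · exact h'
    · rintro ⟨y, rfl⟩
      rw [← Scheme.Hom.comp_apply, hjt, Scheme.Hom.comp_apply]
      exact (h y).2
  have : CompactSpace V := isCompact_iff_compactSpace.mp hV
  refine ⟨T, i, j, t, hi, hj, hit, hpo.w, hc, hpb', ?_, ?_, ?_, ?_⟩
  · refine (IsZariskiLocalAtSource.iff_of_openCover (twoCover i j hc)).mpr ?_
    rintro (_ | _)
    · change LocallyOfFiniteType (j ≫ t)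
      rw [hjt]; infer_instance
    · change LocallyOfFiniteType (i ≫ t)
      rw [hit]; infer_instance
  · have : CompactSpace X := QuasiCompact.compactSpace_of_compactSpace f
    have : CompactSpace Z := QuasiCompact.compactSpace_of_compactSpace h
    have : CompactSpace T := by
      rw [← isCompact_univ_iff]
      convert! (isCompact_range i.continuous).union (isCompact_range j.continuous)
      ext x; simpa using hc x
    infer_instance
  · let l := pullback.lift (f := f) (g := h ≫ V.ι) _ _ e
    let r : pullback f (h ≫ V.ι) ⟶ (f ⁻¹ᵁ V).toScheme :=
      (isPullback_morphismRestrict f V).flip.lift (pullback.fst _ _) (pullback.snd _ _ ≫ h)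
        (by rw [pullback.condition, Category.assoc])
    have hr : r ≫ (f ⁻¹ᵁ V).ι = pullback.fst _ _ := IsPullback.lift_fst ..
    have hlr : l ≫ r = 𝟙 _ := by
      rw [← cancel_mono (f ⁻¹ᵁ V).ι]
      rw [Category.assoc, hr, Category.id_comp]; exact pullback.lift_fst _ _ _
    have : IsSeparated r := by
      have : IsSeparated (r ≫ (f ⁻¹ᵁ V).ι) := by rw [hr]; infer_instance
      exact IsSeparated.of_comp r (f ⁻¹ᵁ V).ι
    have : IsClosedImmersion l := by
      have : IsClosedImmersion (l ≫ r) := by rw [hlr]; infer_instance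
      exact IsClosedImmersion.of_comp l r
    exact isSeparated_of_glue i j hc t f (h ≫ V.ι) hit hjt _ _ hpb l (pullback.lift_fst _ _ _)
      (pullback.lift_snd _ _ _)
  · refine (IsZariskiLocalAtSource.iff_of_openCover (twoCover i j hc)).mpr ?_
    rintro (_ | _)
    · change LocallyQuasiFinite (j ≫ t)
      rw [hjt]; infer_instance
    · change LocallyQuasiFinite (i ≫ t)
      rw [hit]; infer_instance

lemma finite_restrict_of_isPullback {T Z Y : Scheme.{u}} (t : T ⟶ Y) (V : Y.Opens)
    (h : Z ⟶ V.toScheme) (j : Z ⟶ T) (H : IsPullback h j V.ι t) [IsFinite h] : IsFinite (t ∣_ V) := by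
  have H' := isPullback_morphismRestrict t V
  let e := H.isoIsPullback _ _ H'
  have he : e.hom ≫ t ∣_ V = h := H.isoIsPullback_hom_fst _ _ H'
  have : t ∣_ V = e.inv ≫ h := by rw [← he, e.inv_hom_id_assoc]
  rw [this]
  infer_instance

lemma subset_range {T T' Y : Scheme.{u}} (i : T ⟶ T') (t' : T' ⟶ Y) [IsOpenImmersion i]
    [IsDominant i] [IsSeparated t'] (U : Y.Opens) (hU : IsFinite ((i ≫ t') ∣_ U)) :
    IsFinite (t' ∣_ U) := by
  rw [morphismRestrict_comp] at hU
  have : IsFinite (i ∣_ t' ⁻¹ᵁ U ≫ t' ∣_ U) := hU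
  have : IsDominant (i ∣_ t' ⁻¹ᵁ U) := IsZariskiLocalAtTarget.restrict ‹_› _
  have : IsFinite (i ∣_ t' ⁻¹ᵁ U) := IsFinite.of_comp _ (t' ∣_ U)
  have : Surjective (i ∣_ t' ⁻¹ᵁ U) := by
    constructor
    have h1 := (i ∣_ t' ⁻¹ᵁ U).isClosedMap.isClosed_range
    have h2 := (i ∣_ t' ⁻¹ᵁ U).denseRange
    rw [← Set.range_eq_univ, ← h1.closure_eq, h2.closure_eq]
  have : IsIso (i ∣_ t' ⁻¹ᵁ U) := by
    rw [isIso_iff_isOpenImmersion_and_epi_base]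
    exact ⟨inferInstance, (TopCat.epi_iff_surjective _).mpr (i ∣_ t' ⁻¹ᵁ U).surjective⟩
  have e : t' ∣_ U = inv (i ∣_ t' ⁻¹ᵁ U) ≫ (i ∣_ t' ⁻¹ᵁ U ≫ t' ∣_ U) := by
    rw [IsIso.inv_hom_id_assoc]
  rw [e]
  infer_instance

lemma alg_single {R B : Type u} [CommRing R] [CommRing B] [Algebra R B] (b : B)
    (hb : Algebra.FiniteType R (Localization.Away b)) :
    ∃ t : Set B, t.Finite ∧ ∀ C : Subalgebra R B, t ⊆ C → b ∈ C ∧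
      ∀ a : B, ∃ c ∈ C, ∃ m : ℕ, c = b ^ m * a := by
  obtain ⟨σ, hσ⟩ := hb.out
  have key (x : Localization.Away b) : ∃ (c : B) (n : ℕ),
      x * algebraMap B _ (b ^ n) = algebraMap B _ c := by
    obtain ⟨⟨c, ⟨_, n, rfl⟩⟩, h⟩ := IsLocalization.surj (Submonoid.powers b) x
    exact ⟨c, n, h⟩
  choose c n hcn using key
  refine ⟨insert b (c '' σ), (σ.finite_toSet.image c).insert b, fun C hC ↦ ?_⟩
  have hbC : b ∈ C := hC (Set.mem_insert _ _)
  refine ⟨hbC, ?_⟩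
  have main (y : Localization.Away b) : ∃ c ∈ C, ∃ n : ℕ,
      y * algebraMap B _ (b ^ n) = algebraMap B _ c := by
    have hy : y ∈ Algebra.adjoin R (σ : Set (Localization.Away b)) := by rw [hσ]; trivial
    induction hy using Algebra.adjoin_induction with
    | mem x hx => exact ⟨c x, hC (Set.mem_insert_of_mem _ ⟨x, hx, rfl⟩), n x, hcn x⟩
    | algebraMap r =>
      refine ⟨algebraMap R B r, C.algebraMap_mem r, 0, ?_⟩
      rw [← IsScalarTower.algebraMap_apply R B]; simp
    | add x y _ _ hx hy =>
      obtain ⟨c, hc, n, h⟩ := hx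
      obtain ⟨c', hc', n', h'⟩ := hy
      refine ⟨c * b ^ n' + c' * b ^ n, C.add_mem (C.mul_mem hc (pow_mem hbC _))
        (C.mul_mem hc' (pow_mem hbC _)), n + n', ?_⟩
      rw [map_add, map_mul, map_mul, ← h, ← h', pow_add, map_mul]
      ring
    | mul x y _ _ hx hy =>
      obtain ⟨c, hc, n, h⟩ := hx
      obtain ⟨c', hc', n', h'⟩ := hy
      refine ⟨c * c', C.mul_mem hc hc', n + n', ?_⟩
      rw [map_mul, ← h, ← h', pow_add, map_mul]
      ring
  intro a
  obtain ⟨c, hc, n, h⟩ := main (algebraMap B _ a)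
  rw [← map_mul] at h
  obtain ⟨⟨_, k, rfl⟩, hk⟩ := (IsLocalization.eq_iff_exists (Submonoid.powers b) _).mp h
  refine ⟨b ^ k * c, C.mul_mem (pow_mem hbC _) hc, k + n, ?_⟩
  simp only at hk
  rw [← hk, pow_add]
  ring

lemma alg_main {R B : Type u} [CommRing R] [CommRing B] [Algebra R B] [Algebra.IsIntegral R B]
    (s : Set B) (hs : s.Finite)
    (hb : ∀ b ∈ s, Algebra.FiniteType R (Localization.Away b)) :
    ∃ C : Subalgebra R B, Module.Finite R C ∧ ∀ b ∈ s, ∃ hb : b ∈ C,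
      Function.Bijective (Localization.awayMap C.val.toRingHom ⟨b, hb⟩) := by
  choose! t ht hC using fun b hb' ↦ alg_single b (hb b hb')
  refine ⟨Algebra.adjoin R (⋃ b ∈ s, t b), ?_, fun b hb ↦ ?_⟩
  · exact Module.Finite.iff_fg.mpr (fg_adjoin_of_finite (hs.biUnion ht)
      fun x _ ↦ Algebra.IsIntegral.isIntegral x)
  · obtain ⟨h1, h2⟩ := hC b hb (Algebra.adjoin R (⋃ b ∈ s, t b))
      ((Set.subset_biUnion_of_mem (u := t) hb).trans Algebra.subset_adjoin)
    refine ⟨h1, IsLocalization.map_injective_of_injective _ _ _ Subtype.val_injective, ?_⟩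
    rw [Localization.awayMap_surjective_iff]
    intro a
    obtain ⟨c, hc, m, e⟩ := h2 a
    exact ⟨⟨c, hc⟩, m, e⟩

lemma spec_main {R B : CommRingCat.{u}} (φ : R ⟶ B) (hφ : φ.hom.IsIntegral) {X : Scheme.{u}}
    [CompactSpace X] (v : X ⟶ Spec B) [IsOpenImmersion v]
    [LocallyOfFiniteType (v ≫ Spec.map φ)] [IsDominant v] :
    ∃ (C : CommRingCat.{u}) (ρ : R ⟶ C) (ι : C ⟶ B), ρ ≫ ι = φ ∧ ρ.hom.Finite ∧
      IsOpenImmersion (v ≫ Spec.map ι) ∧ IsDominant (v ≫ Spec.map ι) := by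
  algebraize [φ.hom]
  obtain ⟨s, hs, hrange⟩ : ∃ s : Set B, s.Finite ∧
      Set.range v = ⋃ b ∈ s, (PrimeSpectrum.basicOpen b : Set (PrimeSpectrum B)) :=
    (PrimeSpectrum.isBasis_basic_opens.isCompact_open_iff_eq_finite_iUnion _
      (fun i ↦ PrimeSpectrum.isCompact_basicOpen i) _).mp
      ⟨isCompact_range v.continuous, v.isOpenEmbedding.isOpen_range⟩
  have hft (b : B) (hb : b ∈ s) : Algebra.FiniteType R (Localization.Away b) := by
    let α : Spec (.of (Localization.Away b)) ⟶ Spec B :=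
      Spec.map (CommRingCat.ofHom (algebraMap B (Localization.Away b)))
    have : IsOpenImmersion α := inferInstance
    have hα : Set.range α ⊆ Set.range v := by
      rw [hrange]
      refine subset_trans ?_ (Set.subset_biUnion_of_mem hb)
      exact (PrimeSpectrum.localization_away_comap_range (Localization.Away b) b).le
    let w := IsOpenImmersion.lift v α hα
    have hw : w ≫ v = α := IsOpenImmersion.lift_fac _ _ _
    have : IsOpenImmersion w := by
      have : IsOpenImmersion (w ≫ v) := hw ▸ this
      exact IsOpenImmersion.of_comp w v
    have : LocallyOfFiniteType (Spec.map (φ ≫ CommRingCat.ofHom (algebraMap B (Localization.Away b)))) := by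
      rw [Spec.map_comp]
      change LocallyOfFiniteType (α ≫ _)
      rw [← hw, Category.assoc]
      infer_instance
    have h2 : RingHom.FiniteType _ := HasRingHomProperty.Spec_iff.mp this
    have e : (φ ≫ CommRingCat.ofHom (algebraMap B (Localization.Away b))).hom =
      algebraMap R (Localization.Away b) := by
      ext x; exact (IsScalarTower.algebraMap_apply R B _ x).symm
    rw [e] at h2
    exact RingHom.finiteType_algebraMap.mp h2
  have : Algebra.IsIntegral R B := ⟨hφ⟩
  obtain ⟨C, hC, hbij⟩ := alg_main s hs hft
  let ι : CommRingCat.of C ⟶ B := CommRingCat.ofHom C.val.toRingHom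
  let ρ : R ⟶ CommRingCat.of C := CommRingCat.ofHom (algebraMap R C)
  have hρι : ρ ≫ ι = φ := by ext x; rfl
  refine ⟨.of C, ρ, ι, hρι, RingHom.finite_algebraMap.mpr hC, ?_, ?_⟩
  · let U (b : s) : (Spec (.of C)).Opens := PrimeSpectrum.basicOpen (⟨b.1, (hbij b.1 b.2).1⟩ : C)
    refine IsZariskiLocalAtTarget.of_range_subset_iSup U ?_ ?_
    · rintro _ ⟨x, rfl⟩
      have hx : v x ∈ Set.range v := ⟨x, rfl⟩
      rw [hrange] at hx
      obtain ⟨b, hb, hxb⟩ := Set.mem_iUnion₂.mp hx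
      rw [Scheme.Hom.comp_apply]
      exact TopologicalSpace.Opens.mem_iSup.mpr ⟨⟨b, hb⟩, hxb⟩
    · intro b
      have : IsIso (Spec.map ι ∣_ (U b)) := by
        have h1 := SpecMapRestrictBasicOpenIso ι (⟨b.1, (hbij b.1 b.2).1⟩ : C)
        refine ((MorphismProperty.isomorphisms _).arrow_mk_iso_iff h1).mpr ?_
        have : IsIso (CommRingCat.ofHom (Localization.awayMap ι.hom (⟨b.1, (hbij b.1 b.2).1⟩ : C))) :=
          (ConcreteCategory.isIso_iff_bijective _).mpr (hbij b.1 b.2).2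
        exact inferInstanceAs (IsIso (Spec.map _))
      have h2 : IsOpenImmersion (Spec.map ι ∣_ (U b)) := inferInstance
      have h3 : IsOpenImmersion (v ∣_ Spec.map ι ⁻¹ᵁ U b) :=
        IsZariskiLocalAtTarget.restrict (P := @IsOpenImmersion) ‹_› _
      rw [morphismRestrict_comp]
      exact MorphismProperty.comp_mem @IsOpenImmersion _ _ h3 h2
  · have : IsDominant (Spec.map ι) := by
      constructor
      exact PrimeSpectrum.denseRange_comap_iff_ker_le_nilRadical _ |>.mpr
        (((RingHom.injective_iff_ker_eq_bot _).mp Subtype.val_injective).le.trans bot_le)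
    infer_instance

lemma exists_finite_affine {X Y : Scheme.{u}} (f : X ⟶ Y) [IsAffine Y] [LocallyOfFiniteType f]
    [QuasiCompact f] [IsSeparated f] [LocallyQuasiFinite f] :
    ∃ (Z : Scheme.{u}) (g : X ⟶ Z) (h : Z ⟶ Y), IsOpenImmersion g ∧ IsDominant g ∧ IsFinite h ∧
      g ≫ h = f := by
  have : IsAffine f.normalization := isAffine_of_isAffineHom f.fromNormalization
  have : CompactSpace X := QuasiCompact.compactSpace_of_compactSpace f
  let φ := f.fromNormalization.appTop
  have hnat : f.normalization.isoSpec.hom ≫ Spec.map φ = f.fromNormalization ≫ Y.isoSpec.hom :=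
    (Scheme.isoSpec_hom_naturality f.fromNormalization)
  have hfac : (f.toNormalization ≫ f.normalization.isoSpec.hom) ≫ Spec.map φ =
      f ≫ Y.isoSpec.hom := by
    rw [Category.assoc, hnat, f.toNormalization_fromNormalization_assoc]
  have : LocallyOfFiniteType ((f.toNormalization ≫ f.normalization.isoSpec.hom) ≫ Spec.map φ) := by
    rw [hfac]; infer_instance
  have hint : φ.hom.IsIntegral := by
    have h1 : IsIntegralHom (Spec.map φ) := by
      have : Spec.map φ = f.normalization.isoSpec.inv ≫ f.fromNormalization ≫ Y.isoSpec.hom := by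
        rw [← hnat, Iso.inv_hom_id_assoc]
      rw [this]
      infer_instance
    exact IsIntegralHom.SpecMap_iff.mp h1
  obtain ⟨C, ρ, ι, e, hρ, h1, h2⟩ := spec_main φ hint (f.toNormalization ≫ f.normalization.isoSpec.hom)
  have : IsFinite (Spec.map ρ) := (IsFinite.SpecMap_iff ρ).mpr hρ
  refine ⟨Spec C, _, Spec.map ρ ≫ Y.isoSpec.inv, h1, h2, inferInstance, ?_⟩
  rw [← Category.assoc, Iso.comp_inv_eq, ← hfac, Category.assoc, ← Spec.map_comp, e]

lemma exists_step {X Y : Scheme.{u}} (f : X ⟶ Y) [CompactSpace Y] [QuasiSeparatedSpace Y]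
    [LocallyOfFiniteType f]
    [QuasiCompact f] [IsSeparated f] [LocallyQuasiFinite f] (V : Y.Opens) (hV : IsAffineOpen V) :
    ∃ (T : Scheme.{u}) (i : X ⟶ T) (t : T ⟶ Y), IsOpenImmersion i ∧ i ≫ t = f ∧ 
      LocallyOfFiniteType t ∧ QuasiCompact t ∧ IsSeparated t ∧ LocallyQuasiFinite t ∧
      IsFinite (t ∣_ V) ∧ ∀ U : Y.Opens, IsFinite (f ∣_ U) → IsFinite (t ∣_ U) := by
  have : IsAffine V := hV
  obtain ⟨Z, g, h, hg, hgd, hh, e⟩ := exists_finite_affine (f ∣_ V)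
  obtain ⟨T, i, j, t, hi, hj, hit, hij, hc, hpb, h1, h2, h3, h4⟩ :=
    exists_glue_over f V hV.isCompact g h e
  refine ⟨T, i, t, hi, hit, h1, h2, h3, h4, finite_restrict_of_isPullback t V h j hpb, ?_⟩
  have : IsDominant i := by
    constructor
    intro x
    rcases hc x with ⟨y, rfl⟩ | ⟨z, rfl⟩
    · exact subset_closure ⟨y, rfl⟩
    · have hz : z ∈ closure (Set.range g) := g.denseRange z
      have h5 := image_closure_subset_closure_image j.continuous ⟨z, hz, rfl⟩
      refine closure_mono ?_ h5
      rintro _ ⟨_, ⟨p, rfl⟩, rfl⟩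
      refine ⟨(f ⁻¹ᵁ V).ι p, ?_⟩
      rw [← Scheme.Hom.comp_apply, hij, Scheme.Hom.comp_apply]
  intro U hU
  subst hit
  exact subset_range i t U hU

lemma exists_finset {X Y : Scheme.{u}} (f : X ⟶ Y) [CompactSpace Y] [QuasiSeparatedSpace Y]
    [LocallyOfFiniteType f]
    [QuasiCompact f] [IsSeparated f] [LocallyQuasiFinite f] (s : Finset Y.affineOpens) :
    ∃ (T : Scheme.{u}) (i : X ⟶ T) (t : T ⟶ Y), IsOpenImmersion i ∧ i ≫ t = f ∧ 
      LocallyOfFiniteType t ∧ QuasiCompact t ∧ IsSeparated t ∧ LocallyQuasiFinite t ∧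
      ∀ U ∈ s, IsFinite (t ∣_ U.1) := by
  classical
  induction s using Finset.induction_on with
  | empty => exact ⟨X, 𝟙 _, f, inferInstance, by simp, ‹_›, ‹_›, ‹_›, ‹_›, by simp⟩
  | insert V s _ ih =>
    obtain ⟨T, i, t, hi, rfl, h1, h2, h3, h4, h5⟩ := ih
    obtain ⟨T', i', t', hi', rfl, h1', h2', h3', h4', h5', h6⟩ := exists_step t V.1 V.2
    refine ⟨T', i ≫ i', t', inferInstance, by simp, h1', h2', h3', h4', fun U hU ↦ ?_⟩
    rcases Finset.mem_insert.mp hU with rfl | hU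
    · exact h5'
    · exact h6 _ (h5 _ hU)

lemma exists_finite {X Y : Scheme.{u}} (f : X ⟶ Y) [CompactSpace Y] [QuasiSeparatedSpace Y]
    [LocallyOfFiniteType f]
    [QuasiCompact f] [IsSeparated f] [LocallyQuasiFinite f] :
    ∃ (Z : Scheme.{u}) (g : X ⟶ Z) (h : Z ⟶ Y), IsOpenImmersion g ∧ IsFinite h ∧ g ≫ h = f := by
  obtain ⟨s, hs⟩ : ∃ s : Finset Y.affineOpens, ⨆ i : s, i.1.1 = (⊤ : Y.Opens) := by
    obtain ⟨s, hs⟩ := (isCompact_univ (X := Y)).elim_finite_subcover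
      (fun i : Y.affineOpens ↦ (i.1 : Set Y)) (fun i ↦ i.1.2) (by
        have := congr(($(iSup_affineOpens_eq_top Y) : Set Y))
        rw [TopologicalSpace.Opens.coe_iSup] at this
        exact this.ge)
    refine ⟨s, top_le_iff.mp fun x hx ↦ ?_⟩
    obtain ⟨U, hU, hxU⟩ := Set.mem_iUnion₂.mp (hs hx)
    exact TopologicalSpace.Opens.mem_iSup.mpr ⟨⟨U, hU⟩, hxU⟩
  obtain ⟨T, i, t, hi, rfl, h1, h2, h3, h4, h5⟩ := exists_finset f s
  refine ⟨T, i, t, hi, ?_, rfl⟩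
  exact IsZariskiLocalAtTarget.of_iSup_eq_top _ hs fun i ↦ h5 _ i.2

end ZMTAux

/-- Zariski's Main Theorem, factorization form: a quasi-finite separated
morphism of schemes `f : X ⟶ Y` factors as an open immersion `X ⟶ X'` followed by an
integral morphism `X' ⟶ Y`; if moreover `Y` is quasi-compact and quasi-separated, the
factorization can be chosen with `X' ⟶ Y` finite.  Quasi-finite means of finite type
(i.e. locally of finite type and quasi-compact) with finite fibers. -/
theorem zariski_main_theorem_factorization
    {X Y : AlgebraicGeometry.Scheme} (f : X ⟶ Y)
    [LocallyOfFiniteType f] [QuasiCompact f] [IsSeparated f]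
    (hfib : ∀ y : Y, (f.base ⁻¹' {y}).Finite) :
    (∃ (X' : AlgebraicGeometry.Scheme) (g : X ⟶ X') (h : X' ⟶ Y),
      IsOpenImmersion g ∧ IsIntegralHom h ∧ g ≫ h = f) ∧
    (CompactSpace Y → QuasiSeparatedSpace Y →
      ∃ (X' : AlgebraicGeometry.Scheme) (g : X ⟶ X') (h : X' ⟶ Y),
        IsOpenImmersion g ∧ IsFinite h ∧ g ≫ h = f) := by
  have : LocallyQuasiFinite f := LocallyQuasiFinite.of_finite_preimage_singleton f hfib
  refine ⟨⟨f.normalization, f.toNormalization, f.fromNormalization, inferInstance, inferInstance,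
    f.toNormalization_fromNormalization⟩, fun _ _ ↦ ZMTAux.exists_finite f⟩
end

section
/- Let A ⊆ B be an inclusion of commutative rings such that B is of finite type over A, the induced morphism Spec B → Spec A is quasi-finite, and A is integrally closed in B (every element of B integral over A lies in A). Then Spec B → Spec A is an open immersion. -/
open AlgebraicGeometry CategoryTheory

/-- Let `A ⊆ B` be commutative rings with `B` of finite type over `A`,
`Spec B → Spec A` quasi-finite (finite fibers), and `A` integrally closed in `B`.
Then `Spec B → Spec A` is an open immersion. -/
theorem spec_isOpenImmersion_of_quasiFinite_of_integrallyClosed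
    (A B : Type) [CommRing A] [CommRing B] [Algebra A B]
    (hinj : Function.Injective (algebraMap A B))
    (hft : Algebra.FiniteType A B)
    (hqf : ∀ p : PrimeSpectrum A,
      (PrimeSpectrum.comap (algebraMap A B) ⁻¹' {p}).Finite)
    (hic : ∀ b : B, IsIntegral A b → b ∈ (algebraMap A B).range) :
    IsOpenImmersion (Spec.map (CommRingCat.ofHom (algebraMap A B))) := by
  set φ := CommRingCat.ofHom (algebraMap A B) with hφ
  set f := Spec.map φ with hf
  have h1 : LocallyOfFiniteType f := by
    rw [hf, HasRingHomProperty.Spec_iff (P := @LocallyOfFiniteType)]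
    exact (RingHom.finiteType_algebraMap).mpr hft
  have h2 : LocallyQuasiFinite f := .of_finite_preimage_singleton f hqf
  have h3 : IsOpenImmersion f.toNormalization := inferInstance
  have hnat : (Scheme.ΓSpecIso (.of A)).inv ≫ f.app ⊤ = φ ≫ (Scheme.ΓSpecIso (.of B)).inv :=
    (Scheme.ΓSpecIso_inv_naturality φ).symm
  have hnat' : ∀ a : A, (f.app ⊤).hom ((Scheme.ΓSpecIso (.of A)).inv.hom a) =
      (Scheme.ΓSpecIso (.of B)).inv.hom (algebraMap A B a) := fun a =>
    congr($(hnat).hom a)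
  have hnat2 : f.app ⊤ ≫ (Scheme.ΓSpecIso (.of B)).hom = (Scheme.ΓSpecIso (.of A)).hom ≫ φ :=
    Scheme.ΓSpecIso_naturality φ
  have h4 : IsIso (f.fromNormalization.app ⊤) := by
    rw [f.fromNormalization_app (isAffineOpen_top _)]
    let := (f.app ⊤).hom.toAlgebra
    suffices IsIso (CommRingCat.ofHom (algebraMap Γ(Spec (.of A), ⊤)
      (integralClosure Γ(Spec (.of A), ⊤) Γ(Spec (.of B), f ⁻¹ᵁ ⊤)))) from
        CategoryTheory.IsIso.comp_isIso' this inferInstance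
    rw [ConcreteCategory.isIso_iff_bijective]
    constructor
    · intro x y hxy
      have hxy' : (f.app ⊤).hom x = (f.app ⊤).hom y := congrArg Subtype.val hxy
      apply (Scheme.ΓSpecIso (.of A)).commRingCatIsoToRingEquiv.injective
      apply hinj
      have := congr((Scheme.ΓSpecIso (.of B)).hom.hom $hxy')
      exact (congr($(hnat2).hom x)).symm.trans (this.trans congr($(hnat2).hom y))
    · rintro ⟨x, p, hp, hpx⟩
      obtain ⟨a, ha⟩ := hic ((Scheme.ΓSpecIso (.of B)).hom.hom x)
        ⟨p.map (Scheme.ΓSpecIso (.of A)).hom.hom, hp.map _, by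
          rw [Polynomial.eval₂_map]
          have e : (algebraMap A B).comp (Scheme.ΓSpecIso (.of A)).hom.hom =
            (Scheme.ΓSpecIso (.of B)).hom.hom.comp (f.app ⊤).hom := congr($(hnat2).hom).symm
          rw [e]
          have := congr((Scheme.ΓSpecIso (.of B)).hom.hom $hpx)
          refine (Polynomial.hom_eval₂ p _ _ _).symm.trans (this.trans (map_zero _))⟩
      refine ⟨(Scheme.ΓSpecIso (.of A)).inv.hom a, Subtype.ext ?_⟩
      refine (hnat' a).trans ?_
      rw [ha]
      exact congr($((Scheme.ΓSpecIso (.of B)).hom_inv_id).hom x)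
  have h5 : IsAffine f.normalization := isAffine_of_isAffineHom f.fromNormalization
  have h6 : IsIso f.fromNormalization := by
    have h7 : IsIso f.fromNormalization.appTop := h4
    exact ((MorphismProperty.isomorphisms Scheme).arrow_mk_iso_iff
      (arrowIsoSpecΓOfIsAffine f.fromNormalization)).mpr
      (inferInstanceAs (IsIso (Spec.map f.fromNormalization.appTop)))
  rw [← f.toNormalization_fromNormalization]
  infer_instance
end

section
/- Let f : X → Y be a quasi-compact morphism of schemes that is universally closed and separated and whose fibers X_y = X ×_Y Spec k(y) are affine schemes for every point y ∈ Y. Then f is integral (in particular affine). -/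
open AlgebraicGeometry CategoryTheory CategoryTheory.Limits
universe u
theorem aux_A3 {X N P Q : Scheme.{u}} (ν : X ⟶ N) (i : P ⟶ X) (p : P ⟶ Q) (q : Q ⟶ N)
    (H : IsPullback i p ν q) [IsIso p] [Etale q] (a : Q) :
    ∃ V : N.Opens, q a ∈ V ∧ IsIso (ν ∣_ V) := by
  have hopen : IsOpen (Set.range q) := q.isOpenMap.isOpen_range
  obtain ⟨V, hVdef⟩ : ∃ V : N.Opens, (V : Set N) = Set.range q := ⟨⟨Set.range q, hopen⟩, rfl⟩
  refine ⟨V, ?_, ?_⟩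
  · change q a ∈ (V : Set N)
    rw [hVdef]; exact ⟨a, rfl⟩
  have hV : Set.range q ⊆ Set.range V.ι := by simp [hVdef]
  obtain ⟨q', hq'⟩ : ∃ q' : Q ⟶ V, q' ≫ V.ι = q :=
    ⟨IsOpenImmersion.lift V.ι q hV, IsOpenImmersion.lift_fac _ _ _⟩
  have hs : Surjective q' := by
    constructor
    intro b
    have hb : V.ι b ∈ Set.range q := by
      rw [← hVdef]; exact b.2
    obtain ⟨c, hc⟩ := hb
    refine ⟨c, V.ι.injective ?_⟩
    rw [← hc, ← hq']; rfl
  have he : Etale q' := by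
    have : Etale (q' ≫ V.ι) := hq' ▸ inferInstance
    exact .of_comp q' V.ι
  subst hq'
  have H2 := IsPullback.of_right' H (isPullback_morphismRestrict ν V).flip
  exact MorphismProperty.of_isPullback_of_descendsAlong (P := .isomorphisms _)
    (Q := @Surjective ⊓ @Flat ⊓ @LocallyOfFinitePresentation) H2.flip
    ⟨⟨‹_›, inferInstance⟩, inferInstance⟩ ‹_›

theorem aux_A1 {P T : Scheme.{u}} (g : P ⟶ T) [QuasiCompact g] [QuasiSeparated g]
    (V W : P.Opens) (hVW : IsCompl V W) [IsIntegralHom (V.ι ≫ g)] :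
    ∃ j : (V.ι ≫ g).normalization ⟶ g.normalization, IsOpenImmersion j ∧
      IsPullback V.ι (V.ι ≫ g).toNormalization g.toNormalization j := by
  have hVW' : (W : Set P) = (↑V)ᶜ :=
    eq_compl_iff_isCompl.mpr (hVW.map TopologicalSpace.Opens.frameHom).symm
  have : IsClosedImmersion V.ι := .of_isPreimmersion _ (by simp [eq_compl_comm.mp hVW', W.isOpen])
  have : IsClosedImmersion W.ι := .of_isPreimmersion _ (by simpa [hVW'] using V.2)
  obtain ⟨H⟩ := nonempty_isColimit_binaryCofanMk_of_isCompl V.ι W.ι (by simpa)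
  have hl := Scheme.Hom.toNormalization_inl_normalizationCoprodIso_hom g H
  have hr := Scheme.Hom.toNormalization_inr_normalizationCoprodIso_hom g H
  refine ⟨coprod.inl ≫ (g.normalizationCoprodIso H).hom, inferInstance, ?_⟩
  refine IsPullback.flip ?_
  refine IsOpenImmersion.isPullback _ _ _ _ hl.symm ?_
  ext a
  rw [Scheme.Opens.opensRange_ι]
  constructor
  · rintro ⟨b, hb⟩
    by_contra h
    have haW : a ∈ (W : Set P) := hVW'.ge h
    obtain ⟨w, rfl⟩ : ∃ w : W.toScheme, W.ι w = a := ⟨⟨a, haW⟩, rfl⟩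
    have e1 := congr($hr w)
    rw [Scheme.Hom.comp_apply W.ι, ← hb, Scheme.Hom.comp_apply, Scheme.Hom.comp_apply,
      Scheme.Hom.comp_apply] at e1
    have e3 := (g.normalizationCoprodIso H).hom.injective e1
    exact Set.disjoint_iff_forall_ne.mp
          (isCompl_range_inl_inr (V.ι ≫ g).normalization (W.ι ≫ g).normalization).1 ⟨_, rfl⟩ ⟨_, rfl⟩ e3.symm
  · intro ha
    obtain ⟨w, rfl⟩ : ∃ w : V.toScheme, V.ι w = a := ⟨⟨a, ha⟩, rfl⟩
    exact ⟨(V.ι ≫ g).toNormalization w, congr($hl w)⟩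

theorem aux_A2 {X Y T : Scheme.{u}} (f : X ⟶ Y) [QuasiCompact f] [QuasiSeparated f]
    (t : T ⟶ Y) [Etale t] (V W : (pullback f t).Opens) (hVW : IsCompl V W)
    (hV : IsIntegralHom (V.ι ≫ pullback.snd f t)) (v : V.toScheme) :
    ∃ V' : f.normalization.Opens, f.toNormalization (pullback.fst f t (V.ι v)) ∈ V' ∧
      IsIso (f.toNormalization ∣_ V') := by
  obtain ⟨j, hj, Hj⟩ := aux_A1 (pullback.snd f t) V W hVW
  have hcond : (pullback.snd f t).toNormalization ≫ f.normalizationPullback t ≫ pullback.fst _ _ =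
      pullback.fst _ _ ≫ f.toNormalization := f.toNormalization_normalizationPullback_fst t
  have hsnd : f.normalizationPullback t ≫ pullback.snd _ _ = (pullback.snd f t).fromNormalization :=
    f.normalizationPullback_snd t
  have h1 : IsPullback (f.normalizationPullback t ≫ pullback.fst _ _)
      (pullback.snd f t).fromNormalization f.fromNormalization t := by
    refine IsPullback.of_iso (IsPullback.of_hasPullback f.fromNormalization t)
      (asIso (f.normalizationPullback t)).symm (.refl _) (.refl _) (.refl _) ?_ ?_ ?_ ?_
    all_goals simp
  have h2 : IsPullback (pullback.fst f t) (pullback.snd f t).toNormalization f.toNormalization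
     (f.normalizationPullback t ≫ pullback.fst _ _) := by
    refine IsPullback.of_bot ?_ hcond.symm h1
    rw [Scheme.Hom.toNormalization_fromNormalization, Scheme.Hom.toNormalization_fromNormalization]
    exact .of_hasPullback f t
  have h3 := Hj.paste_horiz h2
  have key := aux_A3 _ _ _ _ h3 ((V.ι ≫ pullback.snd f t).toNormalization v)
  have e1 := congr($(h3.w) v)
  rw [Scheme.Hom.comp_apply _ (j ≫ _), Scheme.Hom.comp_apply _ f.toNormalization] at e1
  rw [Scheme.Hom.comp_apply V.ι] at e1
  rw [← e1] at key
  exact key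

theorem aux_local : IsZariskiLocalAtTarget @IsIntegralHom.{u} :=
  @HasAffineProperty.instIsZariskiLocalAtTarget _ _ IsIntegralHom.hasAffineProperty

theorem aux_iso : MorphismProperty.RespectsIso @IsIntegralHom.{u} :=
  aux_local.toRespects

theorem aux_B1 {XT UT ZT T : Scheme.{u}} (s : XT ⟶ T) [IsSeparated s]
    (k : UT ⟶ XT) [IsOpenImmersion k] (p : UT ⟶ ZT) [IsIntegralHom p] (r : ZT ⟶ T)
    (w : k ≫ s = p ≫ r) (VZ : ZT.Opens) [IsIntegralHom (VZ.ι ≫ r)] (a : UT) (ha : p a ∈ VZ) :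
    ∃ (V W : XT.Opens) (v : V.toScheme), IsCompl V W ∧ IsIntegralHom (V.ι ≫ s) ∧ V.ι v = k a := by
  obtain ⟨i, hi⟩ : ∃ i, i = (p ⁻¹ᵁ VZ).ι ≫ k := ⟨_, rfl⟩
  have hio : IsOpenImmersion i := hi ▸ inferInstance
  have his : IsIntegralHom (i ≫ s) := by
    have : i ≫ s = (p ∣_ VZ) ≫ VZ.ι ≫ r := by
      rw [hi, Category.assoc, w, morphismRestrict_ι_assoc]
    rw [this]
    have : IsIntegralHom (p ∣_ VZ) := inferInstance
    infer_instance
  have hii : IsIntegralHom i := IsIntegralHom.of_comp i s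
  have hcl : IsClosed (Set.range i) := i.isClosedMap.isClosed_range
  obtain ⟨a', ha'⟩ : ∃ a', i a' = k a := by
    obtain ⟨b, rfl⟩ : ∃ b : (p ⁻¹ᵁ VZ).toScheme, (p ⁻¹ᵁ VZ).ι b = a := ⟨⟨a, ha⟩, rfl⟩
    exact ⟨b, by rw [hi, Scheme.Hom.comp_apply]⟩
  refine ⟨i.opensRange, ⟨(Set.range i)ᶜ, hcl.isOpen_compl⟩, i.isoOpensRange.hom a', ?_, ?_, ?_⟩
  · simp [isCompl_iff, disjoint_iff, codisjoint_iff, SetLike.ext'_iff]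
  · have := aux_iso
    rw [← MorphismProperty.cancel_left_of_respectsIso @IsIntegralHom i.isoOpensRange.hom]
    rwa [Scheme.Hom.isoOpensRange_hom_ι_assoc]
  · rw [← Scheme.Hom.comp_apply, Scheme.Hom.isoOpensRange_hom_ι, ha']

theorem aux_B {X Y U Z : Scheme.{u}} (f : X ⟶ Y) [QuasiCompact f] [IsSeparated f]
    (j : U ⟶ X) [IsOpenImmersion j] (h : U ⟶ Z) [IsIntegralHom h] (q : Z ⟶ Y)
    [LocallyOfFiniteType q] [IsSeparated q] (w : j ≫ f = h ≫ q) (x : U)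
    (hx : q.QuasiFiniteAt (h x)) :
    ∃ V' : f.normalization.Opens, f.toNormalization (j x) ∈ V' ∧
      IsIso (f.toNormalization ∣_ V') := by
  obtain ⟨T, t, _, -, VZ, WZ, vZ, hc, hfin, hv⟩ := exists_etale_isCompl_of_quasiFiniteAt q rfl hx
  have P1 : IsPullback (pullback.fst h (pullback.fst q t))
      (pullback.snd h (pullback.fst q t) ≫ pullback.snd q t) (j ≫ f) t := by
    rw [w]
    exact IsPullback.paste_vert (.of_hasPullback _ _) (.of_hasPullback _ _)
  have P2 := IsPullback.of_bot' P1 (.of_hasPullback f t)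
  have hks := (IsPullback.of_hasPullback f t).lift_snd (pullback.fst h (pullback.fst q t) ≫ j)
    (pullback.snd h (pullback.fst q t) ≫ pullback.snd q t) (by simpa using P1.w)
  have hkf := (IsPullback.of_hasPullback f t).lift_fst (pullback.fst h (pullback.fst q t) ≫ j)
    (pullback.snd h (pullback.fst q t) ≫ pullback.snd q t) (by simpa using P1.w)
  generalize (IsPullback.of_hasPullback f t).lift _ _ _ = k at *
  have hk : IsOpenImmersion k := MorphismProperty.of_isPullback P2 ‹IsOpenImmersion j›
  obtain ⟨a, ha1, ha2⟩ := Scheme.Pullback.exists_preimage_pullback (f := h) (g := pullback.fst q t)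
    x vZ.1 hv.symm
  obtain ⟨V, W, v, h1, h2, h3⟩ := aux_B1 (pullback.snd f t) k (pullback.snd h (pullback.fst q t))
    (pullback.snd q t) hks VZ a (by rw [ha2]; exact vZ.2)
  have key := aux_A2 f t V W h1 h2 v
  have e : pullback.fst f t (k a) = j x := by
    rw [← Scheme.Hom.comp_apply, hkf, Scheme.Hom.comp_apply, ha1]
  rwa [h3, e] at key
theorem aux_T0 {A : Scheme.{u}} {K : CommRingCat.{u}} (hK : IsField K) (g : A ⟶ Spec K)
    [IsIntegralHom g] (a b : A) (hab : a ⤳ b) : a = b := by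
  have : IsAffine A := isAffine_of_isAffineHom g
  obtain ⟨φ, hφ⟩ := Spec.map_surjective (A.isoSpec.inv ≫ g)
  have h1 : IsIntegralHom (Spec.map φ) := hφ ▸ inferInstance
  rw [IsIntegralHom.SpecMap_iff] at h1
  apply A.isoSpec.hom.injective
  have h2 : A.isoSpec.hom a ⤳ A.isoSpec.hom b := hab.map A.isoSpec.hom.continuous
  generalize A.isoSpec.hom a = p at *
  generalize A.isoSpec.hom b = q at *
  let _ := φ.hom.toAlgebra
  have : Algebra.IsIntegral K Γ(A, ⊤) := ⟨h1⟩
  let _ := hK.toField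
  have hpp : p.asIdeal.IsPrime := p.2
  have : p.asIdeal.IsMaximal := by
    apply Ideal.isMaximal_of_isIntegral_of_isMaximal_comap (R := K)
    have : (p.asIdeal.comap (algebraMap K Γ(A, ⊤))).IsPrime := inferInstance
    have h0 : (⊥ : Ideal K).IsMaximal := Ideal.bot_isMaximal
    rw [Ideal.eq_bot_of_prime (p.asIdeal.comap (algebraMap K Γ(A, ⊤)))]
    exact h0
  have h3 : p.asIdeal ≤ q.asIdeal := (PrimeSpectrum.le_iff_specializes p q).mpr h2
  exact PrimeSpectrum.ext (this.eq_of_le q.2.ne_top h3)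

theorem aux_T {X Y : Scheme.{u}} (f : X ⟶ Y) [UniversallyClosed f]
    (hfib : ∀ y : Y, IsAffine (pullback f (Y.fromSpecResidueField y)))
    (a b : X) (hab : a ⤳ b) (hf : f a = f b) : a = b := by
  have h1 := hfib (f b)
  have h2 : IsIntegralHom (f.fiberToSpecResidueField (f b)) :=
    show IsIntegralHom (pullback.snd f (Y.fromSpecResidueField (f b))) from
    IsIntegralHom.iff_universallyClosed_and_isAffineHom.mpr ⟨inferInstance, inferInstance⟩
  have hr := f.range_fiberι (f b)
  obtain ⟨a', rfl⟩ : a ∈ Set.range (f.fiberι (f b)) := by rw [hr]; exact hf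
  obtain ⟨b', hb'⟩ : b ∈ Set.range (f.fiberι (f b)) := by rw [hr]; rfl
  have h3 : a' ⤳ b' := by
    rw [← (f.fiberι (f b)).isEmbedding.toIsInducing.specializes_iff, hb']
    exact hab
  have e : a' = b' := aux_T0 (Field.toIsField (Y.residueField (f b)))
    (f.fiberToSpecResidueField (f b)) _ _ h3
  exact (congrArg _ e).trans hb'

open TopologicalSpace in
theorem aux_top {F : Type*} [TopologicalSpace F] [NoetherianSpace F] [QuasiSober F]
    (h : ∀ a b : F, a ⤳ b → a = b) : Finite F := by
  have h1 := NoetherianSpace.finite_irreducibleComponents (α := F)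
  have : Finite (irreducibleComponents F) := h1
  refine Finite.of_injective (β := irreducibleComponents F)
    (fun a => ⟨irreducibleComponent a, irreducibleComponent_mem_irreducibleComponents a⟩) ?_
  intro a b hab
  have hab' : irreducibleComponent a = irreducibleComponent b := congrArg Subtype.val hab
  obtain ⟨g, hg⟩ := QuasiSober.sober (isIrreducible_irreducibleComponent (x := a))
    isClosed_irreducibleComponent
  have ha := h g a (hg.specializes mem_irreducibleComponent)
  have hb := h g b (hg.specializes (hab' ▸ mem_irreducibleComponent))
  rw [← ha, ← hb]

theorem aux_D {Z Y : Scheme.{u}} (q : Z ⟶ Y) [LocallyOfFiniteType q] [QuasiCompact q]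
    (h : ∀ a b : Z, a ⤳ b → q a = q b → a = b) : LocallyQuasiFinite q := by
  refine LocallyQuasiFinite.of_finite_preimage_singleton q fun y => ?_
  have : LocallyOfFiniteType (q.fiberToSpecResidueField y) :=
    show LocallyOfFiniteType (pullback.snd _ _) from inferInstance
  have : IsLocallyNoetherian (q.fiber y) :=
    LocallyOfFiniteType.isLocallyNoetherian (q.fiberToSpecResidueField y)
  have : IsNoetherian (q.fiber y) := {}
  have : Finite (q.fiber y) := by
    refine aux_top fun a b hab => ?_
    apply (q.fiberι y).isEmbedding.injective
    refine h _ _ (hab.map (q.fiberι y).continuous) ?_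
    have h1 : ∀ c, q (q.fiberι y c) = y := fun c => by
      have : q.fiberι y c ∈ Set.range (q.fiberι y) := ⟨c, rfl⟩
      rw [q.range_fiberι y] at this
      exact this
    rw [h1, h1]
  rw [← q.range_fiberι y]
  exact Set.finite_range _
theorem aux_fin {A B G : Type*} [CommRing A] [CommRing B] [CommRing G] (β : A →+* G) (γ : B →+* G)
    (hβ : β.FiniteType) (h : β.range ⊔ γ.range = ⊤) :
    ∃ S : Finset B, β.range ⊔ Subring.closure (γ '' (S : Set B)) = ⊤ := by
  classical
  have mono : ∀ S T : Finset B, S ⊆ T → β.range ⊔ Subring.closure (γ '' (S : Set B)) ≤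
      β.range ⊔ Subring.closure (γ '' (T : Set B)) := fun S T hST =>
    sup_le_sup_left (Subring.closure_mono (Set.image_mono (by simpa using hST))) _
  have key : ∀ x : G, ∃ S : Finset B, x ∈ β.range ⊔ Subring.closure (γ '' (S : Set B)) := by
    intro x
    have hx : x ∈ Subring.closure ((β.range : Set G) ∪ γ.range) := by
      rw [Subring.closure_union, Subring.closure_eq, Subring.closure_eq, h]; trivial
    induction hx using Subring.closure_induction with
    | mem x hx =>
      rcases hx with hx | ⟨b, rfl⟩
      · exact ⟨∅, (le_sup_left : β.range ≤ _) hx⟩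
      · exact ⟨{b}, (le_sup_right : _ ≤ β.range ⊔ _) (Subring.subset_closure ⟨b, by simp, rfl⟩)⟩
    | zero => exact ⟨∅, zero_mem _⟩
    | one => exact ⟨∅, one_mem _⟩
    | add x y _ _ hx hy =>
      obtain ⟨S, hS⟩ := hx; obtain ⟨T, hT⟩ := hy
      exact ⟨S ∪ T, add_mem (mono _ _ Finset.subset_union_left hS)
        (mono _ _ Finset.subset_union_right hT)⟩
    | mul x y _ _ hx hy =>
      obtain ⟨S, hS⟩ := hx; obtain ⟨T, hT⟩ := hy
      exact ⟨S ∪ T, mul_mem (mono _ _ Finset.subset_union_left hS)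
        (mono _ _ Finset.subset_union_right hT)⟩
    | neg x _ hx =>
      obtain ⟨S, hS⟩ := hx
      exact ⟨S, neg_mem hS⟩
  choose F hF using key
  let _ := β.toAlgebra
  obtain ⟨t, ht⟩ := (show Algebra.FiniteType A G from hβ).out
  refine ⟨t.biUnion F, top_le_iff.mp fun x _ => ?_⟩
  have hx : x ∈ Algebra.adjoin A (t : Set G) := by rw [ht]; trivial
  induction hx using Algebra.adjoin_induction with
  | mem x hx => exact mono _ _ (Finset.subset_biUnion_of_mem F hx) (hF x)
  | algebraMap r => exact (le_sup_left : β.range ≤ _) ⟨r, rfl⟩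
  | add x y _ _ hx hy => exact add_mem (hx trivial) (hy trivial)
  | mul x y _ _ hx hy => exact mul_mem (hx trivial) (hy trivial)

open TensorProduct in
theorem aux_CI {R D A G : CommRingCat.{u}} (δ : R ⟶ D) (ε : R ⟶ A) (α : D ⟶ G) (β : A ⟶ G)
    (l : Spec G ⟶ pullback (Spec.map δ) (Spec.map ε))
    (h1 : l ≫ pullback.fst _ _ = Spec.map α) (h2 : l ≫ pullback.snd _ _ = Spec.map β) :
    IsClosedImmersion l ↔ β.hom.range ⊔ α.hom.range = ⊤ := by
  let _ := δ.hom.toAlgebra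
  let _ := ε.hom.toAlgebra
  obtain ⟨e, he⟩ : ∃ e : pullback (Spec.map δ) (Spec.map ε) ≅ Spec (.of (D ⊗[R] A)),
    e = pullbackSpecIso R D A := ⟨_, rfl⟩
  have e1 : e.hom ≫ Spec.map (CommRingCat.ofHom Algebra.TensorProduct.includeLeftRingHom) =
    pullback.fst (Spec.map δ) (Spec.map ε) := by rw [he]; exact pullbackSpecIso_hom_fst R D A
  have e2 : e.hom ≫ Spec.map (CommRingCat.ofHom (R := A) (S := D ⊗[R] A)
      (RingHomClass.toRingHom Algebra.TensorProduct.includeRight)) =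
    pullback.snd (Spec.map δ) (Spec.map ε) := by rw [he]; exact pullbackSpecIso_hom_snd R D A
  obtain ⟨m, hm⟩ := Spec.map_surjective (l ≫ e.hom)
  have m1 : ∀ d : D, m.hom (d ⊗ₜ[R] (1 : A)) = α.hom d := by
    have : CommRingCat.ofHom Algebra.TensorProduct.includeLeftRingHom ≫ m = α := by
      apply Spec.map_injective
      rw [Spec.map_comp, hm, Category.assoc, e1, h1]
    intro d
    rw [← this]; rfl
  have m2 : ∀ a : A, m.hom ((1 : D) ⊗ₜ[R] a) = β.hom a := by
    have : CommRingCat.ofHom (R := A) (S := D ⊗[R] A)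
      (RingHomClass.toRingHom Algebra.TensorProduct.includeRight) ≫ m = β := by
      apply Spec.map_injective
      rw [Spec.map_comp, hm, Category.assoc, e2, h2]
    intro d
    rw [← this]; rfl
  have hr : m.hom.range = β.hom.range ⊔ α.hom.range := by
    apply le_antisymm
    · rintro _ ⟨x, rfl⟩
      induction x using TensorProduct.induction_on with
      | zero => rw [map_zero]; exact zero_mem _
      | add x y hx hy => rw [map_add]; exact add_mem hx hy
      | tmul d a =>
        have : d ⊗ₜ[R] a = (d ⊗ₜ[R] (1 : A)) * ((1 : D) ⊗ₜ[R] a) := by simp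
        rw [this, map_mul, m1, m2]
        exact mul_mem ((le_sup_right : _ ≤ β.hom.range ⊔ _) ⟨d, rfl⟩)
          ((le_sup_left : β.hom.range ≤ _) ⟨a, rfl⟩)
    · apply sup_le
      · rintro _ ⟨a, rfl⟩
        exact ⟨_, m2 a⟩
      · rintro _ ⟨a, rfl⟩
        exact ⟨_, m1 a⟩
  rw [← hr, RingHom.range_eq_top, ← MorphismProperty.cancel_right_of_respectsIso @IsClosedImmersion _ e.hom, ← hm]
  constructor
  · intro h
    obtain ⟨I, e', he'⟩ := IsClosedImmersion.Spec_iff.mp h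
    obtain ⟨n, hn⟩ := Spec.map_surjective e'.hom
    have hn' : IsIso (Spec.map n) := hn ▸ inferInstance
    rw [isIso_SpecMap_iff] at hn'
    have : m = CommRingCat.ofHom (Ideal.Quotient.mk I) ≫ n := by
      apply Spec.map_injective
      rw [he', Spec.map_comp, hn]
    rw [this, CommRingCat.hom_comp, RingHom.coe_comp]
    exact hn'.2.comp Ideal.Quotient.mk_surjective
  · intro h
    exact IsClosedImmersion.spec_of_surjective _ h

theorem aux_C2 {X : Scheme.{u}} {R B A : CommRingCat.{u}} (f : X ⟶ Spec R) [IsSeparated f]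
    (j : Spec B ⟶ X) [IsOpenImmersion j] (w : Spec A ⟶ X) (φ : R ⟶ B) (ε : R ⟶ A)
    (hφ : j ≫ f = Spec.map φ) (hε : w ≫ f = Spec.map ε) :
    ∃ S : Finset B, ∀ (D : CommRingCat.{u}) (δ : R ⟶ D) (ι : D ⟶ B), (S : Set B) ⊆ ι.hom.range →
      ∀ l : pullback j w ⟶ pullback (Spec.map δ) (Spec.map ε),
        l ≫ pullback.fst _ _ = pullback.fst _ _ ≫ Spec.map ι →
        l ≫ pullback.snd _ _ = pullback.snd _ _ → IsClosedImmersion l := by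
  obtain ⟨l0, hl0, hl1, hl2⟩ : ∃ l0 : pullback j w ⟶ pullback (Spec.map φ) (Spec.map ε),
      IsClosedImmersion l0 ∧ l0 ≫ pullback.fst _ _ = pullback.fst _ _ ∧
      l0 ≫ pullback.snd _ _ = pullback.snd _ _ :=
    ⟨pullback.mapDesc j w f ≫ (pullback.congrHom hφ hε).hom, inferInstance,
      by
        have e1 : (pullback.congrHom hφ hε).hom ≫ pullback.fst _ _ = pullback.fst _ _ ≫ 𝟙 _ :=
          pullback.lift_fst _ _ _
        have e2 : pullback.mapDesc j w f ≫ pullback.fst _ _ = pullback.fst _ _ ≫ 𝟙 _ :=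
          pullback.lift_fst _ _ _
        rw [Category.assoc, e1, Category.comp_id, e2, Category.comp_id], by
        have e1 : (pullback.congrHom hφ hε).hom ≫ pullback.snd _ _ = pullback.snd _ _ ≫ 𝟙 _ :=
          pullback.lift_snd _ _ _
        have e2 : pullback.mapDesc j w f ≫ pullback.snd _ _ = pullback.snd _ _ ≫ 𝟙 _ :=
          pullback.lift_snd _ _ _
        rw [Category.assoc, e1, Category.comp_id, e2, Category.comp_id]⟩
  have : IsAffine (pullback j w) := isAffine_of_isAffineHom l0
  obtain ⟨G, ⟨e⟩⟩ : ∃ G : CommRingCat.{u}, Nonempty (Spec G ≅ pullback j w) :=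
    ⟨_, ⟨(pullback j w).isoSpec.symm⟩⟩
  obtain ⟨γ, hγ⟩ := Spec.map_surjective (e.hom ≫ pullback.fst j w)
  obtain ⟨β, hβ⟩ := Spec.map_surjective (e.hom ≫ pullback.snd j w)
  have h0 : IsClosedImmersion (e.hom ≫ l0) := inferInstance
  rw [aux_CI φ ε γ β (e.hom ≫ l0) (by rw [Category.assoc, hl1, hγ])
    (by rw [Category.assoc, hl2, hβ])] at h0
  have hft : β.hom.FiniteType := by
    rw [← HasRingHomProperty.Spec_iff (P := @LocallyOfFiniteType), hβ]
    infer_instance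
  obtain ⟨S, hS⟩ := aux_fin β.hom γ.hom hft h0
  refine ⟨S, fun D δ ι hSι l h1 h2 => ?_⟩
  rw [← MorphismProperty.cancel_left_of_respectsIso @IsClosedImmersion e.hom,
    aux_CI δ ε (ι ≫ γ) β (e.hom ≫ l)
      (by rw [Category.assoc, h1, Spec.map_comp, hγ, Category.assoc])
      (by rw [Category.assoc, h2, hβ]), ← top_le_iff, ← hS]
  refine sup_le_sup_left (Subring.closure_le.mpr ?_) _
  rintro _ ⟨b, hb, rfl⟩
  obtain ⟨d, rfl⟩ := hSι hb
  exact ⟨d, rfl⟩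

theorem aux_C3 {X B Z Y : Scheme.{u}} (f : X ⟶ Y) (q : Z ⟶ Y) (h : B ⟶ Z) (j : B ⟶ X)
    (w : h ≫ q = j ≫ f) {W : Scheme.{u}} (i : W ⟶ X)
    (l : pullback j i ⟶ pullback q (i ≫ f))
    (h1 : l ≫ pullback.fst _ _ = pullback.fst _ _ ≫ h)
    (h2 : l ≫ pullback.snd _ _ = pullback.snd _ _) :
    IsPullback (pullback.fst j i) l (pullback.lift h j w)
      (pullback.map q (i ≫ f) q f (𝟙 _) i (𝟙 _) (by simp) (by simp)) := by
  obtain ⟨p, hp, hp1, hp2⟩ : ∃ p, p = pullback.map q (i ≫ f) q f (𝟙 _) i (𝟙 _)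
      (by simp) (by simp) ∧ p ≫ pullback.fst q f = pullback.fst q (i ≫ f) ∧
      p ≫ pullback.snd q f = pullback.snd q (i ≫ f) ≫ i :=
    ⟨pullback.map q (i ≫ f) q f (𝟙 _) i (𝟙 _) (by simp) (by simp), rfl,
      (pullback.lift_fst _ _ _).trans (Category.comp_id _), pullback.lift_snd _ _ _⟩
  rw [← hp]
  have s2 : IsPullback p (pullback.snd q (i ≫ f)) (pullback.snd q f) i := by
    refine IsPullback.of_right (t := IsPullback.of_hasPullback q f) ?_ hp2
    rw [hp1]
    exact .of_hasPullback _ _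
  refine IsPullback.of_bot (t := s2) ?_ ?_
  · rw [h2, pullback.lift_snd]
    exact .of_hasPullback _ _
  · apply pullback.hom_ext
    · rw [Category.assoc, Category.assoc, pullback.lift_fst, hp1, h1]
    · rw [Category.assoc, Category.assoc, pullback.lift_snd, hp2, pullback.condition,
        reassoc_of% h2]

theorem aux_C4 {X : Scheme.{u}} {R B : CommRingCat.{u}} (f : X ⟶ Spec R) [IsSeparated f]
    [CompactSpace X] [UniversallyClosed f]
    (j : Spec B ⟶ X) [IsOpenImmersion j] (φ : R ⟶ B) (hφ : j ≫ f = Spec.map φ) :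
    ∃ S : Finset B, ∀ (D : CommRingCat.{u}) (δ : R ⟶ D) (ι : D ⟶ B), (S : Set B) ⊆ ι.hom.range →
      δ ≫ ι = φ → IsIntegralHom (Spec.map ι) := by
  classical
  obtain ⟨𝒰, hfin, h𝒰⟩ : ∃ 𝒰 : X.OpenCover, Finite 𝒰.I₀ ∧
      ∀ i, ∃ A : CommRingCat.{u}, 𝒰.X i = Spec A :=
    ⟨X.affineCover.finiteSubcover, inferInstance, fun i => ⟨_, rfl⟩⟩
  have := Fintype.ofFinite 𝒰.I₀
  have key : ∀ i : 𝒰.I₀, ∃ S : Finset B, ∀ (D : CommRingCat.{u}) (δ : R ⟶ D) (ι : D ⟶ B),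
      (S : Set B) ⊆ ι.hom.range →
      ∀ l : pullback j (𝒰.f i) ⟶ pullback (Spec.map δ) (𝒰.f i ≫ f),
        l ≫ pullback.fst _ _ = pullback.fst _ _ ≫ Spec.map ι →
        l ≫ pullback.snd _ _ = pullback.snd _ _ → IsClosedImmersion l := by
    intro i
    obtain ⟨A, hA⟩ := h𝒰 i
    generalize 𝒰.f i = w
    generalize 𝒰.X i = W at w hA
    subst hA
    obtain ⟨ε, hε⟩ := Spec.map_surjective (w ≫ f)
    rw [← hε]
    exact aux_C2 f j w φ ε hφ hε.symm
  choose S hS using key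
  refine ⟨Finset.univ.biUnion S, fun D δ ι hSι hD => ?_⟩
  have w : Spec.map ι ≫ Spec.map δ = j ≫ f := by rw [← Spec.map_comp, hD, hφ]
  have H : ∀ i : 𝒰.I₀, IsClosedImmersion (pullback.snd (pullback.lift (Spec.map ι) j w)
      (pullback.map (Spec.map δ) (𝒰.f i ≫ f) (Spec.map δ) f (𝟙 _) (𝒰.f i) (𝟙 _)
        (by simp) (by simp))) := by
    intro i
    have hl : (pullback.fst j (𝒰.f i) ≫ Spec.map ι) ≫ Spec.map δ =
      pullback.snd j (𝒰.f i) ≫ 𝒰.f i ≫ f := by rw [Category.assoc, w, pullback.condition_assoc]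
    have hsq := aux_C3 f (Spec.map δ) (Spec.map ι) j w (𝒰.f i)
      (pullback.lift (pullback.fst _ _ ≫ Spec.map ι) (pullback.snd _ _) hl)
      (pullback.lift_fst _ _ _) (pullback.lift_snd _ _ _)
    have hci := hS i D δ ι ((Finset.coe_subset.mpr
      (Finset.subset_biUnion_of_mem S (Finset.mem_univ i))).trans hSι)
      (pullback.lift (pullback.fst _ _ ≫ Spec.map ι) (pullback.snd _ _) hl)
      (pullback.lift_fst _ _ _) (pullback.lift_snd _ _ _)
    rw [← hsq.isoPullback_inv_snd]
    infer_instance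
  have hcl : IsClosedImmersion (pullback.lift (Spec.map ι) j w) :=
    IsZariskiLocalAtTarget.of_openCover (P := @IsClosedImmersion)
      (Scheme.Pullback.openCoverOfRight 𝒰 (Spec.map δ) f) fun i => H i
  have h1 : Spec.map ι = pullback.lift (Spec.map ι) j w ≫ pullback.fst _ _ :=
    (pullback.lift_fst _ _ _).symm
  have h2 : UniversallyClosed (Spec.map ι) := by
    rw [h1]; infer_instance
  exact IsIntegralHom.iff_universallyClosed_and_isAffineHom.mpr ⟨h2, inferInstance⟩

theorem aux_D2 {U Z Y : Scheme.{u}} (h : U ⟶ Z) (q : Z ⟶ Y) [LocallyOfFiniteType q]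
    [QuasiCompact q] [IsIntegralHom h] [Surjective h]
    (H : ∀ a b : U, a ⤳ b → (h ≫ q) a = (h ≫ q) b → a = b) : LocallyQuasiFinite q := by
  refine aux_D q fun a b hab hq => ?_
  obtain ⟨u, rfl⟩ := h.surjective a
  have hc : IsClosed (h '' closure {u}) := h.isClosedMap _ isClosed_closure
  have hb : b ∈ h '' closure {u} := by
    refine closure_minimal ?_ hc (specializes_iff_mem_closure.mp hab)
    simpa using ⟨u, subset_closure rfl, rfl⟩
  obtain ⟨v, hv, rfl⟩ := hb
  rw [H u v (specializes_iff_mem_closure.mpr hv) (by simpa using hq)]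

theorem aux_C5 {X : Scheme.{u}} {R B : CommRingCat.{u}} (f : X ⟶ Spec R) [IsSeparated f]
    [CompactSpace X] [UniversallyClosed f]
    (j : Spec B ⟶ X) [IsOpenImmersion j] : ∃ (D : CommRingCat.{u}) (δ : R ⟶ D) (ι : D ⟶ B),
      j ≫ f = Spec.map ι ≫ Spec.map δ ∧ IsIntegralHom (Spec.map ι) ∧
      Surjective (Spec.map ι) ∧ LocallyOfFiniteType (Spec.map δ) := by
  obtain ⟨φ, hφ⟩ := Spec.map_surjective (j ≫ f)
  obtain ⟨S, hS⟩ := aux_C4 f j φ hφ.symm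
  let _ := φ.hom.toAlgebra
  let D := Algebra.adjoin R (S : Set B)
  have hcomp : CommRingCat.ofHom (algebraMap R D) ≫ CommRingCat.ofHom (D.val : D →+* B) = φ := by
    ext x; rfl
  have hintegral : IsIntegralHom (Spec.map (CommRingCat.ofHom (D.val : D →+* B))) := by
    refine hS _ (CommRingCat.ofHom (algebraMap R D)) _ ?_ hcomp
    intro s hs
    exact ⟨⟨s, Algebra.subset_adjoin hs⟩, rfl⟩
  refine ⟨.of D, CommRingCat.ofHom (algebraMap R D), CommRingCat.ofHom (D.val : D →+* B),
    ?_, hintegral, ?_, ?_⟩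
  · rw [← Spec.map_comp, hcomp, hφ]
  · rw [IsIntegralHom.SpecMap_iff] at hintegral
    constructor
    exact hintegral.comap_surjective Subtype.val_injective
  · rw [HasRingHomProperty.Spec_iff (P := @LocallyOfFiniteType)]
    have : Algebra.FiniteType R D := D.fg_iff_finiteType.mp ⟨S, rfl⟩
    exact (RingHom.finiteType_algebraMap).mpr this

theorem aux_E {X : Scheme.{u}} {R : CommRingCat.{u}} (f : X ⟶ Spec R) [QuasiCompact f]
    [IsSeparated f] [UniversallyClosed f]
    (H : ∀ a b : X, a ⤳ b → f a = f b → a = b) : IsIntegralHom f := by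
  have : CompactSpace X := QuasiCompact.compactSpace_of_compactSpace f
  have h1 : ∀ x : X, ∃ V' : f.normalization.Opens, f.toNormalization x ∈ V' ∧
      IsIso (f.toNormalization ∣_ V') := by
    intro x
    obtain ⟨B, j, hj, u, rfl⟩ : ∃ (B : CommRingCat.{u}) (j : Spec B ⟶ X), IsOpenImmersion j ∧
        ∃ u, j u = x :=
      ⟨_, X.affineCover.f (X.affineCover.idx x), X.affineCover.map_prop _, X.affineCover.covers x⟩
    obtain ⟨D, δ, ι, w, _, _, _⟩ := aux_C5 f j
    have : LocallyQuasiFinite (Spec.map δ) := by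
      refine aux_D2 (Spec.map ι) (Spec.map δ) fun a b hab hq => ?_
      rw [← w] at hq
      exact j.injective (H _ _ (hab.map j.continuous) (by simpa using hq))
    exact aux_B f j (Spec.map ι) (Spec.map δ) w u ((Spec.map δ).quasiFiniteAt _)
  have hu : UniversallyClosed f.toNormalization := by
    have : UniversallyClosed (f.toNormalization ≫ f.fromNormalization) := by
      rw [Scheme.Hom.toNormalization_fromNormalization]; infer_instance
    exact UniversallyClosed.of_comp_of_isSeparated f.toNormalization f.fromNormalization
  have hs : Surjective f.toNormalization := by
    constructor
    rw [← Set.range_eq_univ, ← f.toNormalization.isClosedMap.isClosed_range.closure_eq]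
    exact f.toNormalization.denseRange.closure_eq
  have : IsIso f.toNormalization := by
    change MorphismProperty.isomorphisms _ f.toNormalization
    refine IsZariskiLocalAtTarget.of_forall_exists_morphismRestrict
      (P := .isomorphisms _) fun z => ?_
    obtain ⟨x, rfl⟩ := f.toNormalization.surjective z
    exact h1 x
  rw [← f.toNormalization_fromNormalization]
  infer_instance

theorem isIntegralHom_of_universallyClosed_of_affine_fibers
    {X Y : AlgebraicGeometry.Scheme} (f : X ⟶ Y)
    [QuasiCompact f] [IsSeparated f] [UniversallyClosed f]
    (hfib : ∀ y : Y, IsAffine (pullback f (Y.fromSpecResidueField y))) :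
    IsIntegralHom f := by
  have := aux_local
  refine IsZariskiLocalAtTarget.of_openCover (P := @IsIntegralHom) Y.affineCover fun i => ?_
  have : ∀ (R : CommRingCat) (s : Spec R ⟶ Y), IsOpenImmersion s →
      IsIntegralHom (pullback.snd f s) := by
    intro R s _
    refine aux_E _ fun a b hab hq => ?_
    refine (pullback.fst f s).injective
      (aux_T f hfib _ _ (hab.map (pullback.fst f s).continuous) ?_)
    rw [← Scheme.Hom.comp_apply, ← Scheme.Hom.comp_apply, pullback.condition,
      Scheme.Hom.comp_apply, Scheme.Hom.comp_apply, hq]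
  exact this _ _ (Y.affineCover.map_prop i)
end

section
/- Let A be a commutative ring and B an A-algebra. Then B is of finite presentation over A if and only if for every filtered direct system (C_λ) of A-algebras with colimit C, the natural map colim_λ Hom_{A-alg}(B, C_λ) → Hom_{A-alg}(B, C) is bijective. -/
universe u

/-- A presentation of the commutative `A`-algebra `D` as the colimit of a filtered
direct system of `A`-algebras. -/
structure FilteredAlgebraColimitPresentation (A : Type u) [CommRing A]
    (D : Type u) [CommRing D] [Algebra A D] where
  /-- the index type of the system -/
  ι : Type u
  [pre : Preorder ι]
  [dir : IsDirected ι (· ≤ ·)]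
  [nonempty : Nonempty ι]
  /-- the terms of the system -/
  C : ι → Type u
  [ring : ∀ i, CommRing (C i)]
  [alg : ∀ i, Algebra A (C i)]
  /-- the transition maps -/
  t : ∀ i j, i ≤ j → (C i →ₐ[A] C j)
  t_id : ∀ i, t i i le_rfl = AlgHom.id A (C i)
  t_comp : ∀ i j k (hij : i ≤ j) (hjk : j ≤ k),
    (t j k hjk).comp (t i j hij) = t i k (hij.trans hjk)
  /-- the maps to the colimit -/
  f : ∀ i, C i →ₐ[A] D
  f_comp : ∀ i j (hij : i ≤ j), (f j).comp (t i j hij) = f i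
  /-- `D` is the colimit: the maps `f i` are jointly surjective … -/
  jointly_surjective : ∀ d : D, ∃ i c, f i c = d
  /-- … and elements identified in `D` are identified at some finite stage -/
  eventually_eq : ∀ i (x y : C i), f i x = f i y →
    ∃ j, ∃ hij : i ≤ j, t i j hij x = t i j hij y

attribute [instance] FilteredAlgebraColimitPresentation.pre
  FilteredAlgebraColimitPresentation.dir
  FilteredAlgebraColimitPresentation.nonempty
  FilteredAlgebraColimitPresentation.ring
  FilteredAlgebraColimitPresentation.alg

namespace FilteredAlgebraColimitPresentation

variable {A : Type u} [CommRing A] {D : Type u} [CommRing D] [Algebra A D]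
  (P : FilteredAlgebraColimitPresentation A D)

lemma t_t {i j k : P.ι} (hij : i ≤ j) (hjk : j ≤ k) (x : P.C i) :
    P.t j k hjk (P.t i j hij x) = P.t i k (hij.trans hjk) x :=
  DFunLike.congr_fun (P.t_comp i j k hij hjk) x

lemma f_t {i j : P.ι} (hij : i ≤ j) (x : P.C i) : P.f j (P.t i j hij x) = P.f i x :=
  DFunLike.congr_fun (P.f_comp i j hij) x

lemma exists_eq_of_finite {T : Type*} [Finite T] (i : P.ι) (a b : T → P.C i)
    (h : ∀ x, P.f i (a x) = P.f i (b x)) :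
    ∃ j, ∃ hij : i ≤ j, ∀ x, P.t i j hij (a x) = P.t i j hij (b x) := by
  choose j hj he using fun x => P.eventually_eq i (a x) (b x) (h x)
  obtain ⟨k, hk⟩ := Finite.exists_le j
  obtain ⟨l, hil, hkl⟩ := exists_ge_ge i k
  refine ⟨l, hil, fun x => ?_⟩
  rw [← P.t_t (hj x) ((hk x).trans hkl), he, P.t_t]

lemma exists_lift_of_finite {T : Type*} [Finite T] (d : T → D) :
    ∃ i, ∃ c : T → P.C i, ∀ x, P.f i (c x) = d x := by
  choose i c hc using fun x => P.jointly_surjective (d x)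
  obtain ⟨k, hk⟩ := Finite.exists_le i
  exact ⟨k, fun x => P.t _ _ (hk x) (c x), fun x => by rw [P.f_t, hc]⟩

lemma hom_injective {B : Type*} [CommRing B] [Algebra A B] [Algebra.FiniteType A B]
    (i j : P.ι) (g : B →ₐ[A] P.C i) (g' : B →ₐ[A] P.C j)
    (h : (P.f i).comp g = (P.f j).comp g') :
    ∃ k, ∃ hik : i ≤ k, ∃ hjk : j ≤ k,
      (P.t i k hik).comp g = (P.t j k hjk).comp g' := by
  obtain ⟨s, hs⟩ := (inferInstance : Algebra.FiniteType A B).out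
  obtain ⟨l, hil, hjl⟩ := exists_ge_ge i j
  obtain ⟨k, hlk, hk⟩ := P.exists_eq_of_finite (T := s) l
    (fun x => P.t i l hil (g x)) (fun x => P.t j l hjl (g' x)) (fun x => by
      rw [P.f_t, P.f_t]; exact DFunLike.congr_fun h x.1)
  refine ⟨k, hil.trans hlk, hjl.trans hlk, AlgHom.ext_of_adjoin_eq_top hs fun x hx => ?_⟩
  have := hk ⟨x, hx⟩
  simpa only [P.t_t, AlgHom.comp_apply] using this

lemma hom_surjective {B : Type*} [CommRing B] [Algebra A B] [Algebra.FinitePresentation A B]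
    (g : B →ₐ[A] D) : ∃ i, ∃ h : B →ₐ[A] P.C i, (P.f i).comp h = g := by
  obtain ⟨n, p, hp, s, hs⟩ := (inferInstance : Algebra.FinitePresentation A B).out
  obtain ⟨i, c, hc⟩ := P.exists_lift_of_finite (fun x => g (p (MvPolynomial.X x)))
  have hq : (P.f i).comp (MvPolynomial.aeval c) = g.comp p :=
    MvPolynomial.algHom_ext fun x => by simp [hc]
  obtain ⟨j, hij, hj⟩ := P.exists_eq_of_finite (T := s) i
    (fun x => MvPolynomial.aeval c x.1) (fun _ => 0) (fun x => by
      have h1 : p x.1 = 0 := by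
        have : x.1 ∈ RingHom.ker p.toRingHom := hs ▸ Ideal.subset_span x.2
        exact this
      have := DFunLike.congr_fun hq x.1
      simp only [AlgHom.comp_apply, h1, map_zero] at this
      rw [this, map_zero])
  let q : MvPolynomial (Fin n) A →ₐ[A] P.C j := (P.t i j hij).comp (MvPolynomial.aeval c)
  have hker : RingHom.ker p ≤ RingHom.ker q := by
    change RingHom.ker p.toRingHom ≤ _
    rw [← hs, Ideal.span_le]
    intro x hx
    have := hj ⟨x, hx⟩
    rw [map_zero] at this
    exact this
  have hfq : (P.f j).comp q = g.comp p := by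
    rw [← hq, ← AlgHom.comp_assoc, P.f_comp]
  refine ⟨j, (Ideal.Quotient.liftₐ (RingHom.ker p) q hker).comp
    (Ideal.quotientKerAlgEquivOfSurjective hp).symm.toAlgHom, ?_⟩
  ext b
  obtain ⟨r, rfl⟩ := hp b
  have : (Ideal.quotientKerAlgEquivOfSurjective hp).symm (p r) =
      Ideal.Quotient.mk _ r := by
    rw [AlgEquiv.symm_apply_eq]; rfl
  change P.f j (Ideal.Quotient.liftₐ (RingHom.ker p) q hker
    ((Ideal.quotientKerAlgEquivOfSurjective hp).symm (p r))) = _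
  rw [this]
  exact DFunLike.congr_fun hfq r

/-- An algebra as the directed union of its finitely generated subalgebras. -/
def ofSubalgebras (A : Type u) [CommRing A] (B : Type u) [CommRing B] [Algebra A B] :
    FilteredAlgebraColimitPresentation A B where
  ι := {S : Subalgebra A B // S.FG}
  dir := ⟨fun S T => ⟨⟨S.1 ⊔ T.1, S.2.sup T.2⟩, (le_sup_left : S.1 ≤ S.1 ⊔ T.1),
    (le_sup_right : T.1 ≤ S.1 ⊔ T.1)⟩⟩
  nonempty := ⟨⟨⊥, Subalgebra.fg_bot⟩⟩
  C S := S.1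
  t S T h := Subalgebra.inclusion h
  t_id _ := rfl
  t_comp _ _ _ _ _ := rfl
  f S := S.1.val
  f_comp _ _ _ := rfl
  jointly_surjective d := ⟨⟨Algebra.adjoin A {d}, ⟨{d}, by simp⟩⟩,
    ⟨d, Algebra.self_mem_adjoin_singleton A d⟩, rfl⟩
  eventually_eq S x y h := ⟨S, le_rfl, by rw [Subtype.ext (h : x.1 = y.1)]⟩

/-- A quotient as the colimit of quotients by finitely generated subideals. -/
def ofQuotients {A : Type u} [CommRing A] {R B : Type u} [CommRing R] [Algebra A R]
    [CommRing B] [Algebra A B] (p : R →ₐ[A] B) (hp : Function.Surjective p) :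
    FilteredAlgebraColimitPresentation A B where
  ι := {J : Ideal R // J.FG ∧ J ≤ RingHom.ker p}
  dir := ⟨fun S T => ⟨⟨S.1 ⊔ T.1, Submodule.FG.sup S.2.1 T.2.1, sup_le S.2.2 T.2.2⟩,
    (le_sup_left : S.1 ≤ S.1 ⊔ T.1), (le_sup_right : T.1 ≤ S.1 ⊔ T.1)⟩⟩
  nonempty := ⟨⟨⊥, Submodule.fg_bot, bot_le⟩⟩
  C J := R ⧸ J.1
  t S T h := Ideal.Quotient.factorₐ A h
  t_id _ := by ext x; obtain ⟨x, rfl⟩ := Ideal.Quotient.mk_surjective x; rfl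
  t_comp _ _ _ _ _ := by ext x; obtain ⟨x, rfl⟩ := Ideal.Quotient.mk_surjective x; rfl
  f J := Ideal.Quotient.liftₐ J.1 p J.2.2
  f_comp _ _ _ := by ext x; obtain ⟨x, rfl⟩ := Ideal.Quotient.mk_surjective x; rfl
  jointly_surjective d := by
    obtain ⟨r, rfl⟩ := hp d
    exact ⟨⟨⊥, Submodule.fg_bot, bot_le⟩, Ideal.Quotient.mk _ r, rfl⟩
  eventually_eq S x y h := by
    obtain ⟨x, rfl⟩ := Ideal.Quotient.mk_surjective x
    obtain ⟨y, rfl⟩ := Ideal.Quotient.mk_surjective y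
    have h' : p x = p y := h
    have hxy : x - y ∈ RingHom.ker p := by
      rw [RingHom.mem_ker, map_sub, h', sub_self]
    refine ⟨⟨S.1 ⊔ Ideal.span {x - y}, Submodule.FG.sup S.2.1 ⟨{x - y}, by simp⟩,
      sup_le S.2.2 ((Ideal.span_singleton_le_iff_mem _).2 hxy)⟩,
      (le_sup_left : S.1 ≤ S.1 ⊔ _), ?_⟩
    refine Ideal.Quotient.eq.2 ?_
    exact Ideal.mem_sup_right (Ideal.mem_span_singleton_self _)

end FilteredAlgebraColimitPresentation

/-- An `A`-algebra `B` is of finite presentation if and only if for every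
filtered direct system `(C_λ)` of `A`-algebras with colimit `C`, the natural map
`colim_λ Hom_{A-alg}(B, C_λ) → Hom_{A-alg}(B, C)` is bijective (expressed by its
surjectivity and injectivity as a map from the filtered colimit of hom-sets). -/
theorem finitePresentation_iff_hom_colimit_bijective
    (A : Type u) [CommRing A] (B : Type u) [CommRing B] [Algebra A B] :
    Algebra.FinitePresentation A B ↔
      ∀ (D : Type u) [CommRing D] [Algebra A D]
        (P : FilteredAlgebraColimitPresentation A D),
        -- surjectivity: every map `B → C` factors through some stage
        (∀ g : B →ₐ[A] D, ∃ i, ∃ h : B →ₐ[A] P.C i, (P.f i).comp h = g) ∧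
        -- injectivity: two maps to stages agreeing in the colimit agree at some stage
        (∀ i j (g : B →ₐ[A] P.C i) (g' : B →ₐ[A] P.C j),
          (P.f i).comp g = (P.f j).comp g' →
          ∃ k, ∃ hik : i ≤ k, ∃ hjk : j ≤ k,
            (P.t i k hik).comp g = (P.t j k hjk).comp g') := by
  constructor
  · intro hB D _ _ P
    exact ⟨P.hom_surjective, P.hom_injective⟩
  · intro H
    have hft : Algebra.FiniteType A B := by
      obtain ⟨S, h, hS⟩ := (H B (FilteredAlgebraColimitPresentation.ofSubalgebras A B)).1 (AlgHom.id A B)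
      have : S.1 = ⊤ := by
        refine Algebra.eq_top_iff.2 fun b => ?_
        have hb : (h b).1 = b := DFunLike.congr_fun hS b
        exact hb ▸ (h b).2
      exact ⟨this ▸ S.2⟩
    obtain ⟨n, p, hp⟩ := Algebra.FiniteType.iff_quotient_mvPolynomial''.1 hft
    refine ⟨n, p, hp, ?_⟩
    obtain ⟨J, h, hJ⟩ := (H B (FilteredAlgebraColimitPresentation.ofQuotients p hp)).1 (AlgHom.id A B)
    obtain ⟨K, hJK, hJK', hK⟩ := (FilteredAlgebraColimitPresentation.ofQuotients p hp).hom_injective J J (h.comp p)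
      (Ideal.Quotient.mkₐ A J.1) (by
        rw [← AlgHom.comp_assoc, hJ]; rfl)
    have : RingHom.ker p = K.1 := by
      refine le_antisymm (fun x hx => ?_) K.2.2
      have hx' : p x = 0 := hx
      have h2 := DFunLike.congr_fun hK x
      simp only [AlgHom.comp_apply, hx', map_zero] at h2
      exact Ideal.Quotient.eq_zero_iff_mem.1 h2.symm
    change (RingHom.ker p).FG
    exact this ▸ K.2.1
end

section
/- Let A → B be a ring homomorphism that is finite, faithfully flat, and of finite presentation. Then for every A-module M, the evaluation map Hom_A(B, M) → M sending f to f(1) is surjective. -/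
/-- Let `A → B` be a ring homomorphism that is finite, faithfully flat and
of finite presentation.  Then for every `A`-module `M` the evaluation map
`Hom_A(B, M) → M`, `f ↦ f 1`, is surjective. -/
theorem evaluation_surjective_of_finite_faithfullyFlat_finitePresentation
    (A B : Type*) [CommRing A] [CommRing B] [Algebra A B]
    (hfin : Module.Finite A B) (hff : Module.FaithfullyFlat A B)
    (hfp : Algebra.FinitePresentation A B)
    (M : Type*) [AddCommGroup M] [Module A M] :
    Function.Surjective (fun f : B →ₗ[A] M => f 1) := by
  have hP : Module.FinitePresentation A B :=
    (Module.FinitePresentation.iff_finitePresentation_of_finite (R := A) (S := B)).2 hfp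
  have hproj : Module.Projective A B := Module.Flat.projective_of_finitePresentation
  obtain ⟨s, hs⟩ := hproj.out
  -- the ideal of values at `1` of linear functionals
  let I : Ideal A := LinearMap.range (LinearMap.applyₗ (R := A) (M₂ := A) (1 : B))
  have hI : I = ⊤ := by
    by_contra hne
    obtain ⟨m, hm, hle⟩ := Ideal.exists_le_maximal I hne
    refine Module.FaithfullyFlat.submodule_ne_top (M := B) hm ?_
    have h1 : (1 : B) ∈ m • (⊤ : Submodule A B) := by
      have h := hs 1
      rw [Finsupp.linearCombination_apply, Finsupp.sum] at h
      rw [← h]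
      refine Submodule.sum_mem _ fun b _ => ?_
      refine Submodule.smul_mem_smul (hle ?_) trivial
      exact ⟨(Finsupp.lapply b).comp s, rfl⟩
    rw [eq_top_iff]
    rintro b -
    have := Submodule.mem_map_of_mem (f := LinearMap.mulLeft A b) h1
    rw [Submodule.map_smul''] at this
    have h2 := Submodule.smul_mono (le_refl m) (le_top : Submodule.map (LinearMap.mulLeft A b) ⊤ ≤ ⊤) this
    simpa using h2
  obtain ⟨e, he⟩ : (1 : A) ∈ I := hI ▸ trivial
  intro x
  refine ⟨e.smulRight x, ?_⟩
  have he' : e 1 = 1 := he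
  simp [he']
end
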